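/- For the bRT shuffle with |A| = |B| = n and N = 2n, for every starting permutation x ∈ 𝔖_N and every integer t ≥ 0, d_TV(P^t(x, ·), U)² ≤ (1/4)·Σ_{λ ⊢ 2n, λ ≠ (2n)} Σ_{μ ⊢ n, ν ⊢ n} c^λ_{μ,ν}·f_λ·f_μ·f_ν·|Eig^λ_{μ,ν}|^{2t}. -/

import Mathlib

open scoped BigOperators

noncomputable section

namespace BRT

/-- The diagonal index `Diag(λ) = Σᵢ C(λᵢ,2) − Σᵢ C(λ*ᵢ,2)` of a Young diagram. -/
def diag (μ : YoungDiagram) : ℤ :=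
  (∑ᶠ i : ℕ, ((μ.rowLen i).choose 2 : ℤ)) - ∑ᶠ i : ℕ, ((μ.colLen i).choose 2 : ℤ)

/-- A semistandard tableau is standard if each value `k < |μ|` occurs in exactly one cell. -/
def IsStandard (μ : YoungDiagram) (T : SemistandardYoungTableau μ) : Prop :=
  ∀ k < μ.card, ∃! c : ℕ × ℕ, c ∈ μ.cells ∧ T c.1 c.2 = k

/-- `fSYT μ` is the number of standard Young tableaux of shape `μ`. -/
def fSYT (μ : YoungDiagram) : ℕ :=
  Nat.card {T : SemistandardYoungTableau μ // IsStandard μ T}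

/-- Number of entries equal to `k` in the prefix of the reverse reading word of the skew
filling `T` of shape `lam/mu` ending at position `(r, j)`: the prefix consists of the rows
`< r` entirely, together with the cells of row `r` of column index `≥ j` (rows are read
right-to-left, top to bottom). -/
def prefixCount (lam mu : YoungDiagram) (T : ℕ → ℕ → ℕ) (r j k : ℕ) : ℕ :=
  (lam.cells.filter fun c =>
    c ∉ mu.cells ∧ T c.1 c.2 = k ∧ (c.1 < r ∨ (c.1 = r ∧ j ≤ c.2))).card

/-- `T : ℕ → ℕ → ℕ` is a Littlewood–Richardson skew tableau of shape `lam/mu` and content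
`nu`: it vanishes outside the skew shape, is weakly increasing along rows and strictly
increasing along columns of the skew shape, has exactly `nu_k` entries equal to `k` for
every `k`, and every prefix of its reverse reading word contains at least as many entries
equal to `k` as entries equal to `k + 1`, for every `k` (lattice word condition). -/
def IsLR (lam mu nu : YoungDiagram) (T : ℕ → ℕ → ℕ) : Prop :=
  (∀ i j : ℕ, ¬((i, j) ∈ lam ∧ (i, j) ∉ mu) → T i j = 0) ∧
  (∀ i j1 j2 : ℕ, j1 < j2 → (i, j1) ∈ lam → (i, j1) ∉ mu → (i, j2) ∈ lam → (i, j2) ∉ mu →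
    T i j1 ≤ T i j2) ∧
  (∀ i1 i2 j : ℕ, i1 < i2 → (i1, j) ∈ lam → (i1, j) ∉ mu → (i2, j) ∈ lam → (i2, j) ∉ mu →
    T i1 j < T i2 j) ∧
  (∀ k, (lam.cells.filter fun c => c ∉ mu.cells ∧ T c.1 c.2 = k).card = nu.rowLen k) ∧
  (∀ r j k, prefixCount lam mu T r j (k + 1) ≤ prefixCount lam mu T r j k)

/-- The Littlewood–Richardson coefficient `c^λ_{μ,ν}`: the number of Littlewood–Richardson
skew tableaux of shape `λ/μ` and content `ν` (and `0` if `μ ⊄ λ`). -/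
def lrCoeff (lam mu nu : YoungDiagram) : ℕ :=
  @ite _ (mu ≤ lam) (Classical.dec _) (Nat.card {T : ℕ → ℕ → ℕ // IsLR lam mu nu T}) 0

/-- The transition matrix of the biased random transposition shuffle on `𝔖_N` determined
by the set `A ⊆ [N]` (with `B = Aᶜ`) and the bias parameters `a`, `b`:
`P(x,y) = 2a²/N²` if `y x⁻¹` is a transposition of two elements of `A`, `2b²/N²` if it is a
transposition of two elements of `B`, `2ab/N²` if it transposes an element of `A` with one
of `B`, `(a²|A| + b²|B|)/N²` if `y = x`, and `0` otherwise. -/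
def transMat (a b : ℝ) {N : ℕ} (A : Finset (Fin N)) :
    Matrix (Equiv.Perm (Fin N)) (Equiv.Perm (Fin N)) ℝ :=
  fun x y =>
    if y = x then (a ^ 2 * A.card + b ^ 2 * Aᶜ.card) / (N : ℝ) ^ 2
    else if ∃ i j : Fin N, i ≠ j ∧ i ∈ A ∧ j ∈ A ∧ y * x⁻¹ = Equiv.swap i j then
      2 * a ^ 2 / (N : ℝ) ^ 2
    else if ∃ i j : Fin N, i ≠ j ∧ i ∉ A ∧ j ∉ A ∧ y * x⁻¹ = Equiv.swap i j then
      2 * b ^ 2 / (N : ℝ) ^ 2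
    else if ∃ i j : Fin N, i ∈ A ∧ j ∉ A ∧ y * x⁻¹ = Equiv.swap i j then
      2 * a * b / (N : ℝ) ^ 2
    else 0

/-- Total variation distance between two probability mass functions on a finite type. -/
def dTV {α : Type*} [Fintype α] (p q : α → ℝ) : ℝ :=
  (∑ x, |p x - q x|) / 2

/-- The uniform distribution on permutations of `Fin N`. -/
def unif (N : ℕ) : Equiv.Perm (Fin N) → ℝ :=
  fun _ => ((N.factorial : ℝ))⁻¹

/-- The eigenvalue `Eig^λ_{μ,ν}` of the biased random transposition shuffle in the case
`|A| = |B| = n`, `N = 2n`. -/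
def eig (a b : ℝ) (n : ℕ) (lam mu nu : YoungDiagram) : ℝ :=
  (a ^ 2 + b ^ 2) / (4 * (n : ℝ)) + (a ^ 2 - a * b) / (2 * (n : ℝ) ^ 2) * (diag mu : ℝ)
    + (b ^ 2 - a * b) / (2 * (n : ℝ) ^ 2) * (diag nu : ℝ)
    + a * b / (2 * (n : ℝ) ^ 2) * (diag lam : ℝ)

/-!
The matrix `P` is symmetric and commutes with right translations, so Cauchy–Schwarz bounds the total
variation distance by the return probability: `4 d² ≤ N! · P^{2t}(1, 1) - 1`. The identity
`∑_λ f_λ χ^λ = N! · 1_{σ = 1}` then reduces everything to `(P^{2t} χ^λ)(1)`, where `λ = (N)`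
contributes the `1` that is subtracted.

On functions, `P` is a combination of the identity and the class sums of the transpositions of
`𝔖_N`, `𝔖_A` and `𝔖_B`. The first class sum is central, so `P^m χ^λ` stays in its eigenspace for
`2 Diag(λ)`. The other two act on the restriction to `𝔖_A × 𝔖_B`, where
`χ^λ = ∑_{μ, ν} c^λ_{μ,ν} χ^μ ⊗ χ^ν` and each term is an eigenfunction of both. Hence `P^m χ^λ`
restricts to `∑_{μ, ν} c^λ_{μ,ν} (Eig^λ_{μ,ν})^m χ^μ ⊗ χ^ν`, which is evaluated at `1`.

No representation theory enters: by Frobenius' formula `χ^λ(σ)` is the coefficient of `x^{λ + ρ}` in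
`a_ρ p_σ`, with `p_σ` the power sum attached to the cycles of `σ`. In these terms the eigenvalue
`2 Diag(λ)` comes from applying the Euler operators `x_k ∂/∂x_k` to `a_ρ p_σ`, the restriction
formula is the Littlewood–Richardson rule for `a_{μ+ρ} s_ν` (proved by a sign-reversing involution
on chains of horizontal strips), and the sum over `λ` is the expansion of `p_σ` in Schur
polynomials.
-/

section YoungDiagrams

open YoungDiagram

lemma ext_rowLen {Y Z : YoungDiagram} (h : ∀ i, Y.rowLen i = Z.rowLen i) : Y = Z := by
  ext ⟨i, j⟩
  rw [mem_cells, mem_cells, mem_iff_lt_rowLen, mem_iff_lt_rowLen, h]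

lemma antitone_rowLen (Y : YoungDiagram) : Antitone Y.rowLen := fun i j => Y.rowLen_anti i j

lemma exists_rowLen_eq {f : ℕ → ℕ} {M : ℕ} (hf : Antitone f) (hM : ∀ i, M ≤ i → f i = 0) :
    ∃ Y : YoungDiagram, Y.rowLen = f := by
  have hlt : ∀ {i j}, j < f i → i < M := fun {i j} h => by
    by_contra hi
    have := hM i (by omega)
    omega
  let Y : YoungDiagram :=
    { cells := (Finset.range M ×ˢ Finset.range (f 0)).filter fun c => c.2 < f c.1
      isLowerSet := by
        rintro ⟨i, j⟩ ⟨i', j'⟩ hle hc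
        simp only [Finset.coe_filter, Finset.mem_product, Finset.mem_range, Set.mem_ofPred_eq,
          Prod.mk_le_mk] at *
        have := hf hle.1
        omega }
  refine ⟨Y, funext fun i => eq_of_forall_lt_iff fun j => ?_⟩
  rw [← mem_iff_lt_rowLen, ← mem_cells]
  simp only [Y, Finset.mem_filter, Finset.mem_product, Finset.mem_range, and_iff_right_iff_imp]
  exact fun h => ⟨hlt h, h.trans_le (hf (Nat.zero_le i))⟩

lemma rowLen_bot (i : ℕ) : (⊥ : YoungDiagram).rowLen i = 0 :=
  Nat.eq_zero_of_not_pos fun h => notMem_bot _ (mem_iff_lt_rowLen.mpr h)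

lemma card_transpose (Y : YoungDiagram) : Y.transpose.card = Y.card := by
  simp [YoungDiagram.card, transpose]

lemma rowLen_le_card (Y : YoungDiagram) (i : ℕ) : Y.rowLen i ≤ Y.card :=
  Y.rowLen_eq_card.trans_le (Finset.card_le_card (Finset.filter_subset _ _))

lemma colLen_le_card (Y : YoungDiagram) (j : ℕ) : Y.colLen j ≤ Y.card :=
  Y.colLen_eq_card.trans_le (Finset.card_le_card (Finset.filter_subset _ _))

lemma rowLen_eq_zero {Y : YoungDiagram} {M i : ℕ} (hY : Y.card ≤ M) (hi : M ≤ i) :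
    Y.rowLen i = 0 := by
  by_contra h
  have hmem : (i, 0) ∈ Y := mem_iff_lt_rowLen.mpr (Nat.pos_of_ne_zero h)
  have := (mem_iff_lt_colLen.mp hmem).trans_le (colLen_le_card Y 0)
  omega

lemma colLen_eq_zero {Y : YoungDiagram} {M j : ℕ} (hY : Y.card ≤ M) (hj : M ≤ j) :
    Y.colLen j = 0 := by
  rw [← rowLen_transpose]
  exact rowLen_eq_zero ((card_transpose Y).trans_le hY) hj

lemma card_eq_sum_rowLen {Y : YoungDiagram} {M : ℕ} (h : ∀ i, M ≤ i → Y.rowLen i = 0) :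
    Y.card = ∑ i ∈ Finset.range M, Y.rowLen i := by
  have hmaps : ∀ c ∈ Y.cells, c.1 ∈ Finset.range M := fun c hc => by
    have := mem_iff_lt_rowLen.mp ((mem_cells c).mp hc)
    by_contra hlt
    have := h c.1 (by simpa using hlt)
    omega
  rw [YoungDiagram.card, Finset.card_eq_sum_card_fiberwise hmaps]
  exact Finset.sum_congr rfl fun i _ => Y.rowLen_eq_card.symm

lemma sum_rowLen {Y : YoungDiagram} {M : ℕ} (h : Y.card ≤ M) :
    ∑ i ∈ Finset.range M, Y.rowLen i = Y.card :=
  (card_eq_sum_rowLen fun _ => rowLen_eq_zero h).symm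

lemma finite_setOf_card_eq (N : ℕ) : {Y : YoungDiagram | Y.card = N}.Finite := by
  have hinj : Function.Injective YoungDiagram.cells := fun _ _ => YoungDiagram.ext
  refine ((Finset.range N ×ˢ Finset.range N).powerset.finite_toSet.preimage hinj.injOn).subset ?_
  rintro Y rfl
  simp only [Set.mem_preimage, Finset.mem_coe, Finset.mem_powerset]
  rintro ⟨i, j⟩ hc
  rw [mem_cells] at hc
  rw [Finset.mem_product, Finset.mem_range, Finset.mem_range]
  exact ⟨(mem_iff_lt_colLen.mp hc).trans_le (colLen_le_card Y j),
    (mem_iff_lt_rowLen.mp hc).trans_le (rowLen_le_card Y i)⟩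

/-- The finite set of partitions of `N`, as Young diagrams. -/
def partitions (N : ℕ) : Finset YoungDiagram := (finite_setOf_card_eq N).toFinset

@[simp] lemma mem_partitions {N : ℕ} {Y : YoungDiagram} : Y ∈ partitions N ↔ Y.card = N := by
  simp [partitions]

end YoungDiagrams

/-! ### Antisymmetric polynomials -/

section Coefficients

open MvPolynomial

variable {σ R : Type*} [Fintype σ] [CommRing R]

/-- The monomial `X^β`, for an exponent given as a plain function on the finite set of
variables. -/
def xPow (β : σ → ℕ) : MvPolynomial σ R :=
  monomial (Finsupp.equivFunOnFinite.symm β) 1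

/-- The linear functional `f ↦ [X^β] f`, for an exponent given as a plain function. -/
def coeffAt (β : σ → ℕ) : MvPolynomial σ R →ₗ[R] R :=
  lcoeff R (Finsupp.equivFunOnFinite.symm β)

lemma coeffAt_xPow (β γ : σ → ℕ) :
    coeffAt β (xPow γ : MvPolynomial σ R) = if γ = β then 1 else 0 := by
  classical
  simp [coeffAt, xPow, coeff_monomial]

lemma ext_coeffAt {f g : MvPolynomial σ R} (h : ∀ β, coeffAt β f = coeffAt β g) : f = g := by
  ext m
  simpa [coeffAt] using h m

lemma xPow_eq_prod (β : σ → ℕ) : (xPow β : MvPolynomial σ R) = ∏ k, X k ^ β k := by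
  rw [xPow, monomial_eq]
  simp [Finsupp.prod_fintype]

lemma isHomogeneous_xPow (β : σ → ℕ) :
    (xPow β : MvPolynomial σ R).IsHomogeneous (∑ k, β k) :=
  isHomogeneous_monomial _ (by simp [Finsupp.degree_eq_sum])

lemma sum_eq_of_coeffAt_ne_zero {f : MvPolynomial σ R} {d : ℕ} (hf : f.IsHomogeneous d)
    {β : σ → ℕ} (hβ : coeffAt β f ≠ 0) : ∑ k, β k = d := by
  by_contra h
  exact hβ (hf.coeff_eq_zero (by simpa [Finsupp.degree_eq_sum] using h))

lemma coeffAt_xPow_mul (β γ : σ → ℕ) (f : MvPolynomial σ R) [Decidable (γ ≤ β)] :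
    coeffAt β (xPow γ * f) = if γ ≤ β then coeffAt (β - γ) f else 0 := by
  have hsub : Finsupp.equivFunOnFinite.symm β - Finsupp.equivFunOnFinite.symm γ =
      Finsupp.equivFunOnFinite.symm (β - γ) := by
    ext
    rfl
  simp only [coeffAt, xPow, lcoeff_apply, coeff_monomial_mul', one_mul, hsub]
  exact if_congr Iff.rfl rfl rfl

lemma rename_xPow (π : Equiv.Perm σ) (β : σ → ℕ) :
    rename π (xPow β : MvPolynomial σ R) = xPow (β ∘ π.symm) := by
  simp only [xPow_eq_prod, map_prod, map_pow, rename_X]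
  exact Fintype.prod_equiv π _ _ fun k => by simp

lemma coeffAt_rename (π : Equiv.Perm σ) (β : σ → ℕ) (f : MvPolynomial σ R) :
    coeffAt β (rename π f) = coeffAt (β ∘ π) f := by
  have hβ : Finsupp.equivFunOnFinite.symm β =
      Finsupp.mapDomain π (Finsupp.equivFunOnFinite.symm (β ∘ π)) := by
    ext k
    simp [Finsupp.mapDomain_equiv_apply]
  rw [coeffAt, lcoeff_apply, hβ, coeff_rename_mapDomain _ π.injective]
  rfl

lemma prod_map_X_eq_xPow [DecidableEq σ] (s : Multiset σ) :
    (s.map X).prod = (xPow fun k => s.count k : MvPolynomial σ R) := by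
  rw [xPow_eq_prod, Finset.prod_multiset_map_count]
  refine Finset.prod_subset (Finset.subset_univ _) fun k _ hk => ?_
  rw [Multiset.count_eq_zero_of_notMem (mt Multiset.mem_toFinset.mpr hk), pow_zero]

lemma coeffAt_hsymm [DecidableEq σ] (r : ℕ) (β : σ → ℕ) :
    coeffAt β (hsymm σ R r) = if ∑ k, β k = r then 1 else 0 := by
  simp only [hsymm, prod_map_X_eq_xPow, map_sum, coeffAt_xPow]
  split_ifs with hβ
  · let s : Multiset σ := Finsupp.toMultiset (Finsupp.equivFunOnFinite.symm β)
    have hs : s.card = r := by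
      simp [s, Finsupp.card_toMultiset, Finsupp.sum_fintype, hβ]
    have hcount : (fun k => s.count k) = β := funext fun k => by
      simp [s, Finsupp.count_toMultiset]
    rw [Finset.sum_eq_single ⟨s, hs⟩ ?_ fun h => absurd (Finset.mem_univ _) h]
    · exact if_pos hcount
    · refine fun s' _ hne => if_neg fun h => hne (Subtype.ext (Multiset.ext.mpr fun k => ?_))
      exact congrFun (h.trans hcount.symm) k
  · refine Finset.sum_eq_zero fun s _ => if_neg fun h => hβ ?_
    rw [← h, Multiset.sum_count_eq_card fun _ _ => Finset.mem_univ _, s.2]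

lemma isHomogeneous_hsymm [DecidableEq σ] (r : ℕ) : (hsymm σ R r).IsHomogeneous r := by
  refine IsHomogeneous.sum _ _ _ fun s _ => ?_
  have hdeg := isHomogeneous_xPow (R := R) fun k => s.1.count k
  rwa [Multiset.sum_count_eq_card fun _ _ => Finset.mem_univ _, s.2, ← prod_map_X_eq_xPow] at hdeg

end Coefficients

section Alternants

open MvPolynomial

variable {σ R : Type*} [Fintype σ] [DecidableEq σ] [CommRing R]

variable (R) in
/-- The sign of a permutation as an element of the coefficient ring. -/
def signIn : Equiv.Perm σ →* R :=
  (Int.castRingHom R : ℤ →* R).comp ((Units.coeHom ℤ).comp Equiv.Perm.sign)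

lemma signIn_apply (π : Equiv.Perm σ) : signIn R π = ((Equiv.Perm.sign π : ℤ) : R) := rfl

lemma signIn_mul_self (π : Equiv.Perm σ) : signIn R π * signIn R π = 1 := by
  rcases Int.units_eq_one_or (Equiv.Perm.sign π) with h | h <;> simp [signIn_apply, h]

lemma signIn_inv (π : Equiv.Perm σ) : signIn R π⁻¹ = signIn R π := by
  simp [signIn_apply]

lemma signIn_swap {i j : σ} (h : i ≠ j) : signIn R (Equiv.swap i j) = -1 := by
  simp [signIn_apply, Equiv.Perm.sign_swap h]

/-- A polynomial is antisymmetric if permuting the variables multiplies it by the sign. -/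
def IsAntisymmetric (f : MvPolynomial σ R) : Prop :=
  ∀ π : Equiv.Perm σ, rename π f = signIn R π • f

/-- The alternant `a_α = ∑_π sign(π) X^{α ∘ π}`, i.e. the determinant `det (X_i ^ α_j)`. -/
def alternant (α : σ → ℕ) : MvPolynomial σ R :=
  ∑ π : Equiv.Perm σ, signIn R π • xPow (α ∘ π)

namespace IsAntisymmetric

variable {f g : MvPolynomial σ R}

lemma coeffAt_comp (hf : IsAntisymmetric f) (π : Equiv.Perm σ) (β : σ → ℕ) :
    coeffAt (β ∘ π) f = signIn R π * coeffAt β f := by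
  rw [← coeffAt_rename, hf, map_smul, smul_eq_mul]

lemma mul_isSymmetric (hf : IsAntisymmetric f) (hg : IsSymmetric g) :
    IsAntisymmetric (f * g) := fun π => by
  rw [map_mul, hf π, hg π, smul_mul_assoc]

lemma sum {κ : Type*} {s : Finset κ} {F : κ → MvPolynomial σ R}
    (h : ∀ i ∈ s, IsAntisymmetric (F i)) : IsAntisymmetric (∑ i ∈ s, F i) := fun π => by
  rw [map_sum, Finset.smul_sum]
  exact Finset.sum_congr rfl fun i hi => h i hi π

lemma smul (hf : IsAntisymmetric f) (c : R) : IsAntisymmetric (c • f) := fun π => by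
  rw [map_smul, hf π, smul_comm]

lemma coeffAt_eq_zero [NoZeroDivisors R] [CharZero R] (hf : IsAntisymmetric f) {β : σ → ℕ}
    (hβ : ¬ Function.Injective β) : coeffAt β f = 0 := by
  simp only [Function.Injective, not_forall] at hβ
  obtain ⟨i, j, hij, hne⟩ := hβ
  have hfix : β ∘ Equiv.swap i j = β := by
    rw [Equiv.comp_swap_eq_update, hij, Function.update_eq_self, ← hij, Function.update_eq_self]
  have := hf.coeffAt_comp (Equiv.swap i j) β
  rwa [hfix, signIn_swap hne, neg_one_mul, CharZero.eq_neg_self_iff] at this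

end IsAntisymmetric

lemma isAntisymmetric_alternant (α : σ → ℕ) :
    IsAntisymmetric (alternant α : MvPolynomial σ R) := fun π => by
  rw [alternant, map_sum, Finset.smul_sum]
  refine Fintype.sum_equiv (Equiv.mulRight π⁻¹) _ _ fun τ => ?_
  rw [map_smul, rename_xPow, smul_smul, Equiv.coe_mulRight, map_mul, signIn_inv,
    mul_comm (signIn R τ), ← mul_assoc, signIn_mul_self, one_mul]
  rfl

lemma isHomogeneous_alternant (α : σ → ℕ) :
    (alternant α : MvPolynomial σ R).IsHomogeneous (∑ k, α k) := by
  refine IsHomogeneous.sum _ _ _ fun π _ => ?_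
  rw [smul_eq_C_mul, ← Equiv.sum_comp π α]
  exact (isHomogeneous_xPow _).C_mul _

end Alternants

section StrictlyDecreasingExponents

open MvPolynomial

variable {M : ℕ} {R : Type*} [CommRing R]

lemma exists_strictAnti_comp_perm {β : Fin M → ℕ} (h : Function.Injective β) :
    ∃ π : Equiv.Perm (Fin M), StrictAnti (β ∘ π) := by
  have hsort : StrictMono (β ∘ Tuple.sort β) :=
    (Tuple.monotone_sort β).strictMono_of_injective (h.comp (Equiv.injective _))
  refine ⟨Tuple.sort β * Fin.revPerm, ?_⟩
  rw [Equiv.Perm.coe_mul, ← Function.comp_assoc]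
  exact hsort.comp_strictAnti Fin.rev_strictAnti

lemma eq_one_of_strictAnti_comp {α : Fin M → ℕ} (h : StrictAnti α) {π : Equiv.Perm (Fin M)}
    (hπ : StrictAnti (α ∘ π)) : π = 1 := by
  have hmono : StrictMono π := fun i j hij => h.lt_iff_gt.mp (hπ hij)
  have hid : (π : Fin M → Fin M) = id :=
    (hmono.range_inj strictMono_id).mp (by simp)
  exact Equiv.coe_fn_injective hid

lemma IsAntisymmetric.ext_strictAnti [NoZeroDivisors R] [CharZero R]
    {f g : MvPolynomial (Fin M) R} (hf : IsAntisymmetric f) (hg : IsAntisymmetric g)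
    (h : ∀ α : Fin M → ℕ, StrictAnti α → coeffAt α f = coeffAt α g) : f = g := by
  refine ext_coeffAt fun β => ?_
  by_cases hβ : Function.Injective β
  · obtain ⟨π, hπ⟩ := exists_strictAnti_comp_perm hβ
    have := congrArg (signIn R π * ·) (h _ hπ)
    simpa only [hf.coeffAt_comp, hg.coeffAt_comp, ← mul_assoc, signIn_mul_self, one_mul] using this
  · rw [hf.coeffAt_eq_zero hβ, hg.coeffAt_eq_zero hβ]

lemma coeffAt_alternant {α β : Fin M → ℕ} (hα : StrictAnti α) (hβ : StrictAnti β) :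
    coeffAt β (alternant α : MvPolynomial (Fin M) R) = if α = β then 1 else 0 := by
  rw [alternant, map_sum, Finset.sum_eq_single 1 ?_ (by simp)]
  · simp [coeffAt_xPow]
  · intro π _ hπ
    have : α ∘ π ≠ β := fun h => hπ (eq_one_of_strictAnti_comp hα (h ▸ hβ))
    rw [map_smul, coeffAt_xPow, if_neg this, smul_zero]

variable (M) in
/-- The exponent `ρ = (M - 1, …, 1, 0)` of the Vandermonde alternant. -/
def staircase : Fin M → ℕ := fun k => k.rev

variable (M) in
/-- The strictly decreasing exponent `λ + ρ` attached to a partition `λ`. -/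
def shifted (Y : YoungDiagram) : Fin M → ℕ := fun k => Y.rowLen k + staircase M k

lemma strictAnti_staircase : StrictAnti (staircase M) := fun _ _ h => Fin.rev_lt_rev.mpr h

lemma strictAnti_shifted (Y : YoungDiagram) : StrictAnti (shifted M Y) := fun _ _ h =>
  add_lt_add_of_le_of_lt (antitone_rowLen Y h.le) (strictAnti_staircase h)

lemma shifted_bot : shifted M ⊥ = staircase M := by
  funext k
  simp [shifted, rowLen_bot]

lemma sum_shifted {Y : YoungDiagram} (h : Y.card ≤ M) :
    ∑ k, shifted M Y k = Y.card + ∑ k, staircase M k := by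
  simp only [shifted, Finset.sum_add_distrib]
  rw [← sum_rowLen h, Finset.sum_range]

lemma shifted_inj {Y Z : YoungDiagram} (hY : Y.card ≤ M) (hZ : Z.card ≤ M) :
    shifted M Y = shifted M Z ↔ Y = Z := by
  refine ⟨fun h => ext_rowLen fun i => ?_, fun h => h ▸ rfl⟩
  by_cases hi : i < M
  · simpa [shifted] using congrFun h ⟨i, hi⟩
  · rw [rowLen_eq_zero hY (by omega), rowLen_eq_zero hZ (by omega)]

lemma exists_shifted_eq {α : Fin M → ℕ} (h : StrictAnti α) {N : ℕ}
    (hα : ∑ k, α k = N + ∑ k, staircase M k) :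
    ∃ Y : YoungDiagram, Y.card = N ∧ shifted M Y = α := by
  let f : ℕ → ℕ := fun i => if hi : i < M then α ⟨i, hi⟩ - staircase M ⟨i, hi⟩ else 0
  have hf_zero : ∀ i, M ≤ i → f i = 0 := fun i hi => dif_neg (by omega)
  have hf_anti : Antitone f := antitone_nat_of_succ_le fun i => by
    by_cases hi : i + 1 < M
    · have : α ⟨i + 1, hi⟩ < α ⟨i, by omega⟩ := h (Fin.mk_lt_mk.mpr i.lt_succ_self)
      simp only [f, hi, dif_pos, show i < M by omega, staircase, Fin.val_rev]
      omega
    · simp [f, hi]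
  obtain ⟨Y, hY⟩ := exists_rowLen_eq hf_anti hf_zero
  have hle : ∀ k, staircase M k ≤ α k := fun k => by
    have hmaps : Set.MapsTo α (Finset.Ioi k) (Finset.range (α k)) := fun l hl => by
      simpa using h (Finset.mem_Ioi.mp hl)
    have := Finset.card_le_card_of_injOn α hmaps h.injective.injOn
    rw [Fin.card_Ioi, Finset.card_range] at this
    simp only [staircase, Fin.val_rev]
    omega
  have hshift : shifted M Y = α := funext fun k => by
    have := hle k
    simp only [shifted, hY, f, k.isLt, dif_pos, Fin.eta]
    omega
  refine ⟨Y, ?_, hshift⟩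
  rw [← hshift] at hα
  simp only [shifted, Finset.sum_add_distrib] at hα
  rw [card_eq_sum_rowLen (by rwa [hY]), Finset.sum_range]
  omega

lemma coeffAt_shifted_alternant {Y Z : YoungDiagram} (hY : Y.card ≤ M) (hZ : Z.card ≤ M)
    [Decidable (Y = Z)] :
    coeffAt (shifted M Z) (alternant (shifted M Y) : MvPolynomial (Fin M) R) =
      if Y = Z then 1 else 0 := by
  rw [coeffAt_alternant (strictAnti_shifted Y) (strictAnti_shifted Z)]
  simp only [shifted_inj hY hZ]

lemma coeffAt_sum_smul_alternant {N : ℕ} (hN : N ≤ M) (c : YoungDiagram → R)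
    {Z : YoungDiagram} (hZ : Z.card = N) :
    coeffAt (shifted M Z) (∑ Y ∈ partitions N, c Y • alternant (shifted M Y)) = c Z := by
  classical
  rw [map_sum, Finset.sum_eq_single Z]
  · rw [map_smul, coeffAt_shifted_alternant (by omega) (by omega), if_pos rfl, smul_eq_mul, mul_one]
  · intro Y hY hne
    rw [mem_partitions] at hY
    rw [map_smul, coeffAt_shifted_alternant (by omega) (by omega), if_neg hne, smul_zero]
  · exact fun h => absurd (mem_partitions.mpr hZ) h

theorem IsAntisymmetric.eq_sum_alternant [NoZeroDivisors R] [CharZero R]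
    {f : MvPolynomial (Fin M) R} (hf : IsAntisymmetric f) {N : ℕ} (hN : N ≤ M)
    (hdeg : f.IsHomogeneous (N + ∑ k, staircase M k)) :
    f = ∑ Y ∈ partitions N, coeffAt (shifted M Y) f • alternant (shifted M Y) := by
  refine hf.ext_strictAnti (IsAntisymmetric.sum fun _ _ => (isAntisymmetric_alternant _).smul _)
    fun α hα => ?_
  by_cases hsum : ∑ k, α k = N + ∑ k, staircase M k
  · obtain ⟨Y, hY, rfl⟩ := exists_shifted_eq hα hsum
    rw [coeffAt_sum_smul_alternant hN (fun Y => coeffAt (shifted M Y) f) hY]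
  · have hzero : ∀ g : MvPolynomial (Fin M) R, g.IsHomogeneous (N + ∑ k, staircase M k) →
        coeffAt α g = 0 := fun g hg => not_imp_comm.mp (sum_eq_of_coeffAt_ne_zero hg) hsum
    rw [hzero f hdeg, hzero]
    refine IsHomogeneous.sum _ _ _ fun Y hY => ?_
    rw [mem_partitions] at hY
    rw [smul_eq_C_mul, ← hY, ← sum_shifted (by omega)]
    exact (isHomogeneous_alternant _).C_mul _

end StrictlyDecreasingExponents

section Pieri

open MvPolynomial

variable {M : ℕ} {R : Type*} [CommRing R]

/-- The `0/1` matrix of the relation `α i ≤ β k`. -/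
def thresholdMatrix (R : Type*) [CommRing R] (α β : Fin M → ℕ) : Matrix (Fin M) (Fin M) R :=
  Matrix.of fun i k => if α i ≤ β k then 1 else 0

lemma le_iff_le_of_det_thresholdMatrix_ne_zero {α β : Fin M → ℕ} (hα : Antitone α)
    (hβ : Antitone β) (hdet : (thresholdMatrix R α β).det ≠ 0) (i k : Fin M) :
    α i ≤ β k ↔ k ≤ i := by
  have hne : ∀ k, (Finset.univ.filter fun i => α i ≤ β k).Nonempty := fun k => by
    by_contra hempty
    rw [Finset.not_nonempty_iff_eq_empty, Finset.filter_eq_empty_iff] at hempty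
    exact hdet (Matrix.det_eq_zero_of_column_eq_zero k fun i => if_neg (hempty (Finset.mem_univ i)))
  let c : Fin M → Fin M := fun k => (Finset.univ.filter fun i => α i ≤ β k).min' (hne k)
  have hc : ∀ i k, α i ≤ β k ↔ c k ≤ i := fun i k =>
    ⟨fun h => Finset.min'_le _ _ (by simpa using h),
      fun h => (hα h).trans (Finset.mem_filter.mp (Finset.min'_mem _ (hne k))).2⟩
  have hmono : Monotone c := fun k l hkl =>
    (hc _ _).mp (((hc _ _).mpr le_rfl).trans (hβ hkl))
  have hinj : Function.Injective c := fun k l hkl => by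
    by_contra hne
    refine hdet (Matrix.det_zero_of_column_eq hne fun i => ?_)
    simp only [thresholdMatrix, Matrix.of_apply, hc, hkl]
  have hid : c = id := ((hmono.strictMono_of_injective hinj).range_inj strictMono_id).mp
    (by rw [(Finite.surjective_of_injective hinj).range_eq, Set.range_id])
  rw [hc, hid, id]

open Classical in
lemma det_thresholdMatrix {α β : Fin M → ℕ} (hα : Antitone α) (hβ : Antitone β) :
    (thresholdMatrix R α β).det = if ∀ i k, (α i ≤ β k ↔ k ≤ i) then 1 else 0 := by
  split_ifs with h
  · have hlower : (thresholdMatrix R α β).IsLowerTriangular := fun i k (hik : i < k) =>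
      if_neg ((h i k).not.mpr hik.not_ge)
    rw [Matrix.det_of_isLowerTriangular _ hlower]
    exact Finset.prod_eq_one fun i _ => if_pos ((h i i).mpr le_rfl)
  · by_contra hdet
    exact h (le_iff_le_of_det_thresholdMatrix_ne_zero hα hβ hdet)

lemma coeffAt_alternant_mul_hsymm {α β : Fin M → ℕ} {r : ℕ} (h : ∑ k, β k = ∑ k, α k + r) :
    coeffAt β (alternant α * hsymm (Fin M) R r) = (thresholdMatrix R α β).det := by
  classical
  rw [alternant, Finset.sum_mul, map_sum, Matrix.det_apply']
  refine Finset.sum_congr rfl fun π _ => ?_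
  rw [smul_mul_assoc, map_smul, smul_eq_mul, coeffAt_xPow_mul, signIn_apply]
  congr 1
  simp only [thresholdMatrix, Matrix.of_apply]
  split_ifs with hle
  · have hsum : ∑ k, (β - α ∘ π) k + ∑ k, α (π k) = ∑ k, β k := by
      rw [← Finset.sum_add_distrib]
      exact Finset.sum_congr rfl fun k _ => Nat.sub_add_cancel (hle k)
    rw [Equiv.sum_comp π α] at hsum
    rw [coeffAt_hsymm, if_pos (by omega)]
    exact (Finset.prod_eq_one fun k _ => if_pos (hle k)).symm
  · obtain ⟨k, hk⟩ := not_forall.mp hle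
    exact (Finset.prod_eq_zero (Finset.mem_univ k) (if_neg hk)).symm

/-- `q / p` is a horizontal strip, for partitions given by their row lengths:
`q₀ ≥ p₀ ≥ q₁ ≥ p₁ ≥ ⋯`. -/
def IsHorizontalStrip (p q : ℕ → ℕ) : Prop := (∀ i, p i ≤ q i) ∧ ∀ i, q (i + 1) ≤ p i

lemma isHorizontalStrip_iff_shifted {Y Z : YoungDiagram} (hY : Y.card ≤ M) (hZ : Z.card ≤ M) :
    IsHorizontalStrip Y.rowLen Z.rowLen ↔
      ∀ i k : Fin M, shifted M Y i ≤ shifted M Z k ↔ k ≤ i := by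
  constructor
  · rintro ⟨hle, hge⟩ i k
    refine ⟨fun h => ?_, fun hki => ?_⟩
    · by_contra! hik
      have hrow := (antitone_rowLen Z (Nat.succ_le_of_lt (Fin.lt_def.mp hik))).trans (hge i)
      exact h.not_gt (add_lt_add_of_le_of_lt hrow (strictAnti_staircase hik))
    · exact ((strictAnti_shifted Y).antitone hki).trans (Nat.add_le_add_right (hle k) _)
  · refine fun h => ⟨fun i => ?_, fun i => ?_⟩
    · by_cases hi : i < M
      · exact Nat.add_le_add_iff_right.mp ((h ⟨i, hi⟩ ⟨i, hi⟩).mpr le_rfl)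
      · rw [rowLen_eq_zero hY (by omega)]
        exact Nat.zero_le _
    · by_cases hi : i + 1 < M
      · have := mt (h ⟨i, by omega⟩ ⟨i + 1, hi⟩).mp (by simp)
        simp only [shifted, staircase, Fin.val_rev] at this
        omega
      · rw [rowLen_eq_zero hZ (by omega)]
        exact Nat.zero_le _

open Classical in
theorem alternant_mul_hsymm [NoZeroDivisors R] [CharZero R] {Y : YoungDiagram} {r : ℕ}
    (h : Y.card + r ≤ M) :
    alternant (shifted M Y) * hsymm (Fin M) R r =
      ∑ Z ∈ partitions (Y.card + r) with IsHorizontalStrip Y.rowLen Z.rowLen,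
        alternant (shifted M Z) := by
  have hdeg : (alternant (shifted M Y) * hsymm (Fin M) R r).IsHomogeneous
      (Y.card + r + ∑ k, staircase M k) := by
    rw [add_right_comm, ← sum_shifted (by omega)]
    exact (isHomogeneous_alternant _).mul (isHomogeneous_hsymm r)
  rw [((isAntisymmetric_alternant _).mul_isSymmetric (hsymm_isSymmetric _ _ r)).eq_sum_alternant
    h hdeg, Finset.sum_filter]
  refine Finset.sum_congr rfl fun Z hZ => ?_
  rw [mem_partitions] at hZ
  rw [coeffAt_alternant_mul_hsymm (by rw [sum_shifted (by omega), sum_shifted (by omega)]; omega),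
    det_thresholdMatrix (strictAnti_shifted Y).antitone (strictAnti_shifted Z).antitone,
    ite_smul, one_smul, zero_smul]
  simp only [isHorizontalStrip_iff_shifted (show Y.card ≤ M by omega) (show Z.card ≤ M by omega)]

end Pieri

/-! ### Chains of horizontal strips -/

section StripChains

open MvPolynomial

/-- The sum `f₀ + ⋯ + f_{r-1}`, i.e. the number of cells in the first `r` rows of a diagram with
row lengths `f`. -/
def partialSum (f : ℕ → ℕ) (r : ℕ) : ℕ := ∑ i ∈ Finset.range r, f i

@[simp] lemma partialSum_zero (f : ℕ → ℕ) : partialSum f 0 = 0 := rfl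

lemma partialSum_succ (f : ℕ → ℕ) (r : ℕ) : partialSum f (r + 1) = partialSum f r + f r :=
  Finset.sum_range_succ _ _

lemma partialSum_congr {f g : ℕ → ℕ} {r : ℕ} (h : ∀ i < r, f i = g i) :
    partialSum f r = partialSum g r :=
  Finset.sum_congr rfl fun i hi => h i (Finset.mem_range.mp hi)

lemma partialSum_mono {f g : ℕ → ℕ} (h : f ≤ g) (r : ℕ) : partialSum f r ≤ partialSum g r :=
  Finset.sum_le_sum fun i _ => h i

lemma partialSum_rowLen {Y : YoungDiagram} {M : ℕ} (h : Y.card ≤ M) :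
    partialSum Y.rowLen M = Y.card := sum_rowLen h

/-- The chains `p = C 0 ⊆ C 1 ⊆ ⋯ ⊆ C K = q` all of whose steps are horizontal strips. A chain is
encoded as a sequence of row-length functions that is constant from index `K` on. -/
def stripChains (K : ℕ) (p q : ℕ → ℕ) : Set (ℕ → ℕ → ℕ) :=
  {C | C 0 = p ∧ (∀ k, K ≤ k → C k = q) ∧ ∀ k < K, IsHorizontalStrip (C k) (C (k + 1))}

section

variable {K : ℕ} {p q : ℕ → ℕ} {C : ℕ → ℕ → ℕ}

lemma monotone_of_mem_stripChains (h : C ∈ stripChains K p q) : Monotone C := by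
  refine monotone_nat_of_le_succ fun k => ?_
  by_cases hk : k < K
  · exact (h.2.2 k hk).1
  · rw [h.2.1 k (by omega), h.2.1 (k + 1) (by omega)]

lemma le_of_mem_stripChains (h : C ∈ stripChains K p q) (k : ℕ) : C k ≤ q :=
  (monotone_of_mem_stripChains h (le_max_left k K)).trans_eq (h.2.1 _ (le_max_right k K))

lemma ge_of_mem_stripChains (h : C ∈ stripChains K p q) (k : ℕ) : p ≤ C k :=
  h.1.symm.trans_le (monotone_of_mem_stripChains h (Nat.zero_le k))

lemma antitone_of_mem_stripChains (hp : Antitone p) (h : C ∈ stripChains K p q) {k : ℕ}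
    (hk : k ≤ K) : Antitone (C k) := by
  rcases k with _ | k
  · rwa [h.1]
  · obtain ⟨hle, hge⟩ := h.2.2 k hk
    exact antitone_nat_of_succ_le fun i => (hge i).trans (hle i)

lemma eq_zero_of_mem_stripChains {M : ℕ} (hq : ∀ i, M ≤ i → q i = 0) (h : C ∈ stripChains K p q)
    (k : ℕ) {i : ℕ} (hi : M ≤ i) : C k i = 0 :=
  Nat.eq_zero_of_le_zero ((le_of_mem_stripChains h k i).trans_eq (hq i hi))

lemma finite_stripChains {M : ℕ} (hq : ∀ i, M ≤ i → q i = 0) : (stripChains K p q).Finite := by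
  let F : stripChains K p q → (Fin K → (i : Fin M) → Fin (q i + 1)) := fun C k i =>
    ⟨C.1 k i, Nat.lt_succ_of_le (le_of_mem_stripChains C.2 k i)⟩
  suffices hF : Function.Injective F from Set.finite_coe_iff.mp (Finite.of_injective F hF)
  refine fun ⟨C, hC⟩ ⟨C', hC'⟩ h => Subtype.ext (funext₂ fun k i => ?_)
  change C k i = C' k i
  by_cases hk : k < K
  · by_cases hi : i < M
    · exact congrArg Fin.val (congrFun (congrFun h ⟨k, hk⟩) ⟨i, hi⟩)
    · rw [eq_zero_of_mem_stripChains hq hC k (by omega),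
        eq_zero_of_mem_stripChains hq hC' k (by omega)]
  · rw [hC.2.1 k (by omega), hC'.2.1 k (by omega)]

lemma truncate_mem_stripChains (h : C ∈ stripChains (K + 1) p q) :
    (fun k => C (min k K)) ∈ stripChains K p (C K) := by
  refine ⟨by simp [h.1], fun k hk => by simp [hk], fun k hk => ?_⟩
  simp only [min_eq_left hk.le, min_eq_left (Nat.succ_le_of_lt hk)]
  exact h.2.2 k (by omega)

/-- The chain `C 0, …, C K, q`. -/
def extendChain (K : ℕ) (q : ℕ → ℕ) (C : ℕ → ℕ → ℕ) : ℕ → ℕ → ℕ :=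
  fun k => if k ≤ K then C k else q

lemma extendChain_of_le {k : ℕ} (h : k ≤ K) : extendChain K q C k = C k := if_pos h

lemma extendChain_of_lt {k : ℕ} (h : K < k) : extendChain K q C k = q := if_neg h.not_ge

lemma extendChain_mem_stripChains {w : ℕ → ℕ} (h : C ∈ stripChains K p w)
    (hw : IsHorizontalStrip w q) : extendChain K q C ∈ stripChains (K + 1) p q := by
  refine ⟨by rw [extendChain_of_le (Nat.zero_le K), h.1], fun k => extendChain_of_lt, ?_⟩
  intro k hk
  rcases (Nat.lt_succ_iff.mp hk).lt_or_eq with hlt | rfl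
  · rw [extendChain_of_le hlt.le, extendChain_of_le hlt]
    exact h.2.2 k hlt
  · rwa [extendChain_of_le le_rfl, extendChain_of_lt k.lt_succ_self, h.2.1 k le_rfl]

lemma extendChain_truncate (h : C ∈ stripChains (K + 1) p q) :
    extendChain K q (fun k => C (min k K)) = C := by
  funext k
  rcases le_or_gt k K with hk | hk
  · rw [extendChain_of_le hk, min_eq_left hk]
  · rw [extendChain_of_lt hk, h.2.1 k hk]

end

/-- The chains of horizontal strips from `p` to `q` whose `k`-th strip has `γ k` cells, where only
the first `M` rows are counted. -/
def contentChains (M K : ℕ) (p q γ : ℕ → ℕ) : Set (ℕ → ℕ → ℕ) :=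
  {C ∈ stripChains K p q | ∀ k < K, partialSum (C (k + 1)) M = partialSum (C k) M + γ k}

section

variable {M K : ℕ} {p q γ : ℕ → ℕ} {C : ℕ → ℕ → ℕ}

lemma partialSum_of_mem_contentChains (h : C ∈ contentChains M K p q γ) {k : ℕ} (hk : k ≤ K) :
    partialSum (C k) M = partialSum p M + ∑ j ∈ Finset.range k, γ j := by
  induction k with
  | zero => simp [h.1.1]
  | succ k ih => rw [h.2 k hk, ih (by omega), Finset.sum_range_succ, add_assoc]

lemma ncard_setOf_mem_contentChains_succ {w : ℕ → ℕ} (hw : IsHorizontalStrip w q)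
    (hsum : partialSum q M = partialSum w M + γ K) :
    {C ∈ contentChains M (K + 1) p q γ | C K = w}.ncard = (contentChains M K p w γ).ncard := by
  refine (Set.ncard_congr (fun C _ => extendChain K q C) ?_ ?_ ?_).symm
  · rintro C ⟨hC, hγ⟩
    refine ⟨⟨extendChain_mem_stripChains hC hw, fun k hk => ?_⟩,
      (extendChain_of_le le_rfl).trans (hC.2.1 K le_rfl)⟩
    rcases (Nat.lt_succ_iff.mp hk).lt_or_eq with hlt | rfl
    · rw [extendChain_of_le hlt.le, extendChain_of_le hlt]
      exact hγ k hlt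
    · rwa [extendChain_of_le le_rfl, extendChain_of_lt k.lt_succ_self, hC.2.1 k le_rfl]
  · rintro C C' ⟨hC, -⟩ ⟨hC', -⟩ h
    funext k
    rcases le_or_gt k K with hk | hk
    · simpa only [extendChain_of_le hk] using congrFun h k
    · rw [hC.2.1 k hk.le, hC'.2.1 k hk.le]
  · rintro C ⟨⟨hC, hγ⟩, rfl⟩
    refine ⟨_, ⟨truncate_mem_stripChains hC, fun k hk => ?_⟩, extendChain_truncate hC⟩
    simp only [min_eq_left hk.le, min_eq_left (Nat.succ_le_of_lt hk)]
    exact hγ k (by omega)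

open Classical in
lemma ncard_contentChains_succ {Y Z : YoungDiagram} {n : ℕ}
    (hn : n = Y.card + ∑ k ∈ Finset.range K, γ k) (hZ : Z.card = n + γ K) (hM : n + γ K ≤ M) :
    (contentChains M (K + 1) Y.rowLen Z.rowLen γ).ncard =
      ∑ W ∈ partitions n with IsHorizontalStrip W.rowLen Z.rowLen,
        (contentChains M K Y.rowLen W.rowLen γ).ncard := by
  have hZ0 : ∀ i, M ≤ i → Z.rowLen i = 0 := fun i => rowLen_eq_zero (by omega)
  have hfin : (contentChains M (K + 1) Y.rowLen Z.rowLen γ).Finite :=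
    (finite_stripChains hZ0).subset fun C hC => hC.1
  let I := (partitions n).filter fun W => IsHorizontalStrip W.rowLen Z.rowLen
  have hmaps : ∀ C ∈ hfin.toFinset, C K ∈ I.image YoungDiagram.rowLen := fun C hC => by
    rw [Set.Finite.mem_toFinset] at hC
    have hCK0 : ∀ i, M ≤ i → C K i = 0 := fun i => eq_zero_of_mem_stripChains hZ0 hC.1 K
    obtain ⟨W, hW⟩ := exists_rowLen_eq
      (antitone_of_mem_stripChains (antitone_rowLen Y) hC.1 K.le_succ) hCK0
    have hcard : W.card = n := by
      rw [card_eq_sum_rowLen (by rwa [hW]), hW, ← partialSum,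
        partialSum_of_mem_contentChains hC K.le_succ, partialSum_rowLen (by omega), hn]
    have hstrip : IsHorizontalStrip W.rowLen Z.rowLen := by
      rw [hW, ← hC.1.2.1 (K + 1) le_rfl]
      exact hC.1.2.2 K K.lt_succ_self
    exact Finset.mem_image.mpr
      ⟨W, Finset.mem_filter.mpr ⟨mem_partitions.mpr hcard, hstrip⟩, hW⟩
  rw [Set.ncard_eq_toFinset_card _ hfin, Finset.card_eq_sum_card_fiberwise hmaps,
    Finset.sum_image fun W _ W' _ h => ext_rowLen (congrFun h)]
  refine Finset.sum_congr rfl fun W hW => ?_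
  obtain ⟨hWn, hstrip⟩ := Finset.mem_filter.mp hW
  rw [mem_partitions] at hWn
  rw [← ncard_setOf_mem_contentChains_succ hstrip
    (by rw [partialSum_rowLen (by omega), partialSum_rowLen (by omega), hZ, hWn]),
    ← Set.ncard_coe_finset]
  congr 1
  ext C
  simp

lemma ncard_contentChains_zero {Y Z : YoungDiagram} [Decidable (Y = Z)] :
    (contentChains M 0 Y.rowLen Z.rowLen γ).ncard = if Y = Z then 1 else 0 := by
  split_ifs with h
  · subst h
    refine Set.ncard_eq_one.mpr ⟨fun _ => Y.rowLen, Set.eq_singleton_iff_unique_mem.mpr ⟨?_, ?_⟩⟩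
    · exact ⟨⟨rfl, fun _ _ => rfl, by simp⟩, by simp⟩
    · exact fun C hC => funext fun k => hC.1.2.1 k (Nat.zero_le k)
  · have hempty : contentChains M 0 Y.rowLen Z.rowLen γ = ∅ :=
      Set.eq_empty_of_forall_notMem fun C hC =>
        h (ext_rowLen (congrFun (hC.1.1.symm.trans (hC.1.2.1 0 le_rfl))))
    rw [hempty, Set.ncard_empty]

end

open Classical in
theorem alternant_mul_prod_hsymm {R : Type*} [CommRing R] [NoZeroDivisors R] [CharZero R]
    {M K : ℕ} {Y : YoungDiagram} {γ : ℕ → ℕ} (h : Y.card + ∑ k ∈ Finset.range K, γ k ≤ M) :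
    alternant (shifted M Y) * ∏ k ∈ Finset.range K, hsymm (Fin M) R (γ k) =
      ∑ Z ∈ partitions (Y.card + ∑ k ∈ Finset.range K, γ k),
        ((contentChains M K Y.rowLen Z.rowLen γ).ncard : R) • alternant (shifted M Z) := by
  induction K with
  | zero => simp [ncard_contentChains_zero, Finset.sum_ite_eq]
  | succ K ih =>
    rw [Finset.sum_range_succ, ← add_assoc] at h ⊢
    rw [Finset.prod_range_succ, ← mul_assoc, ih (by omega), Finset.sum_mul]
    set n := Y.card + ∑ k ∈ Finset.range K, γ k with hn
    have hstep : ∀ W ∈ partitions n,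
        (((contentChains M K Y.rowLen W.rowLen γ).ncard : R) • alternant (shifted M W)) *
            hsymm (Fin M) R (γ K) =
          ∑ Z ∈ partitions (n + γ K), if IsHorizontalStrip W.rowLen Z.rowLen then
            ((contentChains M K Y.rowLen W.rowLen γ).ncard : R) • alternant (shifted M Z)
          else 0 := fun W hW => by
      rw [mem_partitions] at hW
      rw [smul_mul_assoc, alternant_mul_hsymm (by omega), hW, Finset.smul_sum, Finset.sum_filter]
    rw [Finset.sum_congr rfl hstep, Finset.sum_comm]
    refine Finset.sum_congr rfl fun Z hZ => ?_
    rw [mem_partitions] at hZ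
    rw [ncard_contentChains_succ hn hZ h, ← Finset.sum_filter, ← Finset.sum_smul, Nat.cast_sum]

end StripChains

section Toggle

/-- The lattice word condition fails at row `r` for the consecutive strips `q / p` and `s / q`:
the strip `s / q` has more cells in rows `≤ r` than `q / p` has in rows `< r`. -/
def IsViolation (r : ℕ) (p q s : ℕ → ℕ) : Prop :=
  partialSum q r + partialSum q (r + 1) < partialSum p r + partialSum s (r + 1)

/-- `r` is the first row at which the lattice word condition fails. -/
def IsFirstViolation (r : ℕ) (p q s : ℕ → ℕ) : Prop :=
  IsViolation r p q s ∧ ∀ r' < r, ¬ IsViolation r' p q s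

/-- The sign-reversing move on the middle term of `p ⊆ q ⊆ s`: rows above `r` are kept, rows below
`r` are reflected in the interval allowed by the interlacing conditions (as in a Bender–Knuth
involution), and row `r` is reflected so that the violation at `r` persists. -/
def toggle (r : ℕ) (p q s : ℕ → ℕ) : ℕ → ℕ := fun i =>
  if i < r then q i
  else if i = r then
    max (p r) (s (r + 1)) + (partialSum p r + partialSum s (r + 1) - 2 * partialSum q r - 1) - q r
  else max (p i) (s (i + 1)) + min (s i) (p (i - 1)) - q i

variable {r i : ℕ} {p q s : ℕ → ℕ}

lemma toggle_of_lt (h : i < r) : toggle r p q s i = q i := if_pos h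

lemma toggle_self : toggle r p q s r =
    max (p r) (s (r + 1)) + (partialSum p r + partialSum s (r + 1) - 2 * partialSum q r - 1)
      - q r := by
  simp [toggle]

lemma toggle_of_gt (h : r < i) :
    toggle r p q s i = max (p i) (s (i + 1)) + min (s i) (p (i - 1)) - q i := by
  simp [toggle, h.not_gt, h.ne']

lemma partialSum_toggle {r' : ℕ} (h : r' ≤ r) :
    partialSum (toggle r p q s) r' = partialSum q r' :=
  partialSum_congr fun _ hi => toggle_of_lt (hi.trans_le h)

lemma IsFirstViolation.two_mul_partialSum_lt (h : IsFirstViolation r p q s) :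
    2 * partialSum q r + q r < partialSum p r + partialSum s (r + 1) := by
  have := h.1
  rw [IsViolation, partialSum_succ q] at this
  omega

lemma IsFirstViolation.partialSum_le (h : IsFirstViolation r p q s) (hpq : IsHorizontalStrip p q) :
    partialSum p r + partialSum s r ≤ 2 * partialSum q r := by
  rcases r with _ | r
  · simp
  · have hr := h.2 r r.lt_succ_self
    have := hpq.1 r
    rw [IsViolation, partialSum_succ q] at hr
    rw [partialSum_succ q, partialSum_succ p]
    omega

lemma IsFirstViolation.partialSum_succ_le (h : IsFirstViolation (r + 1) p q s)
    (hpq : IsHorizontalStrip p q) (hqs : IsHorizontalStrip q s) :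
    partialSum p (r + 1) + partialSum s (r + 1 + 1) ≤ 2 * partialSum q (r + 1) + p r := by
  have hr := h.2 r r.lt_succ_self
  have := hpq.1 r
  have := hqs.2 r
  rw [IsViolation, partialSum_succ q] at hr
  rw [partialSum_succ q, partialSum_succ p, partialSum_succ s (r + 1)]
  omega

lemma IsFirstViolation.pos (h : IsFirstViolation r p q s) (hpq : IsHorizontalStrip p q) :
    0 < s r := by
  have := h.two_mul_partialSum_lt
  have := h.partialSum_le hpq
  rw [partialSum_succ] at *
  omega

lemma max_le_of_isHorizontalStrip (hpq : IsHorizontalStrip p q) (hqs : IsHorizontalStrip q s)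
    (i : ℕ) : max (p i) (s (i + 1)) ≤ q i :=
  max_le (hpq.1 i) (hqs.2 i)

lemma le_min_of_isHorizontalStrip (hpq : IsHorizontalStrip p q) (hqs : IsHorizontalStrip q s)
    (hi : 0 < i) : q i ≤ min (s i) (p (i - 1)) := by
  refine le_min (hqs.1 i) ?_
  have := hpq.2 (i - 1)
  rwa [Nat.sub_add_cancel hi] at this

lemma max_le_toggle (hpq : IsHorizontalStrip p q) (hqs : IsHorizontalStrip q s)
    (h : IsFirstViolation r p q s) (i : ℕ) : max (p i) (s (i + 1)) ≤ toggle r p q s i := by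
  have hmax := max_le_of_isHorizontalStrip hpq hqs i
  rcases lt_trichotomy i r with hi | rfl | hi
  · rwa [toggle_of_lt hi]
  · have := h.two_mul_partialSum_lt
    rw [toggle_self]
    omega
  · have := le_min_of_isHorizontalStrip hpq hqs (Nat.zero_lt_of_lt hi)
    rw [toggle_of_gt hi]
    omega

lemma toggle_le (hpq : IsHorizontalStrip p q) (hqs : IsHorizontalStrip q s)
    (h : IsFirstViolation r p q s) (i : ℕ) : toggle r p q s i ≤ s i := by
  have hmax := max_le_of_isHorizontalStrip hpq hqs i
  rcases lt_trichotomy i r with hi | rfl | hi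
  · rw [toggle_of_lt hi]
    exact hqs.1 i
  · have := h.partialSum_le hpq
    rw [toggle_self, partialSum_succ s]
    omega
  · rw [toggle_of_gt hi]
    omega

lemma toggle_succ_le (hpq : IsHorizontalStrip p q) (hqs : IsHorizontalStrip q s)
    (h : IsFirstViolation r p q s) (i : ℕ) : toggle r p q s (i + 1) ≤ p i := by
  have hmax := max_le_of_isHorizontalStrip hpq hqs (i + 1)
  rcases lt_trichotomy (i + 1) r with hi | rfl | hi
  · rw [toggle_of_lt hi]
    exact hpq.2 i
  · have := h.partialSum_succ_le hpq hqs
    rw [toggle_self]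
    omega
  · rw [toggle_of_gt hi, Nat.add_sub_cancel]
    omega

lemma isHorizontalStrip_toggle_right (hpq : IsHorizontalStrip p q) (hqs : IsHorizontalStrip q s)
    (h : IsFirstViolation r p q s) : IsHorizontalStrip p (toggle r p q s) :=
  ⟨fun i => (le_max_left _ _).trans (max_le_toggle hpq hqs h i), toggle_succ_le hpq hqs h⟩

lemma isHorizontalStrip_toggle_left (hpq : IsHorizontalStrip p q) (hqs : IsHorizontalStrip q s)
    (h : IsFirstViolation r p q s) : IsHorizontalStrip (toggle r p q s) s :=
  ⟨toggle_le hpq hqs h, fun i => (le_max_right _ _).trans (max_le_toggle hpq hqs h i)⟩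

lemma isViolation_toggle (hpq : IsHorizontalStrip p q) (hqs : IsHorizontalStrip q s)
    (h : IsFirstViolation r p q s) : IsViolation r p (toggle r p q s) s := by
  have := max_le_of_isHorizontalStrip hpq hqs r
  have := h.two_mul_partialSum_lt
  rw [IsViolation, partialSum_succ (toggle r p q s), partialSum_toggle le_rfl, toggle_self]
  omega

lemma toggle_toggle (hpq : IsHorizontalStrip p q) (hqs : IsHorizontalStrip q s)
    (h : IsFirstViolation r p q s) : toggle r p (toggle r p q s) s = q := by
  funext i
  have := max_le_of_isHorizontalStrip hpq hqs i
  rcases lt_trichotomy i r with hi | rfl | hi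
  · rw [toggle_of_lt hi, toggle_of_lt hi]
  · have := h.two_mul_partialSum_lt
    rw [toggle_self, partialSum_toggle le_rfl, toggle_self]
    omega
  · have := le_min_of_isHorizontalStrip hpq hqs (Nat.zero_lt_of_lt hi)
    rw [toggle_of_gt hi, toggle_of_gt hi]
    omega

lemma partialSum_add_partialSum_toggle (hpq : IsHorizontalStrip p q) (hqs : IsHorizontalStrip q s)
    (h : IsFirstViolation r p q s) {m : ℕ} (hm : r ≤ m) :
    partialSum q (m + 1) + partialSum (toggle r p q s) (m + 1) + 1 =
      partialSum p m + partialSum s (m + 1) + max (p m) (s (m + 1)) := by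
  induction m, hm using Nat.le_induction with
  | base =>
    have := max_le_of_isHorizontalStrip hpq hqs r
    have := h.two_mul_partialSum_lt
    rw [partialSum_succ q, partialSum_succ (toggle r p q s), partialSum_toggle le_rfl, toggle_self]
    omega
  | succ m hm ih =>
    have := max_le_of_isHorizontalStrip hpq hqs (m + 1)
    have := le_min_of_isHorizontalStrip hpq hqs (show 0 < m + 1 by omega)
    rw [partialSum_succ q, partialSum_succ (toggle r p q s), toggle_of_gt (show r < m + 1 by omega),
      partialSum_succ s (m + 1), partialSum_succ p m]
    rw [Nat.add_sub_cancel] at this ⊢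
    omega

lemma partialSum_add_partialSum_toggle_of_eq_zero (hpq : IsHorizontalStrip p q)
    (hqs : IsHorizontalStrip q s) (h : IsFirstViolation r p q s) {M : ℕ}
    (hs : ∀ i, M ≤ i → s i = 0) :
    partialSum q M + partialSum (toggle r p q s) M + 1 = partialSum p M + partialSum s M := by
  have hr : r < M := by
    by_contra! hle
    exact (h.pos hpq).ne' (hs r hle)
  obtain ⟨m, rfl⟩ : ∃ m, M = m + 1 := ⟨M - 1, by omega⟩
  rw [partialSum_add_partialSum_toggle hpq hqs h (Nat.lt_succ_iff.mp hr), partialSum_succ p,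
    hs (m + 1) le_rfl, Nat.max_zero]
  omega

end Toggle

section SignReversingInvolution

/-- The first `M` steps of the chain `C` never violate the lattice word condition. -/
def IsLattice (M : ℕ) (C : ℕ → ℕ → ℕ) : Prop :=
  ∀ k r, k + 1 < M → ¬ IsViolation r (C k) (C (k + 1)) (C (k + 2))

/-- The content of the chain `C`, shifted by the staircase, is `α`. -/
def HasShiftedContent {M : ℕ} (α : Fin M → ℕ) (C : ℕ → ℕ → ℕ) : Prop :=
  ∀ k : Fin M, partialSum (C (k + 1)) M + staircase M k = partialSum (C k) M + α k

/-- `r` is the first row in which `C` violates the lattice word condition, and `k` is the last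
step of `C` doing so in that row. -/
def IsPivot (M : ℕ) (C : ℕ → ℕ → ℕ) (r k : ℕ) : Prop :=
  (k + 1 < M ∧ IsViolation r (C k) (C (k + 1)) (C (k + 2))) ∧
    (∀ r' < r, ∀ k', k' + 1 < M → ¬ IsViolation r' (C k') (C (k' + 1)) (C (k' + 2))) ∧
    ∀ k', k < k' → k' + 1 < M → ¬ IsViolation r (C k') (C (k' + 1)) (C (k' + 2))

/-- The chain `C` with its term `C (k + 1)` toggled at row `r`. -/
def toggleAt (r k : ℕ) (C : ℕ → ℕ → ℕ) : ℕ → ℕ → ℕ :=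
  Function.update C (k + 1) (toggle r (C k) (C (k + 1)) (C (k + 2)))

open Classical in
/-- The involution toggling a chain at its pivot, if it has one. -/
def pivotToggle (M : ℕ) (C : ℕ → ℕ → ℕ) : ℕ → ℕ → ℕ :=
  if h : ∃ x : ℕ × ℕ, IsPivot M C x.1 x.2 then toggleAt h.choose.1 h.choose.2 C else C

variable {M r k : ℕ} {p q : ℕ → ℕ} {C : ℕ → ℕ → ℕ}

lemma exists_isPivot (h : ¬ IsLattice M C) : ∃ r k, IsPivot M C r k := by
  classical
  simp only [IsLattice, not_forall, not_not] at h
  obtain ⟨k₀, r₀, hk₀, hv₀⟩ := h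
  have hex : ∃ r k, k + 1 < M ∧ IsViolation r (C k) (C (k + 1)) (C (k + 2)) :=
    ⟨r₀, k₀, hk₀, hv₀⟩
  let P : ℕ → Prop := fun k =>
    k + 1 < M ∧ IsViolation (Nat.find hex) (C k) (C (k + 1)) (C (k + 2))
  obtain ⟨k₁, hk₁⟩ := Nat.find_spec hex
  refine ⟨Nat.find hex, Nat.findGreatest P M,
    Nat.findGreatest_spec (P := P) (by omega : k₁ ≤ M) hk₁, ?_, ?_⟩
  · exact fun r' hr' k' hk' hv => Nat.find_min hex hr' ⟨k', hk', hv⟩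
  · exact fun k' hlt hk' hv => Nat.findGreatest_is_greatest hlt (by omega) ⟨hk', hv⟩

namespace IsPivot

lemma not_isLattice (h : IsPivot M C r k) : ¬ IsLattice M C := fun hC => hC k r h.1.1 h.1.2

lemma isFirstViolation (h : IsPivot M C r k) : IsFirstViolation r (C k) (C (k + 1)) (C (k + 2)) :=
  ⟨h.1.2, fun r' hr' => h.2.1 r' hr' k h.1.1⟩

lemma unique {r' k' : ℕ} (h : IsPivot M C r k) (h' : IsPivot M C r' k') : r = r' ∧ k = k' := by
  obtain rfl : r = r' := le_antisymm
    (not_lt.mp fun hlt => h.2.1 r' hlt k' h'.1.1 h'.1.2)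
    (not_lt.mp fun hlt => h'.2.1 r hlt k h.1.1 h.1.2)
  exact ⟨rfl, le_antisymm (not_lt.mp fun hlt => h'.2.2 k hlt h.1.1 h.1.2)
    (not_lt.mp fun hlt => h.2.2 k' hlt h'.1.1 h'.1.2)⟩

lemma pivotToggle_eq (h : IsPivot M C r k) : pivotToggle M C = toggleAt r k C := by
  have hex : ∃ x : ℕ × ℕ, IsPivot M C x.1 x.2 := ⟨(r, k), h⟩
  obtain ⟨hr, hk⟩ := h.unique hex.choose_spec
  rw [pivotToggle, dif_pos hex, ← hr, ← hk]

end IsPivot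

lemma toggleAt_self : toggleAt r k C (k + 1) = toggle r (C k) (C (k + 1)) (C (k + 2)) :=
  Function.update_self ..

lemma toggleAt_of_ne {l : ℕ} (h : l ≠ k + 1) : toggleAt r k C l = C l :=
  Function.update_of_ne h ..

lemma partialSum_toggleAt {l r' : ℕ} (h : r' ≤ r) :
    partialSum (toggleAt r k C l) r' = partialSum (C l) r' := by
  by_cases hl : l = k + 1
  · rw [hl, toggleAt_self, partialSum_toggle h]
  · rw [toggleAt_of_ne hl]

lemma toggleAt_mem_stripChains (hC : C ∈ stripChains M p q) (h : IsPivot M C r k) :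
    toggleAt r k C ∈ stripChains M p q := by
  have hk := h.1.1
  have hpq := hC.2.2 k (by omega)
  have hqs := hC.2.2 (k + 1) hk
  refine ⟨(toggleAt_of_ne (by omega)).trans hC.1,
    fun l hl => (toggleAt_of_ne (by omega)).trans (hC.2.1 l hl), fun l hl => ?_⟩
  rcases eq_or_ne l k with rfl | hlk
  · rw [toggleAt_of_ne (by omega), toggleAt_self]
    exact isHorizontalStrip_toggle_right hpq hqs h.isFirstViolation
  · rcases eq_or_ne l (k + 1) with rfl | hlk'
    · rw [toggleAt_of_ne (show k + 1 + 1 ≠ k + 1 by omega), toggleAt_self]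
      exact isHorizontalStrip_toggle_left hpq hqs h.isFirstViolation
    · rw [toggleAt_of_ne hlk', toggleAt_of_ne (by omega)]
      exact hC.2.2 l hl

lemma isPivot_toggleAt (hC : C ∈ stripChains M p q) (h : IsPivot M C r k) :
    IsPivot M (toggleAt r k C) r k := by
  have hk := h.1.1
  refine ⟨⟨hk, ?_⟩, fun r' hr' k' hk' => ?_, fun k' hlt hk' => ?_⟩
  · rw [toggleAt_of_ne (show k ≠ k + 1 by omega), toggleAt_self,
      toggleAt_of_ne (show k + 2 ≠ k + 1 by omega)]
    exact isViolation_toggle (hC.2.2 k (by omega)) (hC.2.2 (k + 1) hk) h.isFirstViolation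
  · have := h.2.1 r' hr' k' hk'
    rw [IsViolation] at this ⊢
    rwa [partialSum_toggleAt (by omega), partialSum_toggleAt (by omega),
      partialSum_toggleAt (by omega), partialSum_toggleAt (by omega)]
  · have := h.2.2 k' hlt hk'
    rw [IsViolation] at this ⊢
    rwa [partialSum_toggleAt (l := k') le_rfl, toggleAt_of_ne (show k' + 1 ≠ k + 1 by omega),
      toggleAt_of_ne (show k' + 2 ≠ k + 1 by omega)]

lemma toggleAt_toggleAt (hC : C ∈ stripChains M p q) (h : IsPivot M C r k) :
    toggleAt r k (toggleAt r k C) = C := by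
  have hk := h.1.1
  funext l
  rcases eq_or_ne l (k + 1) with rfl | hl
  · rw [toggleAt_self, toggleAt_self, toggleAt_of_ne (show k ≠ k + 1 by omega),
      toggleAt_of_ne (show k + 2 ≠ k + 1 by omega),
      toggle_toggle (hC.2.2 k (by omega)) (hC.2.2 (k + 1) hk) h.isFirstViolation]
  · rw [toggleAt_of_ne hl, toggleAt_of_ne hl]

lemma hasShiftedContent_toggleAt (hq : ∀ i, M ≤ i → q i = 0) (hC : C ∈ stripChains M p q)
    (h : IsPivot M C r k) {α : Fin M → ℕ} (hα : HasShiftedContent α C) :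
    HasShiftedContent (α ∘ Equiv.swap ⟨k, k.lt_succ_self.trans h.1.1⟩ ⟨k + 1, h.1.1⟩)
      (toggleAt r k C) := by
  have hk := h.1.1
  have hqs : IsHorizontalStrip (C (k + 1)) (C (k + 2)) := hC.2.2 (k + 1) hk
  have hsum := partialSum_add_partialSum_toggle_of_eq_zero (hC.2.2 k (by omega)) hqs
    h.isFirstViolation fun _ => eq_zero_of_mem_stripChains hq hC (k + 2)
  have hα₀ := hα ⟨k, by omega⟩
  have hα₁ := hα ⟨k + 1, hk⟩
  simp only [staircase, Fin.val_rev, add_assoc, one_add_one_eq_two] at hα₀ hα₁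
  rintro ⟨l, hl⟩
  simp only [Function.comp_apply, staircase, Fin.val_rev]
  rcases eq_or_ne l k with rfl | hlk
  · rw [Equiv.swap_apply_left, toggleAt_self, toggleAt_of_ne (by omega)]
    omega
  rcases eq_or_ne l (k + 1) with rfl | hlk'
  · rw [Equiv.swap_apply_right, toggleAt_self, toggleAt_of_ne (by omega)]
    simp only [add_assoc, one_add_one_eq_two]
    omega
  · rw [Equiv.swap_apply_of_ne_of_ne (by simpa using hlk) (by simpa using hlk'),
      toggleAt_of_ne hlk', toggleAt_of_ne (by omega)]
    exact hα ⟨l, hl⟩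

lemma IsLattice.strictAnti (hq : ∀ i, M ≤ i → q i = 0) (hC : C ∈ stripChains M p q)
    (h : IsLattice M C) {α : Fin M → ℕ} (hα : HasShiftedContent α C) : StrictAnti α := by
  rcases M with _ | m
  · exact fun i => i.elim0
  refine Fin.strictAnti_iff_succ_lt.mpr fun i => ?_
  have hα₀ := hα i.castSucc
  have hα₁ := hα i.succ
  have hlast : ∀ k, C k (m + 1) = 0 := fun k => eq_zero_of_mem_stripChains hq hC k le_rfl
  have hi := h i (m + 1) (by omega)
  rw [IsViolation, partialSum_succ _ (m + 1), partialSum_succ _ (m + 1), hlast, hlast] at hi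
  simp only [staircase, Fin.val_rev, Fin.val_castSucc, Fin.val_succ, add_assoc,
    one_add_one_eq_two] at hα₀ hα₁
  omega

section SignedCount

variable {R : Type*} [CommRing R] {α : Fin M → ℕ}

open Classical in
lemma sum_signIn_hasShiftedContent_of_isLattice (hq : ∀ i, M ≤ i → q i = 0)
    (hC : C ∈ stripChains M p q) (h : IsLattice M C) (hα : StrictAnti α) :
    (∑ π : Equiv.Perm (Fin M), if HasShiftedContent (α ∘ π) C then signIn R π else 0) =
      if HasShiftedContent α C then 1 else 0 := by
  rw [Finset.sum_eq_single 1 ?_ (by simp)]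
  · simp
  · exact fun π _ hπ => if_neg fun hc =>
      hπ (eq_one_of_strictAnti_comp hα (h.strictAnti hq hC hc))

open Classical in
lemma sum_signIn_hasShiftedContent_toggleAt (hq : ∀ i, M ≤ i → q i = 0)
    (hC : C ∈ stripChains M p q) (h : IsPivot M C r k) :
    (∑ π : Equiv.Perm (Fin M),
        if HasShiftedContent (α ∘ π) (toggleAt r k C) then signIn R π else 0) =
      -∑ π : Equiv.Perm (Fin M), if HasShiftedContent (α ∘ π) C then signIn R π else 0 := by
  have hk := h.1.1
  set τ : Equiv.Perm (Fin M) := Equiv.swap ⟨k, by omega⟩ ⟨k + 1, hk⟩ with hτ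
  have hiff : ∀ π : Equiv.Perm (Fin M),
      HasShiftedContent (α ∘ ⇑(π * τ)) (toggleAt r k C) ↔ HasShiftedContent (α ∘ π) C := fun π => by
    refine ⟨fun hc => ?_, fun hc => hasShiftedContent_toggleAt hq hC h hc⟩
    have := hasShiftedContent_toggleAt hq (toggleAt_mem_stripChains hC h)
      (isPivot_toggleAt hC h) hc
    rwa [toggleAt_toggleAt hC h, Function.comp_assoc, ← Equiv.Perm.coe_mul, ← hτ, mul_assoc,
      Equiv.swap_mul_self, mul_one] at this
  rw [← Equiv.sum_comp (Equiv.mulRight τ), ← Finset.sum_neg_distrib]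
  refine Finset.sum_congr rfl fun π _ => ?_
  have hsign : signIn R τ = -1 := signIn_swap (by simp)
  simp only [Equiv.coe_mulRight, hiff, map_mul, hsign]
  split_ifs <;> simp

open Classical in
/-- The chains with a lattice violation cancel in pairs under `pivotToggle`. -/
lemma sum_signIn_hasShiftedContent_not_isLattice [NoZeroDivisors R] [CharZero R]
    (hq : ∀ i, M ≤ i → q i = 0) :
    ∑ C ∈ (finite_stripChains (p := p) (K := M) hq).toFinset with ¬ IsLattice M C,
      ∑ π : Equiv.Perm (Fin M), (if HasShiftedContent (α ∘ π) C then signIn R π else 0) = 0 := by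
  let f : (ℕ → ℕ → ℕ) → R := fun C =>
    ∑ π : Equiv.Perm (Fin M), if HasShiftedContent (α ∘ π) C then signIn R π else 0
  have hpivot : ∀ C ∈ (finite_stripChains (p := p) (K := M) hq).toFinset.filter (¬ IsLattice M ·),
      C ∈ stripChains M p q ∧ ∃ r k, IsPivot M C r k := fun C hC =>
    ⟨by simpa using (Finset.mem_filter.mp hC).1, exists_isPivot (Finset.mem_filter.mp hC).2⟩
  have hneg : ∀ C ∈ (finite_stripChains (p := p) (K := M) hq).toFinset.filter (¬ IsLattice M ·),
      f (pivotToggle M C) = -f C := fun C hC => by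
    obtain ⟨hCmem, r, k, h⟩ := hpivot C hC
    rw [h.pivotToggle_eq]
    exact sum_signIn_hasShiftedContent_toggleAt hq hCmem h
  refine Finset.sum_involution (fun C _ => pivotToggle M C) ?_ ?_ ?_ ?_
  · exact fun C hC => (congrArg (f C + ·) (hneg C hC)).trans (add_neg_cancel _)
  · intro C hC hne heq
    have := hneg C hC
    rw [heq, CharZero.eq_neg_self_iff] at this
    exact hne this
  · intro C hC
    obtain ⟨hCmem, r, k, h⟩ := hpivot C hC
    rw [h.pivotToggle_eq, Finset.mem_filter, Set.Finite.mem_toFinset]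
    exact ⟨toggleAt_mem_stripChains hCmem h, (isPivot_toggleAt hCmem h).not_isLattice⟩
  · intro C hC
    obtain ⟨hCmem, r, k, h⟩ := hpivot C hC
    rw [h.pivotToggle_eq, (isPivot_toggleAt hCmem h).pivotToggle_eq, toggleAt_toggleAt hCmem h]

theorem sum_signIn_mul_ncard_hasShiftedContent [NoZeroDivisors R] [CharZero R]
    (hq : ∀ i, M ≤ i → q i = 0) (hα : StrictAnti α) :
    ∑ π : Equiv.Perm (Fin M),
        signIn R π * ({C ∈ stripChains M p q | HasShiftedContent (α ∘ π) C}.ncard : R) =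
      ({C ∈ stripChains M p q | IsLattice M C ∧ HasShiftedContent α C}.ncard : R) := by
  classical
  set F : Finset (ℕ → ℕ → ℕ) := (finite_stripChains (p := p) (K := M) hq).toFinset with hFdef
  have hF : ∀ {C}, C ∈ F ↔ C ∈ stripChains M p q := by simp [F]
  have hcard : ∀ Q : (ℕ → ℕ → ℕ) → Prop,
      ({C ∈ stripChains M p q | Q C}.ncard : R) = ∑ C ∈ F, if Q C then 1 else 0 := fun Q => by
    rw [Finset.sum_boole, ← Set.ncard_coe_finset]
    congr 3
    ext C
    simp [hF]
  calc ∑ π : Equiv.Perm (Fin M),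
        signIn R π * ({C ∈ stripChains M p q | HasShiftedContent (α ∘ π) C}.ncard : R)
      = ∑ C ∈ F, ∑ π : Equiv.Perm (Fin M),
          if HasShiftedContent (α ∘ π) C then signIn R π else 0 := by
        simp only [hcard, Finset.mul_sum, mul_ite, mul_one, mul_zero]
        exact Finset.sum_comm
    _ = ∑ C ∈ F with IsLattice M C, ∑ π : Equiv.Perm (Fin M),
          if HasShiftedContent (α ∘ π) C then signIn R π else 0 := by
        rw [← Finset.sum_filter_add_sum_filter_not F (IsLattice M), hFdef,
          sum_signIn_hasShiftedContent_not_isLattice hq, add_zero]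
    _ = ∑ C ∈ F, if IsLattice M C ∧ HasShiftedContent α C then 1 else 0 := by
        simp only [Finset.sum_filter, ite_and]
        refine Finset.sum_congr rfl fun C hC => if_ctx_congr Iff.rfl (fun h => ?_) fun _ => rfl
        exact sum_signIn_hasShiftedContent_of_isLattice hq (hF.mp hC) h hα
    _ = _ := by
        rw [hcard]
        congr!

end SignedCount

end SignReversingInvolution

/-! ### Littlewood–Richardson tableaux as lattice chains -/

section Fillings

/-- The filling `T` of the skew shape `q / p` (with row lengths `q` and `p`) corresponds to the
family of shapes `C`: the cells with entry `< k` together with `p` form the shape `C k`. Outside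
of `q / p` the filling is `0`. -/
def Encodes (p q : ℕ → ℕ) (T C : ℕ → ℕ → ℕ) : Prop :=
  (∀ i j, ¬(p i ≤ j ∧ j < q i) → T i j = 0) ∧ (∀ k, p ≤ C k ∧ C k ≤ q) ∧
    ∀ i j k, p i ≤ j → j < q i → (T i j < k ↔ j < C k i)

/-- The semistandard fillings with entries `< K` of the skew shape with row lengths `q / p`,
extended by `0` outside of the shape. -/
def IsFilling (K : ℕ) (p q : ℕ → ℕ) (T : ℕ → ℕ → ℕ) : Prop :=
  (∀ i j, ¬(p i ≤ j ∧ j < q i) → T i j = 0) ∧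
  (∀ i j₁ j₂, j₁ < j₂ → p i ≤ j₁ → j₂ < q i → T i j₁ ≤ T i j₂) ∧
  (∀ i₁ i₂ j, i₁ < i₂ → p i₁ ≤ j → j < q i₂ → T i₁ j < T i₂ j) ∧
  ∀ i j, p i ≤ j → j < q i → T i j < K

variable {M K : ℕ} {p q : ℕ → ℕ} {T C : ℕ → ℕ → ℕ}

lemma iff_lt_add_card_filter_Ico {a b j : ℕ} {P : ℕ → Prop} [DecidablePred P]
    (hP : AntitoneOn P (Set.Ico a b)) (hj : j ∈ Set.Ico a b) :
    P j ↔ j < a + (Finset.filter P (Finset.Ico a b)).card := by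
  obtain ⟨ha, hb⟩ := hj
  constructor <;> intro h
  · have hsub : Finset.Ico a (j + 1) ⊆ Finset.filter P (Finset.Ico a b) := fun l hl => by
      rw [Finset.mem_Ico] at hl
      rw [Finset.mem_filter, Finset.mem_Ico]
      exact ⟨⟨hl.1, by omega⟩, hP ⟨hl.1, by omega⟩ ⟨ha, hb⟩ (by omega : l ≤ j) h⟩
    have := Finset.card_le_card hsub
    rw [Nat.card_Ico] at this
    omega
  · by_contra hn
    have hsub : Finset.filter P (Finset.Ico a b) ⊆ Finset.Ico a j := fun l hl => by
      rw [Finset.mem_filter, Finset.mem_Ico] at hl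
      rw [Finset.mem_Ico]
      exact ⟨hl.1.1, not_le.mp fun hjl => hn (hP ⟨ha, hb⟩ ⟨hl.1.1, hl.1.2⟩ hjl hl.2)⟩
    have := Finset.card_le_card hsub
    rw [Nat.card_Ico] at this
    omega

namespace Encodes

lemma filling_unique {T' : ℕ → ℕ → ℕ} (h : Encodes p q T C) (h' : Encodes p q T' C) : T = T' := by
  funext i j
  by_cases hj : p i ≤ j ∧ j < q i
  · refine eq_of_forall_gt_iff fun k => ?_
    rw [h.2.2 i j k hj.1 hj.2, h'.2.2 i j k hj.1 hj.2]
  · rw [h.1 i j hj, h'.1 i j hj]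

lemma le_chain {C' : ℕ → ℕ → ℕ} (h : Encodes p q T C) (h' : Encodes p q T C') (k i : ℕ) :
    C k i ≤ C' k i := by
  by_contra! hlt
  have hp := (h'.2.1 k).1 i
  have hq := hlt.trans_le ((h.2.1 k).2 i)
  exact lt_irrefl _ ((h'.2.2 i _ k hp hq).mp ((h.2.2 i _ k hp hq).mpr hlt))

lemma chain_unique {C' : ℕ → ℕ → ℕ} (h : Encodes p q T C) (h' : Encodes p q T C') : C = C' :=
  funext₂ fun k i => (h.le_chain h' k i).antisymm (h'.le_chain h k i)

lemma eq_iff (h : Encodes p q T C) {i j k : ℕ} (hp : p i ≤ j) (hq : j < q i) :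
    T i j = k ↔ C k i ≤ j ∧ j < C (k + 1) i := by
  have h₀ := h.2.2 i j k hp hq
  have h₁ := h.2.2 i j (k + 1) hp hq
  omega

end Encodes

lemma ncard_eq_ncard_of_encodes {𝒯 𝒞 : Set (ℕ → ℕ → ℕ)} (hT : ∀ T ∈ 𝒯, ∃ C, Encodes p q T C)
    (hC : ∀ C ∈ 𝒞, ∃ T, Encodes p q T C) (h : ∀ {T C}, Encodes p q T C → (T ∈ 𝒯 ↔ C ∈ 𝒞)) :
    𝒯.ncard = 𝒞.ncard := by
  choose f hf using hT
  refine Set.ncard_congr f (fun T hT => (h (hf T hT)).mp hT) (fun T T' hT hT' heq => ?_)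
    fun C hC' => ?_
  · exact (hf T hT).filling_unique (heq ▸ hf T' hT')
  · obtain ⟨T, hTC⟩ := hC C hC'
    have hT := (h hTC).mpr hC'
    exact ⟨T, hT, (hf T hT).chain_unique hTC⟩

lemma IsFilling.exists_encodes (hpq : p ≤ q) (h : IsFilling K p q T) : ∃ C, Encodes p q T C := by
  refine ⟨fun k i => p i + ((Finset.Ico (p i) (q i)).filter fun j => T i j < k).card, h.1,
    fun k => ⟨fun i => Nat.le_add_right _ _, fun i => ?_⟩, fun i j k hp hq => ?_⟩
  · have hcard := Finset.card_filter_le (Finset.Ico (p i) (q i)) (T i · < k)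
    rw [Nat.card_Ico] at hcard
    have : p i ≤ q i := hpq i
    simp only
    omega
  · refine iff_lt_add_card_filter_Ico (P := fun j => T i j < k)
      (fun j₁ h₁ j₂ h₂ hle hlt => ?_) ⟨hp, hq⟩
    rcases hle.eq_or_lt with rfl | hlt'
    · exact hlt
    · exact (h.2.1 i j₁ j₂ hlt' h₁.1 h₂.2).trans_lt hlt

lemma exists_encodes_of_mem_stripChains (h : C ∈ stripChains K p q) : ∃ T, Encodes p q T C := by
  have hmono := monotone_of_mem_stripChains h
  classical
  refine ⟨fun i j => if p i ≤ j ∧ j < q i then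
    ((Finset.Ico 0 K).filter fun k => C (k + 1) i ≤ j).card else 0, fun i j hj => if_neg hj,
    fun k => ⟨ge_of_mem_stripChains h k, le_of_mem_stripChains h k⟩, fun i j k hp hq => ?_⟩
  simp only [if_pos (And.intro hp hq)]
  rcases k with _ | k
  · rw [h.1]
    omega
  · by_cases hk : k < K
    · have := iff_lt_add_card_filter_Ico (P := fun k => C (k + 1) i ≤ j)
        (fun k₁ _ k₂ _ hle => (hmono (Nat.succ_le_succ hle) i).trans) ⟨k.zero_le, hk⟩
      omega
    · have := Finset.card_filter_le (Finset.Ico 0 K) fun k => C (k + 1) i ≤ j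
      rw [Nat.card_Ico] at this
      rw [h.2.1 (k + 1) (by omega)]
      omega

namespace Encodes

lemma mem_stripChains (h : Encodes p q T C) (hp : Antitone p) (hq : Antitone q)
    (hT : IsFilling K p q T) : C ∈ stripChains K p q := by
  obtain ⟨-, hb, hr⟩ := h
  obtain ⟨-, -, hcol, hlt⟩ := hT
  refine ⟨funext fun i => ((hb 0).1 i).antisymm' (not_lt.mp fun hi => ?_),
    fun k hk => funext fun i => ((hb k).2 i).antisymm (not_lt.mp fun hi => ?_),
    fun k _ => ⟨fun i => not_lt.mp fun hi => ?_, fun i => not_lt.mp fun hi => ?_⟩⟩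
  · exact absurd ((hr i (p i) 0 le_rfl (hi.trans_le ((hb 0).2 i))).mpr hi) (Nat.not_lt_zero _)
  · exact lt_irrefl _ ((hr i _ k ((hb k).1 i) hi).mp ((hlt i _ ((hb k).1 i) hi).trans_le hk))
  · have hi' := hi.trans_le ((hb k).2 i)
    have := (hr i _ k ((hb (k + 1)).1 i) hi').mpr hi
    exact lt_irrefl _ ((hr i _ (k + 1) ((hb (k + 1)).1 i) hi').mp (this.trans k.lt_succ_self))
  · have hpi := (hb k).1 i
    have hqi := hi.trans_le ((hb (k + 1)).2 (i + 1))
    have hpi' := (hp i.le_succ).trans hpi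
    have hqi' := hqi.trans_le (hq i.le_succ)
    have hlow := (hr (i + 1) (C k i) (k + 1) hpi' hqi).mpr hi
    have hhigh := (hr i (C k i) k hpi hqi').not.mpr (lt_irrefl _)
    have := hcol i (i + 1) (C k i) i.lt_succ_self hpi hqi
    omega

lemma isFilling (h : Encodes p q T C) (hp : Antitone p) (hq : Antitone q)
    (hC : C ∈ stripChains K p q) : IsFilling K p q T := by
  obtain ⟨h0, -, hr⟩ := h
  have hlt : ∀ i j, p i ≤ j → j < q i → T i j < K := fun i j h₁ h₂ => by
    rwa [hr i j K h₁ h₂, hC.2.1 K le_rfl]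
  refine ⟨h0, fun i j₁ j₂ hj h₁ h₂ => ?_, fun i₁ i₂ j hi h₁ h₂ => ?_, hlt⟩
  · have := (hr i j₂ (T i j₂ + 1) (by omega) h₂).mp (Nat.lt_succ_self _)
    exact Nat.lt_succ_iff.mp ((hr i j₁ (T i j₂ + 1) h₁ (by omega)).mpr (by omega))
  · have h₁' := (hp hi.le).trans h₁
    have hK := hlt i₂ j h₁' h₂
    have hj := (hr i₂ j (T i₂ j + 1) h₁' h₂).mp (Nat.lt_succ_self _)
    have hstrip := (hC.2.2 (T i₂ j) hK).2 (i₂ - 1)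
    rw [Nat.sub_add_cancel (by omega)] at hstrip
    have hanti := antitone_of_mem_stripChains hp hC hK.le (show i₁ ≤ i₂ - 1 by omega)
    exact (hr i₁ j (T i₂ j) h₁ (h₂.trans_le (hq hi.le))).mpr (by omega)

end Encodes

end Fillings

section TableauCounts

variable {M K : ℕ} {lam mu nu : YoungDiagram} {T C : ℕ → ℕ → ℕ}

lemma le_iff_rowLen_le : mu ≤ lam ↔ mu.rowLen ≤ lam.rowLen := by
  refine ⟨fun h i => not_lt.mp fun hi => ?_, fun h ⟨i, j⟩ hmem => ?_⟩
  · have := h (show (i, lam.rowLen i) ∈ mu from YoungDiagram.mem_iff_lt_rowLen.mpr hi)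
    exact lt_irrefl _ (YoungDiagram.mem_iff_lt_rowLen.mp this)
  · rw [YoungDiagram.mem_iff_lt_rowLen] at hmem ⊢
    exact hmem.trans_le (h i)

lemma partialSum_add_sum_tsub {f g : ℕ → ℕ} (h : f ≤ g) (r : ℕ) :
    partialSum f r + ∑ i ∈ Finset.range r, (g i - f i) = partialSum g r := by
  rw [partialSum, partialSum, ← Finset.sum_add_distrib]
  exact Finset.sum_congr rfl fun i _ => Nat.add_sub_cancel' (h i)

namespace Encodes

lemma card_filter_row (h : Encodes mu.rowLen lam.rowLen T C) (Q : ℕ × ℕ → Prop) [DecidablePred Q]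
    (i k : ℕ) :
    ((lam.cells.filter fun c => c ∉ mu.cells ∧ T c.1 c.2 = k ∧ Q c).filter (·.1 = i)).card =
      ((Finset.Ico (C k i) (C (k + 1) i)).filter fun j => Q (i, j)).card := by
  have hinj : Function.Injective (Prod.mk i : ℕ → ℕ × ℕ) := Prod.mk_right_injective i
  rw [← Finset.card_image_of_injective _ hinj]
  congr 1
  ext ⟨i', j⟩
  simp only [Finset.mem_filter, Finset.mem_image, Finset.mem_Ico, Prod.mk.injEq,
    YoungDiagram.mem_cells, YoungDiagram.mem_iff_lt_rowLen, not_lt]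
  constructor
  · rintro ⟨⟨hlam, hmu, hk, hQ⟩, rfl⟩
    exact ⟨j, ⟨(h.eq_iff hmu hlam).mp hk, hQ⟩, rfl, rfl⟩
  · rintro ⟨j', ⟨hj, hQ⟩, rfl, rfl⟩
    have hmu := ((h.2.1 k).1 i).trans hj.1
    have hlam := hj.2.trans_le ((h.2.1 (k + 1)).2 i)
    exact ⟨⟨hlam, hmu, (h.eq_iff hmu hlam).mpr hj, hQ⟩, rfl⟩

lemma card_filter_eq_sum (h : Encodes mu.rowLen lam.rowLen T C) {Q : ℕ × ℕ → Prop}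
    [DecidablePred Q] {r : ℕ} (k : ℕ) (hr : ∀ c ∈ lam, Q c → c.1 < r) :
    (lam.cells.filter fun c => c ∉ mu.cells ∧ T c.1 c.2 = k ∧ Q c).card =
      ∑ i ∈ Finset.range r,
        ((Finset.Ico (C k i) (C (k + 1) i)).filter fun j => Q (i, j)).card := by
  rw [Finset.card_eq_sum_card_fiberwise (f := Prod.fst) (t := Finset.range r) fun c hc => ?_]
  · exact Finset.sum_congr rfl fun i _ => h.card_filter_row Q i k
  · have hc := Finset.mem_filter.mp hc
    exact Finset.mem_coe.mpr (Finset.mem_range.mpr (hr c hc.1 hc.2.2.2))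

lemma partialSum_add_card_filter (h : Encodes mu.rowLen lam.rowLen T C) (hC : Monotone C)
    (hM : lam.card ≤ M) (k : ℕ) :
    partialSum (C k) M + (lam.cells.filter fun c => c ∉ mu.cells ∧ T c.1 c.2 = k).card =
      partialSum (C (k + 1)) M := by
  have hr : ∀ c ∈ lam, True → c.1 < M := fun c hc _ => by
    by_contra! hle
    have := YoungDiagram.mem_iff_lt_rowLen.mp hc
    rw [rowLen_eq_zero hM hle] at this
    exact Nat.not_lt_zero _ this
  have hcard := h.card_filter_eq_sum k hr
  simp only [and_true, Finset.filter_true, Nat.card_Ico] at hcard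
  rw [hcard, partialSum_add_sum_tsub (hC k.le_succ)]

lemma partialSum_add_prefixCount (h : Encodes mu.rowLen lam.rowLen T C) (hC : Monotone C)
    (r j k : ℕ) :
    partialSum (C k) r + prefixCount lam mu T r j k =
      partialSum (C (k + 1)) r + (C (k + 1) r - max j (C k r)) := by
  have habove : ∀ i ∈ Finset.range r, ((Finset.Ico (C k i) (C (k + 1) i)).filter
      fun j' => i < r ∨ i = r ∧ j ≤ j').card = C (k + 1) i - C k i := fun i hi => by
    rw [Finset.filter_true_of_mem fun _ _ => Or.inl (Finset.mem_range.mp hi), Nat.card_Ico]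
  have hrow : ((Finset.Ico (C k r) (C (k + 1) r)).filter fun j' => r < r ∨ r = r ∧ j ≤ j') =
      Finset.Ico (max j (C k r)) (C (k + 1) r) := by
    ext l
    simp only [Finset.mem_filter, Finset.mem_Ico, lt_irrefl, false_or, true_and, max_le_iff]
    tauto
  rw [prefixCount, h.card_filter_eq_sum (r := r + 1) k fun c _ hc => by omega,
    Finset.sum_range_succ, Finset.sum_congr rfl habove, hrow, Nat.card_Ico, ← add_assoc,
    partialSum_add_sum_tsub (hC k.le_succ)]

lemma card_filter_eq_rowLen_iff (h : Encodes mu.rowLen lam.rowLen T C)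
    (hC : C ∈ stripChains M mu.rowLen lam.rowLen) (hlam : lam.card ≤ M) (hnu : nu.card ≤ M) :
    (∀ k, (lam.cells.filter fun c => c ∉ mu.cells ∧ T c.1 c.2 = k).card = nu.rowLen k) ↔
      HasShiftedContent (shifted M nu) C := by
  have hsum := h.partialSum_add_card_filter (monotone_of_mem_stripChains hC) hlam
  refine ⟨fun hT k => ?_, fun hc k => ?_⟩
  · have := hsum k
    rw [hT] at this
    simp only [shifted]
    omega
  · have := hsum k
    by_cases hk : k < M
    · have hck := hc ⟨k, hk⟩
      simp only [shifted] at hck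
      omega
    · rw [hC.2.1 k (by omega), hC.2.1 (k + 1) (by omega)] at this
      rw [rowLen_eq_zero hnu (by omega)]
      omega

lemma prefixCount_le_iff (h : Encodes mu.rowLen lam.rowLen T C)
    (hC : C ∈ stripChains M mu.rowLen lam.rowLen) :
    (∀ r j k, prefixCount lam mu T r j (k + 1) ≤ prefixCount lam mu T r j k) ↔
      IsLattice M C := by
  have hmono := monotone_of_mem_stripChains hC
  have hcount := h.partialSum_add_prefixCount hmono
  refine ⟨fun hT k r _ hv => ?_, fun hL r j k => ?_⟩
  · have h₀ := hcount r (C (k + 1) r) k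
    have h₁ : partialSum (C (k + 1)) r + _ = partialSum (C (k + 2)) r + _ :=
      hcount r (C (k + 1) r) (k + 1)
    have hle := hT r (C (k + 1) r) k
    have hstep : C (k + 1) r ≤ C (k + 2) r := hmono (k + 1).le_succ r
    rw [IsViolation, partialSum_succ, partialSum_succ] at hv
    simp only [add_assoc, one_add_one_eq_two] at h₁
    omega
  · have h₀ := hcount r j k
    have h₁ : partialSum (C (k + 1)) r + _ = partialSum (C (k + 2)) r + _ := hcount r j (k + 1)
    have hstep₀ := partialSum_mono (hmono k.le_succ) r
    have hstep₁ : C (k + 1) r ≤ C (k + 2) r := hmono (k + 1).le_succ r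
    simp only [add_assoc, one_add_one_eq_two, Nat.succ_eq_add_one] at h₁ hstep₀
    by_cases hk : k + 1 < M
    · have hv := hL k r hk
      rw [IsViolation, partialSum_succ, partialSum_succ] at hv
      omega
    · rw [hC.2.1 (k + 1) (by omega), hC.2.1 (k + 2) (by omega)] at h₁
      omega

end Encodes

lemma IsLR.isFilling (hnu : nu.card ≤ M) (h : IsLR lam mu nu T) :
    IsFilling M mu.rowLen lam.rowLen T := by
  obtain ⟨hsupp, hrow, hcol, hcontent, -⟩ := h
  simp only [YoungDiagram.mem_iff_lt_rowLen, not_lt] at hsupp hrow hcol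
  refine ⟨fun i j hij => hsupp i j fun hc => hij hc.symm, fun i j₁ j₂ hj h₁ h₂ => ?_,
    fun i₁ i₂ j hi h₁ h₂ => ?_, fun i j hp hq => ?_⟩
  · exact hrow i j₁ j₂ hj (hj.trans h₂) h₁ h₂ (h₁.trans hj.le)
  · exact hcol i₁ i₂ j hi (h₂.trans_le (antitone_rowLen lam hi.le)) h₁ h₂
      ((antitone_rowLen mu hi.le).trans h₁)
  · by_contra! hle
    have hempty := hcontent (T i j)
    rw [rowLen_eq_zero hnu hle, Finset.card_eq_zero] at hempty
    refine Finset.notMem_empty (i, j) (hempty ▸ Finset.mem_filter.mpr ?_)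
    simpa [YoungDiagram.mem_iff_lt_rowLen] using ⟨hq, hp⟩

lemma IsFilling.isLR_iff (h : IsFilling K mu.rowLen lam.rowLen T) :
    IsLR lam mu nu T ↔
      (∀ k, (lam.cells.filter fun c => c ∉ mu.cells ∧ T c.1 c.2 = k).card = nu.rowLen k) ∧
        ∀ r j k, prefixCount lam mu T r j (k + 1) ≤ prefixCount lam mu T r j k := by
  refine ⟨fun h => h.2.2.2, fun hT => ⟨?_, ?_, ?_, hT⟩⟩ <;>
    simp only [YoungDiagram.mem_iff_lt_rowLen, not_lt]
  · exact fun i j hij => h.1 i j fun hc => hij hc.symm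
  · exact fun i j₁ j₂ hj _ h₁ h₂ _ => h.2.1 i j₁ j₂ hj h₁ h₂
  · exact fun i₁ i₂ j hi _ h₁ h₂ _ => h.2.2.1 i₁ i₂ j hi h₁ h₂

lemma Encodes.isLR_iff (h : Encodes mu.rowLen lam.rowLen T C) (hlam : lam.card ≤ M)
    (hnu : nu.card ≤ M) :
    IsLR lam mu nu T ↔ C ∈ stripChains M mu.rowLen lam.rowLen ∧ IsLattice M C ∧
      HasShiftedContent (shifted M nu) C := by
  constructor
  · intro hT
    have hF := hT.isFilling hnu
    have hC := h.mem_stripChains (antitone_rowLen mu) (antitone_rowLen lam) hF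
    rw [hF.isLR_iff, h.card_filter_eq_rowLen_iff hC hlam hnu, h.prefixCount_le_iff hC] at hT
    exact ⟨hC, hT.symm⟩
  · rintro ⟨hC, hT⟩
    rw [(h.isFilling (antitone_rowLen mu) (antitone_rowLen lam) hC).isLR_iff,
      h.card_filter_eq_rowLen_iff hC hlam hnu, h.prefixCount_le_iff hC]
    exact hT.symm

lemma lrCoeff_eq_ncard (hlam : lam.card ≤ M) (hnu : nu.card ≤ M) :
    lrCoeff lam mu nu = {C ∈ stripChains M mu.rowLen lam.rowLen |
      IsLattice M C ∧ HasShiftedContent (shifted M nu) C}.ncard := by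
  rw [lrCoeff]
  split_ifs with hle
  · exact ncard_eq_ncard_of_encodes
      (fun T (hT : IsLR lam mu nu T) => (hT.isFilling hnu).exists_encodes (le_iff_rowLen_le.mp hle))
      (fun C hC => exists_encodes_of_mem_stripChains hC.1) fun h => h.isLR_iff hlam hnu
  · symm
    convert Set.ncard_empty (ℕ → ℕ → ℕ)
    exact Set.eq_empty_of_forall_notMem fun C hC => hle (le_iff_rowLen_le.mpr
      ((ge_of_mem_stripChains hC.1 0).trans (le_of_mem_stripChains hC.1 0)))

lemma apply_lt_card_of_card_fiber_eq_one {α : Type*} {s : Finset α} {f : α → ℕ}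
    (h : ∀ k < s.card, (s.filter (f · = k)).card = 1) {x : α} (hx : x ∈ s) : f x < s.card := by
  have hcard : (s.filter (f · < s.card)).card = s.card := by
    rw [Finset.card_eq_sum_card_fiberwise (f := f) (t := Finset.range s.card)
      fun c hc => by simpa using (Finset.mem_filter.mp hc).2]
    refine (Finset.sum_congr rfl fun k hk => ?_).trans (by simp : ∑ k ∈ Finset.range s.card, 1 = _)
    rw [Finset.mem_range] at hk
    rw [← h k hk, Finset.filter_filter]
    exact congrArg Finset.card (Finset.filter_congr fun c _ => by omega)
  exact Finset.filter_card_eq hcard x hx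

lemma IsStandard.isFilling {T : SemistandardYoungTableau lam} (h : IsStandard lam T) :
    IsFilling lam.card (⊥ : YoungDiagram).rowLen lam.rowLen T := by
  refine ⟨fun i j hij => T.zeros fun hmem => hij ?_, fun i j₁ j₂ hj _ h₂ => ?_,
    fun i₁ i₂ j hi _ h₂ => ?_, fun i j _ hq => ?_⟩
  · exact ⟨(rowLen_bot i).trans_le j.zero_le, YoungDiagram.mem_iff_lt_rowLen.mp hmem⟩
  · exact T.row_weak hj (YoungDiagram.mem_iff_lt_rowLen.mpr h₂)
  · exact T.col_strict hi (YoungDiagram.mem_iff_lt_rowLen.mpr h₂)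
  · refine apply_lt_card_of_card_fiber_eq_one (f := fun c : ℕ × ℕ => T c.1 c.2) (x := (i, j))
      (fun k hk => ?_) ((YoungDiagram.mem_cells ..).mpr (YoungDiagram.mem_iff_lt_rowLen.mpr hq))
    rw [Finset.card_eq_one_iff_existsUnique]
    simpa using h k hk

lemma fSYT_eq_ncard_isFilling (lam : YoungDiagram) :
    fSYT lam = {T | IsFilling lam.card (⊥ : YoungDiagram).rowLen lam.rowLen T ∧ ∀ k < lam.card,
      (lam.cells.filter fun c => c ∉ (⊥ : YoungDiagram).cells ∧ T c.1 c.2 = k).card = 1}.ncard := by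
  have hone : ∀ T : ℕ → ℕ → ℕ, (∀ k < lam.card,
      (lam.cells.filter fun c => c ∉ (⊥ : YoungDiagram).cells ∧ T c.1 c.2 = k).card = 1) ↔
      ∀ k < lam.card, ∃! c : ℕ × ℕ, c ∈ lam.cells ∧ T c.1 c.2 = k := fun T => by
    simp [Finset.card_eq_one_iff_existsUnique]
  simp only [hone]
  refine Nat.card_eq_of_bijective (fun T : {T : SemistandardYoungTableau lam // IsStandard lam T} =>
    ⟨T.1, T.2.isFilling, T.2⟩) ⟨fun T T' h => ?_, ?_⟩
  · exact Subtype.ext (DFunLike.coe_injective (congrArg Subtype.val h))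
  · rintro ⟨T, ⟨hsupp, hrow, hcol, -⟩, hT⟩
    simp only [rowLen_bot, Nat.zero_le, true_and, forall_true_left,
      ← YoungDiagram.mem_iff_lt_rowLen] at hsupp hrow hcol
    exact ⟨⟨⟨T, hrow _ _ _, hcol _ _ _, hsupp _ _⟩, hT⟩, rfl⟩

lemma fSYT_eq_ncard_contentChains (hlam : lam.card ≤ M) :
    fSYT lam =
      (contentChains M lam.card (⊥ : YoungDiagram).rowLen lam.rowLen fun _ => 1).ncard := by
  rw [fSYT_eq_ncard_isFilling]
  refine ncard_eq_ncard_of_encodes (fun T hT => hT.1.exists_encodes ?_)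
    (fun C hC => exists_encodes_of_mem_stripChains hC.1) fun {T C} h => ?_
  · exact le_iff_rowLen_le.mp bot_le
  have hC_iff : IsFilling lam.card (⊥ : YoungDiagram).rowLen lam.rowLen T ↔
      C ∈ stripChains lam.card (⊥ : YoungDiagram).rowLen lam.rowLen :=
    ⟨h.mem_stripChains (antitone_rowLen _) (antitone_rowLen lam),
      h.isFilling (antitone_rowLen _) (antitone_rowLen lam)⟩
  rw [Set.mem_ofPred_eq, hC_iff]
  refine and_congr_right fun hC => forall₂_congr fun k _ => ?_
  rw [← h.partialSum_add_card_filter (monotone_of_mem_stripChains hC) hlam k]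
  exact Nat.add_left_cancel_iff.symm

end TableauCounts

section LittlewoodRichardson

open MvPolynomial

variable {R : Type*} [CommRing R] {M : ℕ}

variable (R M) in
/-- The Jacobi–Trudi matrix `(h_{ν_i - i + k})`, with `h_r = 0` for `r < 0`. -/
def jacobiTrudiMatrix (ν : YoungDiagram) : Matrix (Fin M) (Fin M) (MvPolynomial (Fin M) R) :=
  fun i k => if staircase M k ≤ shifted M ν i then
    hsymm (Fin M) R (shifted M ν i - staircase M k) else 0

variable (R M) in
/-- The Schur polynomial of `ν`, defined by the Jacobi–Trudi determinant. -/
def schurPoly (ν : YoungDiagram) : MvPolynomial (Fin M) R := (jacobiTrudiMatrix R M ν).det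

lemma schurPoly_eq_sum (ν : YoungDiagram) :
    schurPoly R M ν = ∑ π : Equiv.Perm (Fin M),
      signIn R π • ∏ k, jacobiTrudiMatrix R M ν (π k) k := by
  rw [schurPoly, Matrix.det_apply']
  refine Finset.sum_congr rfl fun π _ => ?_
  rw [signIn_apply, smul_eq_C_mul, map_intCast]

lemma mem_contentChains_iff {p q γ : ℕ → ℕ} {C : ℕ → ℕ → ℕ} {α : Fin M → ℕ}
    (hα : ∀ k : Fin M, γ k + staircase M k = α k) :
    C ∈ contentChains M M p q γ ↔ C ∈ stripChains M p q ∧ HasShiftedContent α C := by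
  refine and_congr_right fun _ => ⟨fun h k => ?_, fun h k hk => ?_⟩
  · rw [h k k.isLt, ← hα, add_assoc]
  · have := h ⟨k, hk⟩
    rw [← hα, ← add_assoc] at this
    exact Nat.add_right_cancel this

lemma HasShiftedContent.staircase_le {p q : ℕ → ℕ} {C : ℕ → ℕ → ℕ} {α : Fin M → ℕ}
    (h : HasShiftedContent α C) (hC : C ∈ stripChains M p q) : staircase M ≤ α := by
  intro k
  change staircase M k ≤ α k
  have hmono : partialSum (C k) M ≤ partialSum (C (k + 1)) M :=
    partialSum_mono (monotone_of_mem_stripChains hC k.val.le_succ) M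
  have hk := h k
  omega

variable [NoZeroDivisors R] [CharZero R]

lemma alternant_mul_prod_jacobiTrudiMatrix_of_le {μ ν : YoungDiagram} (h : μ.card + ν.card ≤ M)
    {π : Equiv.Perm (Fin M)} (hπ : staircase M ≤ shifted M ν ∘ π) :
    alternant (shifted M μ) * ∏ k, jacobiTrudiMatrix R M ν (π k) k =
      ∑ lam ∈ partitions (μ.card + ν.card), ({C ∈ stripChains M μ.rowLen lam.rowLen |
        HasShiftedContent (shifted M ν ∘ π) C}.ncard : R) • alternant (shifted M lam) := by
  let γ : ℕ → ℕ := fun k =>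
    if hk : k < M then shifted M ν (π ⟨k, hk⟩) - staircase M ⟨k, hk⟩ else 0
  have hγ : ∀ k : Fin M, γ k + staircase M k = (shifted M ν ∘ π) k := fun k => by
    simpa [γ] using Nat.sub_add_cancel (hπ k)
  have hprod : ∏ k, jacobiTrudiMatrix R M ν (π k) k =
      ∏ k ∈ Finset.range M, hsymm (Fin M) R (γ k) := by
    rw [Finset.prod_range]
    refine Finset.prod_congr rfl fun k _ => ?_
    have hk : staircase M k ≤ shifted M ν (π k) := hπ k
    have hsub : γ k = shifted M ν (π k) - staircase M k := Nat.eq_sub_of_add_eq (hγ k)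
    rw [jacobiTrudiMatrix, if_pos hk, hsub]
  have hsum : ∑ k ∈ Finset.range M, γ k = ν.card := by
    have hshift : ∑ k, (shifted M ν ∘ π) k = ν.card + ∑ k, staircase M k :=
      (Equiv.sum_comp π (shifted M ν)).trans (sum_shifted (by omega))
    simp only [← hγ, Finset.sum_add_distrib] at hshift
    rw [Finset.sum_range]
    exact Nat.add_right_cancel hshift
  have hpieri := alternant_mul_prod_hsymm (R := R) (M := M) (K := M) (Y := μ) (γ := γ)
    (by rwa [hsum])
  rw [hprod, hpieri, hsum]
  refine Finset.sum_congr rfl fun lam _ => ?_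
  congr 3
  exact Set.ext fun C => mem_contentChains_iff hγ

lemma alternant_mul_prod_jacobiTrudiMatrix {μ ν : YoungDiagram} (h : μ.card + ν.card ≤ M)
    (π : Equiv.Perm (Fin M)) :
    alternant (shifted M μ) * ∏ k, jacobiTrudiMatrix R M ν (π k) k =
      ∑ lam ∈ partitions (μ.card + ν.card), ({C ∈ stripChains M μ.rowLen lam.rowLen |
        HasShiftedContent (shifted M ν ∘ π) C}.ncard : R) • alternant (shifted M lam) := by
  by_cases hπ : staircase M ≤ shifted M ν ∘ π
  · exact alternant_mul_prod_jacobiTrudiMatrix_of_le h hπ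
  · obtain ⟨k, hk⟩ := not_forall.mp hπ
    have hempty : ∀ q, {C ∈ stripChains M μ.rowLen q | HasShiftedContent (shifted M ν ∘ π) C} = ∅ :=
      fun q => Set.eq_empty_of_forall_notMem fun C hC => hπ (hC.2.staircase_le hC.1)
    rw [Finset.prod_eq_zero (Finset.mem_univ k) (if_neg hk), mul_zero]
    simp [hempty]

theorem alternant_mul_schurPoly {μ ν : YoungDiagram} (h : μ.card + ν.card ≤ M) :
    alternant (shifted M μ) * schurPoly R M ν =
      ∑ lam ∈ partitions (μ.card + ν.card), (lrCoeff lam μ ν : R) • alternant (shifted M lam) := by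
  simp only [schurPoly_eq_sum, Finset.mul_sum, mul_smul_comm,
    alternant_mul_prod_jacobiTrudiMatrix h, Finset.smul_sum, smul_smul]
  rw [Finset.sum_comm]
  refine Finset.sum_congr rfl fun lam hlam => ?_
  rw [mem_partitions] at hlam
  rw [← Finset.sum_smul, sum_signIn_mul_ncard_hasShiftedContent
    (fun i hi => rowLen_eq_zero (by omega) hi) (strictAnti_shifted ν),
    lrCoeff_eq_ncard (M := M) (by omega) (by omega)]

end LittlewoodRichardson

section CanonicalChain

variable {M : ℕ} {lam nu : YoungDiagram} {C : ℕ → ℕ → ℕ}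

/-- The chain adding the rows of `q` one at a time; for a partition it is the only chain from the
empty diagram satisfying the lattice word condition. -/
def rowChain (q : ℕ → ℕ) : ℕ → ℕ → ℕ := fun k i => if i < k then q i else 0

lemma rowChain_of_lt {q : ℕ → ℕ} {k i : ℕ} (h : i < k) : rowChain q k i = q i := if_pos h

lemma rowChain_of_le {q : ℕ → ℕ} {k i : ℕ} (h : k ≤ i) : rowChain q k i = 0 := if_neg h.not_gt

lemma partialSum_rowChain (q : ℕ → ℕ) (k r : ℕ) :
    partialSum (rowChain q k) r = partialSum q (min k r) := by
  induction r with
  | zero => simp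
  | succ r ih =>
    rw [partialSum_succ, ih]
    rcases lt_or_ge r k with h | h
    · rw [rowChain_of_lt h, min_eq_right h.le, min_eq_right (Nat.succ_le_of_lt h), partialSum_succ]
    · rw [rowChain_of_le h, min_eq_left h, min_eq_left (h.trans r.le_succ), add_zero]

lemma rowChain_mem_stripChains (h : lam.card ≤ M) :
    rowChain lam.rowLen ∈ stripChains M (⊥ : YoungDiagram).rowLen lam.rowLen := by
  refine ⟨funext fun i => ?_, fun k hk => funext fun i => ?_, fun k _ => ⟨fun i => ?_, fun i => ?_⟩⟩
  · rw [rowChain_of_le i.zero_le, rowLen_bot]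
  · rcases lt_or_ge i k with hi | hi
    · exact rowChain_of_lt hi
    · rw [rowChain_of_le hi, rowLen_eq_zero h (hk.trans hi)]
  · rcases lt_or_ge i k with hi | hi
    · rw [rowChain_of_lt hi, rowChain_of_lt (hi.trans k.lt_succ_self)]
    · exact (rowChain_of_le hi).trans_le (Nat.zero_le _)
  · rcases lt_or_ge i k with hi | hi
    · rw [rowChain_of_lt hi, rowChain_of_lt (Nat.succ_lt_succ hi)]
      exact antitone_rowLen lam i.le_succ
    · exact (rowChain_of_le (Nat.succ_le_succ hi)).trans_le (Nat.zero_le _)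

lemma isLattice_rowChain (M : ℕ) (lam : YoungDiagram) : IsLattice M (rowChain lam.rowLen) := by
  intro k r _ hv
  have hanti := antitone_rowLen lam k.le_succ
  simp only [IsViolation, partialSum_rowChain] at hv
  rcases lt_or_ge r k with h | h
  · rw [min_eq_right (by omega), min_eq_right (by omega), min_eq_right (by omega),
      min_eq_right (by omega)] at hv
    exact lt_irrefl _ hv
  · rcases h.eq_or_lt with rfl | h
    · rw [min_eq_right (by omega), min_eq_right (by omega), min_eq_right (by omega),
        min_eq_right (by omega)] at hv
      exact lt_irrefl _ hv
    · rw [min_eq_left (by omega), min_eq_left (by omega), min_eq_left (by omega),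
        min_eq_left (by omega), partialSum_succ, partialSum_succ _ (k + 1), partialSum_succ] at hv
      simp only [Nat.succ_eq_add_one] at hanti
      omega

lemma hasShiftedContent_rowChain_iff {α : Fin M → ℕ} :
    HasShiftedContent α (rowChain lam.rowLen) ↔ α = shifted M lam := by
  rw [funext_iff]
  refine forall_congr' fun k => ?_
  rw [partialSum_rowChain, partialSum_rowChain, min_eq_left k.isLt, min_eq_left k.isLt.le,
    partialSum_succ, add_assoc, Nat.add_left_cancel_iff, eq_comm, shifted]

lemma apply_eq_zero_of_mem_stripChains_bot {q : ℕ → ℕ} (hq : ∀ i, M ≤ i → q i = 0)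
    (hC : C ∈ stripChains M (⊥ : YoungDiagram).rowLen q) {k i : ℕ} (h : k ≤ i) : C k i = 0 := by
  induction k generalizing i with
  | zero => rw [hC.1, rowLen_bot]
  | succ k ih =>
    rcases lt_or_ge k M with hk | hk
    · obtain ⟨j, rfl⟩ : ∃ j, i = j + 1 := ⟨i - 1, by omega⟩
      have hle := (hC.2.2 k hk).2 j
      rwa [ih (Nat.le_of_succ_le_succ h), Nat.le_zero] at hle
    · rw [hC.2.1 (k + 1) (by omega), hq i (by omega)]

lemma IsLattice.partialSum_succ_eq {p q : ℕ → ℕ} (hL : IsLattice M C) (hC : C ∈ stripChains M p q)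
    {k i : ℕ} (h : i ≤ k) : partialSum (C (k + 1)) i = partialSum (C k) i := by
  induction i generalizing k with
  | zero => simp
  | succ i ih =>
    obtain ⟨k, rfl⟩ : ∃ l, k = l + 1 := ⟨k - 1, by omega⟩
    rcases lt_or_ge (k + 1) M with hk | hk
    · have hlat : ¬ IsViolation i (C k) (C (k + 1)) (C (k + 1 + 1)) := hL k i hk
      have hprev := ih (Nat.le_of_succ_le_succ h)
      have hmono := partialSum_mono (monotone_of_mem_stripChains hC (k + 1).le_succ) (i + 1)
      rw [IsViolation] at hlat
      simp only [Nat.succ_eq_add_one] at hmono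
      omega
    · rw [hC.2.1 _ hk, hC.2.1 _ (hk.trans (k + 1).le_succ)]

lemma IsLattice.eq_rowChain {q : ℕ → ℕ} (hL : IsLattice M C) (hq : ∀ i, M ≤ i → q i = 0)
    (hC : C ∈ stripChains M (⊥ : YoungDiagram).rowLen q) : C = rowChain q := by
  have hstep : ∀ {k i}, i < k → C (k + 1) i = C k i := fun {k i} h => by
    have hsucc := hL.partialSum_succ_eq hC (Nat.succ_le_of_lt h)
    rw [partialSum_succ, partialSum_succ, hL.partialSum_succ_eq hC h.le] at hsucc
    exact Nat.add_left_cancel hsucc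
  funext k i
  rcases lt_or_ge i k with h | h
  · have hconst : ∀ l, k ≤ l → C l i = C k i := fun l hl => by
      induction l, hl using Nat.le_induction with
      | base => rfl
      | succ l hl ih => rw [hstep (h.trans_le hl), ih]
    rw [rowChain_of_lt h, ← hconst _ (le_max_left k M), hC.2.1 _ (le_max_right k M)]
  · rw [rowChain_of_le h, apply_eq_zero_of_mem_stripChains_bot hq hC h]

open Classical in
lemma lrCoeff_bot_left (hlam : lam.card ≤ M) (hnu : nu.card ≤ M) :
    lrCoeff lam ⊥ nu = if lam = nu then 1 else 0 := by
  have hiff : ∀ C, (C ∈ stripChains M (⊥ : YoungDiagram).rowLen lam.rowLen ∧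
      IsLattice M C ∧ HasShiftedContent (shifted M nu) C) ↔ C = rowChain lam.rowLen ∧ lam = nu := by
    refine fun C => ⟨fun ⟨hC, hL, hcont⟩ => ?_, ?_⟩
    · obtain rfl := hL.eq_rowChain (fun _ => rowLen_eq_zero hlam) hC
      rw [hasShiftedContent_rowChain_iff, shifted_inj hnu hlam] at hcont
      exact ⟨rfl, hcont.symm⟩
    · rintro ⟨rfl, rfl⟩
      exact ⟨rowChain_mem_stripChains hlam, isLattice_rowChain M lam,
        hasShiftedContent_rowChain_iff.mpr rfl⟩
  rw [lrCoeff_eq_ncard hlam hnu]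
  simp only [hiff]
  split_ifs with h <;> simp [h]

end CanonicalChain

section JacobiTrudi

open MvPolynomial

variable {R : Type*} [CommRing R] {M : ℕ}

theorem alternant_staircase_mul_schurPoly [NoZeroDivisors R] [CharZero R] {ν : YoungDiagram}
    (h : ν.card ≤ M) :
    alternant (staircase M) * schurPoly R M ν = alternant (shifted M ν) := by
  have hbot : (⊥ : YoungDiagram).card = 0 := by simp
  have hLR := alternant_mul_schurPoly (R := R) (M := M) (μ := ⊥) (ν := ν) (by rwa [hbot, zero_add])
  rw [shifted_bot, hbot, zero_add] at hLR
  rw [hLR, Finset.sum_eq_single ν]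
  · rw [lrCoeff_bot_left h h, if_pos rfl, Nat.cast_one, one_smul]
  · intro lam hlam hne
    rw [mem_partitions] at hlam
    rw [lrCoeff_bot_left (by omega) h, if_neg hne, Nat.cast_zero, zero_smul]
  · exact fun hν => absurd (mem_partitions.mpr rfl) hν

lemma alternant_staircase_ne_zero [Nontrivial R] :
    (alternant (staircase M) : MvPolynomial (Fin M) R) ≠ 0 := fun h => by
  have hcoeff := coeffAt_alternant (R := R) (strictAnti_staircase (M := M)) strictAnti_staircase
  rw [h, if_pos rfl, map_zero] at hcoeff
  exact zero_ne_one hcoeff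

end JacobiTrudi

/-! ### Frobenius characters -/

section FrobeniusCharacters

open MvPolynomial

variable {ι : Type*} [Fintype ι] {R : Type*} [CommRing R] {M : ℕ}

/-- The monomial of a word `w` in the letters `Fin M`, each letter `k` contributing `X k`. -/
def wordMonomial (R : Type*) [CommRing R] (w : ι → Fin M) : MvPolynomial (Fin M) R :=
  ∏ i, X (w i)

/-- The number of occurrences of each letter in a word. -/
def letterCount (w : ι → Fin M) : Fin M → ℕ := fun k => (Finset.univ.filter fun i => w i = k).card

lemma wordMonomial_eq_xPow (w : ι → Fin M) : wordMonomial R w = xPow (letterCount w) := by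
  rw [xPow_eq_prod, wordMonomial, ← Finset.prod_fiberwise (s := Finset.univ) (g := w)]
  refine Finset.prod_congr rfl fun k _ => Finset.prod_eq_pow_card fun i hi => ?_
  rw [(Finset.mem_filter.mp hi).2]

lemma sum_letterCount (w : ι → Fin M) : ∑ k, letterCount w k = Fintype.card ι :=
  (Finset.card_eq_sum_card_fiberwise fun _ _ => Finset.mem_coe.mpr (Finset.mem_univ _)).symm

lemma rename_wordMonomial (π : Equiv.Perm (Fin M)) (w : ι → Fin M) :
    rename π (wordMonomial R w) = wordMonomial R (π ∘ w) := by
  simp only [wordMonomial, map_prod, rename_X, Function.comp_apply]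

variable [DecidableEq ι]

variable (M) in
/-- The words in the letters `Fin M` that are constant on the cycles of `σ`. -/
def fixedWords (σ : Equiv.Perm ι) : Finset (ι → Fin M) :=
  Finset.univ.filter fun w => ∀ i, w (σ i) = w i

@[simp] lemma mem_fixedWords {σ : Equiv.Perm ι} {w : ι → Fin M} :
    w ∈ fixedWords M σ ↔ ∀ i, w (σ i) = w i := by
  simp [fixedWords]

variable (R M) in
/-- The power sum symmetric polynomial indexed by the cycle type of `σ`, as a sum over words. -/
def cyclePowerSum (σ : Equiv.Perm ι) : MvPolynomial (Fin M) R :=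
  ∑ w ∈ fixedWords M σ, wordMonomial R w

lemma isSymmetric_cyclePowerSum (σ : Equiv.Perm ι) : (cyclePowerSum R M σ).IsSymmetric := by
  intro π
  rw [cyclePowerSum, map_sum]
  refine Finset.sum_equiv ((Equiv.refl ι).arrowCongr π) (fun w => ?_) fun w _ => ?_
  · simp [Equiv.arrowCongr]
  · exact rename_wordMonomial π w

lemma isHomogeneous_cyclePowerSum (σ : Equiv.Perm ι) :
    (cyclePowerSum R M σ).IsHomogeneous (Fintype.card ι) := by
  refine IsHomogeneous.sum _ _ _ fun w _ => ?_
  rw [wordMonomial_eq_xPow, ← sum_letterCount w]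
  exact isHomogeneous_xPow _

lemma cyclePowerSum_one :
    cyclePowerSum R M (1 : Equiv.Perm ι) = hsymm (Fin M) R 1 ^ Fintype.card ι := by
  have hall : fixedWords M (1 : Equiv.Perm ι) = Finset.univ := by ext w; simp
  rw [cyclePowerSum, hall, hsymm_one, ← Finset.card_univ, ← Finset.prod_const,
    Finset.prod_univ_sum, Fintype.piFinset_univ]
  rfl

lemma cyclePowerSum_subtypeCongr (p : ι → Prop) [DecidablePred p] [Fintype {i // p i}]
    [Fintype {i // ¬ p i}] (σ : Equiv.Perm {i // p i}) (τ : Equiv.Perm {i // ¬ p i}) :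
    cyclePowerSum R M (Equiv.Perm.subtypeCongr σ τ) =
      cyclePowerSum R M σ * cyclePowerSum R M τ := by
  simp only [cyclePowerSum]
  rw [Finset.sum_mul_sum, ← Finset.sum_product']
  refine Finset.sum_equiv (Equiv.piEquivPiSubtypeProd p fun _ => Fin M) (fun w => ?_) fun w _ => ?_
  · simp only [mem_fixedWords, Finset.mem_product, Equiv.piEquivPiSubtypeProd_apply]
    refine ⟨fun h => ⟨fun i => ?_, fun i => ?_⟩, fun ⟨hσ, hτ⟩ i => ?_⟩
    · rw [← h i.1, Equiv.Perm.subtypeCongr.left_apply _ _ i.2]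
    · rw [← h i.1, Equiv.Perm.subtypeCongr.right_apply _ _ i.2]
    · by_cases hi : p i
      · rw [Equiv.Perm.subtypeCongr.left_apply _ _ hi]
        exact hσ ⟨i, hi⟩
      · rw [Equiv.Perm.subtypeCongr.right_apply _ _ hi]
        exact hτ ⟨i, hi⟩
  · simp only [wordMonomial]
    convert (Fintype.prod_subtype_mul_prod_subtype p fun i => X (w i)).symm <;> rfl

variable (R M) in
/-- The irreducible character of `𝔖_ι` indexed by `lam`, by Frobenius' formula: the coefficient of
`x^(lam + δ)` in `a_δ p_σ`. It does not depend on the number `M ≥ |ι|` of variables. -/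
def frobeniusChar (lam : YoungDiagram) (σ : Equiv.Perm ι) : R :=
  coeffAt (shifted M lam) (alternant (staircase M) * cyclePowerSum R M σ)

variable [NoZeroDivisors R] [CharZero R]

theorem alternant_mul_cyclePowerSum (h : Fintype.card ι ≤ M) (σ : Equiv.Perm ι) :
    alternant (staircase M) * cyclePowerSum R M σ =
      ∑ lam ∈ partitions (Fintype.card ι), frobeniusChar R M lam σ • alternant (shifted M lam) := by
  refine ((isAntisymmetric_alternant _).mul_isSymmetric
    (isSymmetric_cyclePowerSum σ)).eq_sum_alternant h ?_
  rw [add_comm]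
  exact (isHomogeneous_alternant _).mul (isHomogeneous_cyclePowerSum σ)

theorem cyclePowerSum_eq_sum_schurPoly (h : Fintype.card ι ≤ M) (σ : Equiv.Perm ι) :
    cyclePowerSum R M σ =
      ∑ lam ∈ partitions (Fintype.card ι), frobeniusChar R M lam σ • schurPoly R M lam := by
  refine mul_left_cancel₀ alternant_staircase_ne_zero ?_
  rw [alternant_mul_cyclePowerSum h, Finset.mul_sum]
  refine Finset.sum_congr rfl fun lam hlam => ?_
  rw [mem_partitions] at hlam
  rw [mul_smul_comm, alternant_staircase_mul_schurPoly (by omega)]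

theorem frobeniusChar_subtypeCongr (p : ι → Prop) [DecidablePred p] [Fintype {i // p i}]
    [Fintype {i // ¬ p i}] (σ : Equiv.Perm {i // p i}) (τ : Equiv.Perm {i // ¬ p i}) {m n : ℕ}
    (hm : Fintype.card {i // p i} = m) (hn : Fintype.card {i // ¬ p i} = n) (hM : m + n ≤ M)
    {lam : YoungDiagram} (hlam : lam.card = m + n) :
    frobeniusChar R M lam (Equiv.Perm.subtypeCongr σ τ) =
      ∑ μ ∈ partitions m, ∑ ν ∈ partitions n,
        (lrCoeff lam μ ν : R) * (frobeniusChar R M μ σ * frobeniusChar R M ν τ) := by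
  have hexpand : alternant (staircase M) * cyclePowerSum R M (Equiv.Perm.subtypeCongr σ τ) =
      ∑ lam ∈ partitions (m + n), (∑ μ ∈ partitions m, ∑ ν ∈ partitions n,
        (lrCoeff lam μ ν : R) * (frobeniusChar R M μ σ * frobeniusChar R M ν τ)) •
          alternant (shifted M lam) := by
    rw [cyclePowerSum_subtypeCongr, ← mul_assoc, alternant_mul_cyclePowerSum (by omega),
      cyclePowerSum_eq_sum_schurPoly (M := M) (by omega) τ, hm, hn, Finset.sum_mul_sum]
    simp only [Finset.sum_smul]
    rw [Finset.sum_comm (s := partitions (m + n))]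
    refine Finset.sum_congr rfl fun μ hμ => ?_
    rw [Finset.sum_comm (s := partitions (m + n))]
    refine Finset.sum_congr rfl fun ν hν => ?_
    rw [mem_partitions] at hμ hν
    rw [smul_mul_smul_comm, alternant_mul_schurPoly (by omega), Finset.smul_sum, hμ, hν]
    simp only [smul_smul, mul_comm]
  rw [frobeniusChar, hexpand, coeffAt_sum_smul_alternant hM _ hlam]

theorem frobeniusChar_one (h : Fintype.card ι ≤ M) {lam : YoungDiagram}
    (hlam : lam.card = Fintype.card ι) :
    frobeniusChar R M lam (1 : Equiv.Perm ι) = fSYT lam := by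
  have hbot : (⊥ : YoungDiagram).card = 0 := by simp
  have hpieri := alternant_mul_prod_hsymm (R := R) (M := M) (K := Fintype.card ι) (Y := ⊥)
    (γ := fun _ => 1) (by simp [hbot, h])
  simp only [Finset.prod_const, Finset.card_range, hbot, Finset.sum_const, smul_eq_mul, mul_one,
    zero_add, shifted_bot] at hpieri
  rw [frobeniusChar, cyclePowerSum_one, hpieri, coeffAt_sum_smul_alternant h _ hlam,
    fSYT_eq_ncard_contentChains (M := M) (by omega), hlam]

end FrobeniusCharacters

/-! ### Euler operators and class sums of transpositions -/

section EulerOperators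

open MvPolynomial

lemma derivation_prod {R A N κ : Type*} [CommSemiring R] [CommSemiring A] [Algebra R A]
    [AddCommMonoid N] [Module R N] [Module A N] [DecidableEq κ] (D : Derivation R A N)
    (s : Finset κ) (f : κ → A) :
    D (∏ i ∈ s, f i) = ∑ i ∈ s, (∏ j ∈ s.erase i, f j) • D (f i) := by
  induction s using Finset.induction_on with
  | empty => simp
  | insert a s ha ih =>
    rw [Finset.prod_insert ha, D.leibniz, ih, Finset.sum_insert ha, Finset.erase_insert ha,
      Finset.smul_sum, add_comm]
    congr 1
    refine Finset.sum_congr rfl fun i hi => ?_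
    have hne : a ≠ i := fun h => ha (h ▸ hi)
    rw [Finset.erase_insert_of_ne hne, Finset.prod_insert (by simp [ha]), mul_smul]

variable {σ R : Type*} [CommRing R]

/-- The Euler operator `x_k ∂/∂x_k`. -/
def euler (k : σ) : Derivation R (MvPolynomial σ R) (MvPolynomial σ R) :=
  (X k : MvPolynomial σ R) • pderiv k

lemma euler_apply (k : σ) (f : MvPolynomial σ R) : euler k f = X k * pderiv k f := rfl

lemma euler_X [DecidableEq σ] (k l : σ) :
    euler k (X l : MvPolynomial σ R) = if k = l then X k else 0 := by
  rw [euler_apply, pderiv_X, Pi.single_apply, mul_ite, mul_one, mul_zero]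
  exact if_congr eq_comm rfl rfl

lemma sum_euler [Fintype σ] {f : MvPolynomial σ R} {n : ℕ} (hf : f.IsHomogeneous n) :
    ∑ k, euler k f = (n : R) • f :=
  hf.sum_X_mul_pderiv.trans (Nat.cast_smul_eq_nsmul R n f).symm

lemma euler_xPow [Fintype σ] (k : σ) (β : σ → ℕ) :
    euler k (xPow β : MvPolynomial σ R) = (β k : R) • xPow β := by
  rw [euler_apply, xPow, X_mul_pderiv_monomial, Nat.cast_smul_eq_nsmul]
  rfl

lemma coeffAt_euler [Fintype σ] (k : σ) (β : σ → ℕ) (f : MvPolynomial σ R) :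
    coeffAt β (euler k f) = β k * coeffAt β f := by
  classical
  induction f using MvPolynomial.induction_on' with
  | monomial u c =>
    have hu : monomial u c = c • (xPow u : MvPolynomial σ R) := by
      simp [xPow, smul_monomial]
    rw [hu, Derivation.map_smul, euler_xPow, map_smul, map_smul, map_smul, coeffAt_xPow]
    split_ifs with h
    · rw [← h]
      simp [mul_comm]
    · simp
  | add f g hf hg => rw [map_add, map_add, map_add, hf, hg, mul_add]

lemma sum_euler_euler_alternant [Fintype σ] [DecidableEq σ] (α : σ → ℕ) :
    ∑ k, euler k (euler k (alternant α : MvPolynomial σ R)) =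
      (∑ k, (α k : R) ^ 2) • alternant α := by
  have hterm : ∀ k, euler k (euler k (alternant α : MvPolynomial σ R)) =
      ∑ π : Equiv.Perm σ, ((α (π k) : R) ^ 2) • (signIn R π • xPow (α ∘ π)) := fun k => by
    simp only [alternant, map_sum, Derivation.map_smul, euler_xPow, Function.comp_apply, smul_smul]
    exact Finset.sum_congr rfl fun π _ => by ring_nf
  simp only [hterm]
  rw [Finset.sum_comm, alternant, Finset.smul_sum]
  refine Finset.sum_congr rfl fun π _ => ?_
  rw [← Finset.sum_smul, Equiv.sum_comp π fun k => (α k : R) ^ 2]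

end EulerOperators

section Vandermonde

open MvPolynomial

variable {R : Type*} [CommRing R] {M : ℕ}

variable (M) in
/-- The index set of the factors of the Vandermonde product. -/
def ltPairs : Finset (Fin M × Fin M) := Finset.univ.filter fun p => p.1 < p.2

@[simp] lemma mem_ltPairs {p : Fin M × Fin M} : p ∈ ltPairs M ↔ p.1 < p.2 := by simp [ltPairs]

lemma alternant_staircase_eq_smul_prod :
    (alternant (staircase M) : MvPolynomial (Fin M) R) =
      signIn R (Fin.revPerm (n := M)) • ∏ p ∈ ltPairs M, (X p.2 - X p.1) := by
  have hdet : ∏ p ∈ ltPairs M, (X p.2 - X p.1 : MvPolynomial (Fin M) R) =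
      (Matrix.vandermonde fun k : Fin M => (X k : MvPolynomial (Fin M) R)).transpose.det := by
    rw [Matrix.det_transpose, Matrix.det_vandermonde, Finset.prod_sigma']
    exact Finset.prod_nbij' (fun p => ⟨p.1, p.2⟩) (fun p => (p.1, p.2)) (by simp) (by simp)
      (by simp) (by simp) (by simp)
  rw [hdet, Matrix.det_apply', alternant, Finset.smul_sum]
  refine Fintype.sum_equiv (Equiv.mulLeft Fin.revPerm) _ _ fun π => ?_
  have hterm : ∏ i, (Matrix.vandermonde fun k : Fin M => (X k : MvPolynomial (Fin M) R)).transpose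
      ((Fin.revPerm * π : Equiv.Perm (Fin M)) i) i = xPow (staircase M ∘ π) :=
    (xPow_eq_prod _).symm
  rw [Equiv.coe_mulLeft, hterm, ← map_intCast (C (σ := Fin M) (R := R)), ← smul_eq_C_mul,
    ← signIn_apply, smul_smul, map_mul, ← mul_assoc, signIn_mul_self, one_mul]

variable (R) in
/-- The quotient of the Vandermonde alternant `a_δ` by its factor `x_k - x_l`, for `k ≠ l`. -/
def vandermondeQuotient (k l : Fin M) : MvPolynomial (Fin M) R :=
  signIn R (Fin.revPerm (n := M)) •
    if k < l then -∏ p ∈ (ltPairs M).erase (k, l), (X p.2 - X p.1)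
    else ∏ p ∈ (ltPairs M).erase (l, k), (X p.2 - X p.1)

lemma vandermondeQuotient_neg {k l : Fin M} (h : k ≠ l) :
    vandermondeQuotient R k l = -vandermondeQuotient R l k := by
  rcases lt_or_gt_of_ne h with h | h <;> simp [vandermondeQuotient, h, h.not_gt]

lemma sub_mul_vandermondeQuotient {k l : Fin M} (h : k ≠ l) :
    (X k - X l) * vandermondeQuotient R k l = alternant (staircase M) := by
  wlog hlt : l < k generalizing k l
  · rw [vandermondeQuotient_neg h, mul_neg, ← neg_mul, neg_sub]
    exact this h.symm (lt_of_le_of_ne (not_lt.mp hlt) h)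
  have hmem : (l, k) ∈ ltPairs M := mem_ltPairs.mpr hlt
  rw [vandermondeQuotient, if_neg hlt.not_gt, alternant_staircase_eq_smul_prod, mul_smul_comm,
    ← Finset.mul_prod_erase _ _ hmem]

lemma sum_ltPairs_ite {N : Type*} [AddCommMonoid N] (k : Fin M) (g : Fin M → N) :
    ∑ p ∈ ltPairs M, ((if k = p.2 then g p.1 else 0) + if k = p.1 then g p.2 else 0) =
      ∑ l ∈ Finset.univ.erase k, g l := by
  have hlower : ∑ p ∈ ltPairs M, (if k = p.2 then g p.1 else 0) =
      ∑ l, if l < k then g l else 0 := by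
    simp only [ltPairs, Finset.sum_filter, Fintype.sum_prod_type]
    refine Finset.sum_congr rfl fun i _ => ?_
    rw [Finset.sum_eq_single k (fun j _ hj => by simp [hj.symm]) (by simp)]
    simp
  have hupper : ∑ p ∈ ltPairs M, (if k = p.1 then g p.2 else 0) =
      ∑ l, if k < l then g l else 0 := by
    simp only [ltPairs, Finset.sum_filter, Fintype.sum_prod_type_right]
    refine Finset.sum_congr rfl fun i _ => ?_
    rw [Finset.sum_eq_single k (fun j _ hj => by simp [hj.symm]) (by simp)]
    simp
  rw [Finset.sum_add_distrib, hlower, hupper, ← Finset.sum_add_distrib,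
    ← Finset.filter_ne' Finset.univ k, Finset.sum_filter]
  refine Finset.sum_congr rfl fun l _ => ?_
  rcases lt_trichotomy l k with h | rfl | h
  · simp [h, h.ne, h.not_gt]
  · simp
  · simp [h, h.ne', h.not_gt]

lemma euler_alternant_staircase (k : Fin M) :
    euler k (alternant (staircase M) : MvPolynomial (Fin M) R) =
      ∑ l ∈ Finset.univ.erase k, X k * vandermondeQuotient R k l := by
  rw [alternant_staircase_eq_smul_prod, Derivation.map_smul, derivation_prod, Finset.smul_sum,
    ← sum_ltPairs_ite]
  refine Finset.sum_congr rfl fun ⟨i, j⟩ hp => ?_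
  have hij : i < j := mem_ltPairs.mp hp
  rw [map_sub, euler_X, euler_X, smul_eq_mul]
  by_cases hj : k = j
  · subst hj
    rw [if_pos rfl, if_neg hij.ne', if_pos rfl, if_neg hij.ne', vandermondeQuotient,
      if_neg hij.not_gt, sub_zero, add_zero, mul_comm, mul_smul_comm]
  · by_cases hi : k = i
    · subst hi
      rw [if_neg hj, if_pos rfl, if_neg hj, if_pos rfl, vandermondeQuotient, if_pos hij, zero_sub,
        zero_add, mul_neg, ← neg_mul, mul_comm, mul_smul_comm]
    · simp [hi, hj]

lemma sum_X_mul_vandermondeQuotient (k : Fin M) :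
    ∑ l ∈ Finset.univ.erase k, X l * vandermondeQuotient R k l =
      euler k (alternant (staircase M)) - ((M : R) - 1) • alternant (staircase M) := by
  have hterm : ∀ l ∈ Finset.univ.erase k, X l * vandermondeQuotient R k l =
      X k * vandermondeQuotient R k l - alternant (staircase M) := fun l hl => by
    rw [← sub_mul_vandermondeQuotient (Finset.ne_of_mem_erase hl).symm]
    ring
  have hcard : (((Finset.univ.erase k).card : ℕ) : R) = (M : R) - 1 := by
    rw [Finset.card_erase_of_mem (Finset.mem_univ k), Finset.card_univ, Fintype.card_fin,
      Nat.cast_pred k.pos]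
  rw [Finset.sum_congr rfl hterm, Finset.sum_sub_distrib, Finset.sum_const,
    ← Nat.cast_smul_eq_nsmul R, hcard, euler_alternant_staircase]

end Vandermonde

section LetterMoves

open MvPolynomial

variable {ι : Type*} [Fintype ι] [DecidableEq ι] {R : Type*} [CommRing R] {M : ℕ}

lemma X_mul_wordMonomial (w : ι → Fin M) (i : ι) (l : Fin M) :
    X l * wordMonomial R w = X (w i) * wordMonomial R (Function.update w i l) := by
  have hrest : ∏ x ∈ Finset.univ.erase i, (X (Function.update w i l x) : MvPolynomial (Fin M) R) =
      ∏ x ∈ Finset.univ.erase i, X (w x) :=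
    Finset.prod_congr rfl fun x hx => by rw [Function.update_of_ne (Finset.ne_of_mem_erase hx)]
  rw [wordMonomial, wordMonomial, ← Finset.mul_prod_erase _ _ (Finset.mem_univ i),
    ← Finset.mul_prod_erase _ (fun x => X (Function.update w i l x)) (Finset.mem_univ i), hrest,
    Function.update_self]
  ring

lemma euler_cyclePowerSum (k : Fin M) (σ : Equiv.Perm ι) :
    euler k (cyclePowerSum R M σ) =
      ∑ w ∈ fixedWords M σ, (letterCount w k : R) • wordMonomial R w := by
  simp only [cyclePowerSum, map_sum, wordMonomial_eq_xPow, euler_xPow]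

variable (M) in
/-- The triples `(w, i, j)` with `i ≠ j` such that `w` is constant on the cycles of `(i j) σ`. -/
def swapTriples (σ : Equiv.Perm ι) : Finset ((ι → Fin M) × ι × ι) :=
  Finset.univ.filter fun z =>
    z.2.1 ≠ z.2.2 ∧ z.1 ∈ fixedWords M (Equiv.swap z.2.1 z.2.2 * σ)

variable (R) in
/-- The part of `∑_{i ≠ j} p_{(i j) σ}` coming from the words with letter `k` at `i` and letter `l`
at `j`. -/
def swapSum (σ : Equiv.Perm ι) (k l : Fin M) : MvPolynomial (Fin M) R :=
  ∑ z ∈ (swapTriples M σ).filter fun z => (z.1 z.2.1, z.1 z.2.2) = (k, l), wordMonomial R z.1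

lemma sum_swapSum (σ : Equiv.Perm ι) :
    ∑ k, ∑ l, swapSum R σ k l =
      ∑ p ∈ (Finset.univ : Finset ι).offDiag, cyclePowerSum R M (Equiv.swap p.1 p.2 * σ) := by
  rw [← Fintype.sum_prod_type']
  simp only [swapSum]
  rw [Finset.sum_fiberwise]
  exact Finset.sum_finset_product_right _ _ _ (by simp [swapTriples])

lemma swapSum_comm (σ : Equiv.Perm ι) (k l : Fin M) : swapSum R σ k l = swapSum R σ l k := by
  refine Finset.sum_equiv ((Equiv.refl _).prodCongr (Equiv.prodComm ι ι)) (fun z => ?_)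
    fun z _ => rfl
  simp [swapTriples, Equiv.swap_comm z.2.1, and_comm, eq_comm]

/-- The triples `(w, i, j)` with letter `k` at `i` such that, once that letter is changed to `l`,
the letter at `j` is `l`, and changing it back to `k` gives the word `w ∘ σ⁻¹`. -/
def letterMoves (σ : Equiv.Perm ι) (k l : Fin M) : Finset ((ι → Fin M) × ι × ι) :=
  Finset.univ.filter fun z => z.1 z.2.1 = k ∧ Function.update z.1 z.2.1 l z.2.2 = l ∧
    ∀ x, Function.update (Function.update z.1 z.2.1 l) z.2.2 k (σ x) = z.1 x

lemma mem_letterMoves {σ : Equiv.Perm ι} {k l : Fin M} {w : ι → Fin M} {i j : ι} :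
    (w, i, j) ∈ letterMoves σ k l ↔ w i = k ∧ Function.update w i l j = l ∧
      ∀ x, Function.update (Function.update w i l) j k (σ x) = w x := by
  simp [letterMoves]

lemma update_mem_letterMoves {σ : Equiv.Perm ι} {k l : Fin M} {w : ι → Fin M} {i j : ι}
    (h : (w, i, j) ∈ letterMoves σ k l) :
    (Function.update w i l, j, σ i) ∈ letterMoves σ l k := by
  rw [mem_letterMoves] at h ⊢
  obtain ⟨hi, hj, hσ⟩ := h
  refine ⟨hj, by rw [hσ i, hi], fun x => ?_⟩
  by_cases hx : x = i
  · subst hx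
    simp
  · rw [Function.update_of_ne (σ.injective.ne hx), Function.update_of_ne hx, hσ x]

lemma update_injOn_letterMoves (σ : Equiv.Perm ι) (k l : Fin M) :
    Set.InjOn (fun z : (ι → Fin M) × ι × ι => (Function.update z.1 z.2.1 l, z.2.2, σ z.2.1))
      (letterMoves σ k l) := by
  rintro ⟨w, i, j⟩ hz ⟨w', i', j'⟩ hz' h
  rw [Finset.mem_coe, mem_letterMoves] at hz hz'
  simp only [Prod.mk.injEq, σ.injective.eq_iff] at h
  obtain ⟨hw, rfl, rfl⟩ := h
  have hrestore := congrArg (fun u => Function.update u i k) hw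
  simp only [Function.update_idem] at hrestore
  rw [← hz.1, Function.update_eq_self, hz.1, ← hz'.1, Function.update_eq_self] at hrestore
  rw [hrestore]

lemma X_mul_sum_letterMoves (σ : Equiv.Perm ι) (k l : Fin M) :
    X l * ∑ z ∈ letterMoves σ k l, wordMonomial R z.1 =
      X k * ∑ z ∈ letterMoves σ l k, wordMonomial R z.1 := by
  have hmaps : ∀ k l : Fin M, Set.MapsTo
      (fun z : (ι → Fin M) × ι × ι => (Function.update z.1 z.2.1 l, z.2.2, σ z.2.1))
      (letterMoves σ k l) (letterMoves σ l k) := fun k l z hz => update_mem_letterMoves hz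
  have hcard : ∀ k l : Fin M, (letterMoves σ k l).card ≤ (letterMoves σ l k).card := fun k l =>
    Finset.card_le_card_of_injOn _ (hmaps k l) (update_injOn_letterMoves σ k l)
  rw [Finset.mul_sum, Finset.mul_sum]
  refine Finset.sum_nbij _ (hmaps k l) (update_injOn_letterMoves σ k l)
    (Finset.surjOn_of_injOn_of_card_le _ (hmaps k l) (update_injOn_letterMoves σ k l) (hcard l k))
    fun ⟨w, i, j⟩ hz => ?_
  rw [X_mul_wordMonomial w i l, (mem_letterMoves.mp hz).1]

lemma mem_letterMoves_self_iff {σ : Equiv.Perm ι} {k : Fin M} {w : ι → Fin M} {i j : ι} :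
    (w, i, j) ∈ letterMoves σ k k ↔ w ∈ fixedWords M σ ∧ w i = k ∧ w j = k := by
  rw [mem_letterMoves, mem_fixedWords]
  by_cases hi : w i = k
  · rw [← hi, Function.update_eq_self]
    by_cases hj : w j = w i
    · rw [← hj, Function.update_eq_self]
      simp [hj]
    · simp [hj]
  · simp [hi]

lemma mem_letterMoves_diag_iff {σ : Equiv.Perm ι} {k l : Fin M} {w : ι → Fin M} {i : ι} :
    (w, i, i) ∈ letterMoves σ k l ↔ w ∈ fixedWords M σ ∧ w i = k := by
  rw [mem_letterMoves, mem_fixedWords, Function.update_idem, and_comm]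
  simp only [Function.update_self, true_and]
  refine and_congr_left fun hi => ?_
  rw [← hi, Function.update_eq_self]

lemma mem_letterMoves_iff_of_ne {σ : Equiv.Perm ι} {k l : Fin M} {w : ι → Fin M} {i j : ι}
    (hij : i ≠ j) :
    (w, i, j) ∈ letterMoves σ k l ↔
      w ∈ fixedWords M (Equiv.swap i j * σ) ∧ w i = k ∧ w j = l := by
  rw [mem_letterMoves, mem_fixedWords, Function.update_of_ne hij.symm, ← and_assoc, and_comm]
  refine and_congr_left fun ⟨hi, hj⟩ => forall_congr' fun x => ?_
  rw [← hi, ← hj, Function.update_comm hij, ← Equiv.comp_swap_eq_update, Equiv.Perm.mul_apply,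
    Function.comp_apply]

lemma sum_letterMoves (σ : Equiv.Perm ι) (k l : Fin M) :
    ∑ z ∈ letterMoves σ k l, wordMonomial R z.1 =
      euler k (cyclePowerSum R M σ) + swapSum R σ k l := by
  rw [← Finset.sum_filter_add_sum_filter_not (letterMoves σ k l) fun z => z.2.1 = z.2.2]
  congr 1
  · rw [euler_cyclePowerSum, Finset.sum_finset_product _ (fixedWords M σ)
      fun w => (Finset.univ.filter fun i => w i = k).diag]
    · refine Finset.sum_congr rfl fun w _ => ?_
      refine (Finset.sum_const (wordMonomial R w)).trans ?_
      rw [Finset.diag_card, Nat.cast_smul_eq_nsmul]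
      rfl
    · rintro ⟨w, i, j⟩
      rw [Finset.mem_filter, Finset.mem_diag, Finset.mem_filter]
      constructor
      · rintro ⟨hz, rfl : i = j⟩
        simpa using mem_letterMoves_diag_iff.mp hz
      · rintro ⟨hw, ⟨-, hi⟩, rfl : i = j⟩
        exact ⟨mem_letterMoves_diag_iff.mpr ⟨hw, hi⟩, rfl⟩
  · refine Finset.sum_congr ?_ fun _ _ => rfl
    ext ⟨w, i, j⟩
    by_cases hij : i = j
    · simp [swapTriples, hij]
    · rw [Finset.mem_filter, mem_letterMoves_iff_of_ne hij]
      simp [swapTriples, hij]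

lemma sub_mul_swapSum (σ : Equiv.Perm ι) (k l : Fin M) :
    (X k - X l) * swapSum R σ k l =
      X l * euler k (cyclePowerSum R M σ) - X k * euler l (cyclePowerSum R M σ) := by
  have h := X_mul_sum_letterMoves (R := R) σ k l
  rw [sum_letterMoves, sum_letterMoves, swapSum_comm σ l k] at h
  linear_combination -h

lemma swapSum_self (σ : Equiv.Perm ι) (k : Fin M) :
    swapSum R σ k k =
      euler k (euler k (cyclePowerSum R M σ)) - euler k (cyclePowerSum R M σ) := by
  rw [eq_sub_iff_add_eq, add_comm, ← sum_letterMoves, euler_cyclePowerSum, map_sum,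
    Finset.sum_finset_product _ (fixedWords M σ) fun w =>
      (Finset.univ.filter fun i => w i = k) ×ˢ Finset.univ.filter fun i => w i = k]
  · refine Finset.sum_congr rfl fun w _ => ?_
    refine (Finset.sum_const (wordMonomial R w)).trans ?_
    rw [Finset.card_product, Derivation.map_smul, wordMonomial_eq_xPow, euler_xPow, smul_smul,
      ← Nat.cast_mul, Nat.cast_smul_eq_nsmul]
    rfl
  · rintro ⟨w, i, j⟩
    rw [mem_letterMoves_self_iff]
    simp

end LetterMoves

section ClassSum

open MvPolynomial

variable {ι : Type*} [Fintype ι] [DecidableEq ι] {R : Type*} [CommRing R] {M : ℕ}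

lemma alternant_mul_swapSum (σ : Equiv.Perm ι) {k l : Fin M} (h : k ≠ l) :
    alternant (staircase M) * swapSum R σ k l =
      X l * vandermondeQuotient R k l * euler k (cyclePowerSum R M σ) +
        X k * vandermondeQuotient R l k * euler l (cyclePowerSum R M σ) := by
  rw [← sub_mul_vandermondeQuotient h, vandermondeQuotient_neg h.symm]
  linear_combination vandermondeQuotient R k l * sub_mul_swapSum (R := R) σ k l

lemma alternant_mul_sum_swapSum_erase (σ : Equiv.Perm ι) :
    alternant (staircase M) * ∑ k, ∑ l ∈ Finset.univ.erase k, swapSum R σ k l =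
      2 * ∑ k, (euler k (alternant (staircase M)) - ((M : R) - 1) • alternant (staircase M)) *
        euler k (cyclePowerSum R M σ) := by
  have hcomm : ∑ k, ∑ l ∈ Finset.univ.erase k,
      X k * vandermondeQuotient R l k * euler l (cyclePowerSum R M σ) =
      ∑ k : Fin M, ∑ l ∈ Finset.univ.erase k,
        X l * vandermondeQuotient R k l * euler k (cyclePowerSum R M σ) :=
    Finset.sum_comm' (by simp [eq_comm])
  simp only [← sum_X_mul_vandermondeQuotient, Finset.sum_mul]
  rw [two_mul]
  nth_rewrite 2 [← hcomm]
  rw [← Finset.sum_add_distrib, Finset.mul_sum]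
  refine Finset.sum_congr rfl fun k _ => ?_
  rw [← Finset.sum_add_distrib, Finset.mul_sum]
  exact Finset.sum_congr rfl fun l hl =>
    alternant_mul_swapSum σ (Finset.ne_of_mem_erase hl).symm

theorem alternant_mul_sum_cyclePowerSum_swap_mul (σ : Equiv.Perm ι) :
    alternant (staircase M) *
        ∑ p ∈ (Finset.univ : Finset ι).offDiag, cyclePowerSum R M (Equiv.swap p.1 p.2 * σ) =
      ∑ k, euler k (euler k (alternant (staircase M) * cyclePowerSum R M σ)) -
        (∑ k, (staircase M k : R) ^ 2 + (2 * M - 1) * Fintype.card ι) •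
          (alternant (staircase M) * cyclePowerSum R M σ) := by
  have hsplit : ∑ k, ∑ l, swapSum R σ k l =
      ∑ k, (euler k (euler k (cyclePowerSum R M σ)) - euler k (cyclePowerSum R M σ)) +
        ∑ k, ∑ l ∈ Finset.univ.erase k, swapSum R σ k l := by
    rw [← Finset.sum_add_distrib]
    exact Finset.sum_congr rfl fun k _ => by
      rw [← swapSum_self, Finset.add_sum_erase _ _ (Finset.mem_univ k)]
  have hleibniz : ∀ k, euler k (euler k (alternant (staircase M) * cyclePowerSum R M σ)) =
      euler k (euler k (alternant (staircase M))) * cyclePowerSum R M σ +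
        2 * (euler k (alternant (staircase M)) * euler k (cyclePowerSum R M σ)) +
        alternant (staircase M) * euler k (euler k (cyclePowerSum R M σ)) := fun k => by
    simp only [Derivation.leibniz, map_add, smul_eq_mul]
    ring
  rw [← sum_swapSum, hsplit, mul_add, alternant_mul_sum_swapSum_erase]
  simp only [hleibniz, Finset.sum_add_distrib, Finset.sum_sub_distrib, sub_mul, ← Finset.mul_sum,
    ← Finset.sum_mul, sum_euler_euler_alternant, smul_mul_assoc, ← Finset.smul_sum,
    sum_euler (isHomogeneous_cyclePowerSum σ)]
  simp only [smul_eq_C_mul, map_add, map_sub, map_mul, map_one, map_ofNat]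
  ring

end ClassSum

section DiagonalIndex

lemma choose_colLen_two {Y : YoungDiagram} {M : ℕ} (h : Y.card ≤ M) (j : ℕ) :
    (Y.colLen j).choose 2 = ∑ i ∈ Finset.range M, if (i, j) ∈ Y then i else 0 := by
  have hfilter : (Finset.range M).filter (fun i => (i, j) ∈ Y) = Finset.range (Y.colLen j) := by
    ext i
    have := colLen_le_card Y j
    simp only [Finset.mem_filter, Finset.mem_range, YoungDiagram.mem_iff_lt_colLen]
    omega
  rw [← Finset.sum_filter, hfilter, Finset.sum_range_id, Nat.choose_two_right]

lemma sum_choose_colLen_two {Y : YoungDiagram} {M : ℕ} (h : Y.card ≤ M) :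
    ∑ j ∈ Finset.range M, (Y.colLen j).choose 2 = ∑ i ∈ Finset.range M, i * Y.rowLen i := by
  simp only [choose_colLen_two h]
  rw [Finset.sum_comm]
  refine Finset.sum_congr rfl fun i _ => ?_
  have hfilter : (Finset.range M).filter (fun j => (i, j) ∈ Y) = Finset.range (Y.rowLen i) := by
    ext j
    have := rowLen_le_card Y i
    simp only [Finset.mem_filter, Finset.mem_range, YoungDiagram.mem_iff_lt_rowLen]
    omega
  rw [← Finset.sum_filter, hfilter, Finset.sum_const, Finset.card_range, smul_eq_mul, mul_comm]

lemma finsum_choose_two {f : ℕ → ℕ} {M : ℕ} (hf : ∀ i, M ≤ i → f i = 0) :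
    ∑ᶠ i, ((f i).choose 2 : ℤ) = ∑ i ∈ Finset.range M, ((f i).choose 2 : ℤ) := by
  refine finsum_eq_sum_of_support_subset _ fun i hi => ?_
  rw [Finset.coe_range, Set.mem_Iio]
  by_contra hM
  exact hi (by simp [hf i (not_lt.mp hM)])

lemma two_mul_diag {Y : YoungDiagram} {M : ℕ} (h : Y.card ≤ M) :
    2 * diag Y = ∑ i ∈ Finset.range M, (Y.rowLen i : ℤ) * (Y.rowLen i - 1 - 2 * i) := by
  have hcol : ∑ j ∈ Finset.range M, ((Y.colLen j).choose 2 : ℤ) =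
      ∑ i ∈ Finset.range M, (i * Y.rowLen i : ℤ) := mod_cast sum_choose_colLen_two h
  have hchoose : ∀ k : ℕ, 2 * (k.choose 2 : ℤ) = k * (k - 1) := fun k => by
    induction k with
    | zero => simp
    | succ k ih =>
      rw [Nat.choose_succ_succ' k 1, Nat.choose_one_right]
      push_cast
      linarith
  rw [diag, finsum_choose_two fun _ => rowLen_eq_zero h,
    finsum_choose_two fun _ => colLen_eq_zero h, hcol, ← Finset.sum_sub_distrib, Finset.mul_sum]
  refine Finset.sum_congr rfl fun i _ => ?_
  rw [mul_sub, hchoose]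
  ring

end DiagonalIndex

section ClassSumEigenvalue

variable {ι : Type*} [Fintype ι] [DecidableEq ι] {R : Type*} [CommRing R] {M : ℕ}

theorem sum_frobeniusChar_swap_mul (h : Fintype.card ι ≤ M) {lam : YoungDiagram}
    (hlam : lam.card = Fintype.card ι) (σ : Equiv.Perm ι) :
    ∑ p ∈ (Finset.univ : Finset ι).offDiag, frobeniusChar R M lam (Equiv.swap p.1 p.2 * σ) =
      2 * (diag lam : R) * frobeniusChar R M lam σ := by
  have hcard : (Fintype.card ι : R) = ∑ k : Fin M, (lam.rowLen k : R) := by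
    rw [← hlam, ← sum_rowLen (hlam.trans_le h), Finset.sum_range, Nat.cast_sum]
  have hstair : ∀ k : Fin M, (staircase M k : R) = M - 1 - k := fun k => by
    rw [staircase, Fin.val_rev, Nat.cast_sub k.2]
    push_cast
    ring
  have hdiag : 2 * (diag lam : R) = ∑ k : Fin M, (shifted M lam k : R) ^ 2 -
      (∑ k, (staircase M k : R) ^ 2 + (2 * M - 1) * Fintype.card ι) := by
    have := congrArg (Int.cast : ℤ → R) (two_mul_diag (hlam.trans_le h))
    rw [Finset.sum_range] at this
    push_cast at this
    rw [this, hcard, Finset.mul_sum, ← Finset.sum_add_distrib, ← Finset.sum_sub_distrib]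
    refine Finset.sum_congr rfl fun k _ => ?_
    rw [shifted, Nat.cast_add, hstair]
    ring
  have hcoeff := congrArg (coeffAt (shifted M lam))
    (alternant_mul_sum_cyclePowerSum_swap_mul (R := R) (M := M) σ)
  simp only [Finset.mul_sum, map_sum, map_sub, map_smul, smul_eq_mul, coeffAt_euler] at hcoeff
  simp only [frobeniusChar]
  rw [hcoeff, hdiag, sub_mul _ _ (coeffAt _ _), Finset.sum_mul]
  congr 1
  exact Finset.sum_congr rfl fun k _ => by rw [sq, mul_assoc]

end ClassSumEigenvalue

section Orthogonality

open MvPolynomial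

variable {ι : Type*} [Fintype ι] {R : Type*} [CommRing R] {M : ℕ}

lemma prod_xPow {κ : Type*} [Fintype κ] (p : κ → ι → ℕ) :
    ∏ k, (xPow (p k) : MvPolynomial ι R) = xPow (∑ k, p k) := by
  simp only [xPow_eq_prod, Finset.sum_apply]
  rw [Finset.prod_comm]
  exact Finset.prod_congr rfl fun i _ => Finset.prod_pow_eq_pow_sum _ _ _

lemma letterCount_eq_one_iff (h : Fintype.card ι = M) {w : ι → Fin M} :
    letterCount w = 1 ↔ Function.Injective w := by
  constructor
  · intro hw i j hij
    have hone : letterCount w (w i) ≤ 1 := (congrFun hw (w i)).le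
    exact Finset.card_le_one.mp hone i (by simp) j (by simp [hij])
  · intro hw
    have hbij : Function.Bijective w :=
      (Fintype.bijective_iff_injective_and_card w).mpr ⟨hw, by simp [h]⟩
    funext k
    obtain ⟨i, rfl⟩ := hbij.surjective k
    rw [letterCount, Pi.one_apply, Finset.card_eq_one]
    exact ⟨i, by ext j; simp [hw.eq_iff]⟩

variable [DecidableEq ι]

lemma hsymm_eq_sum_xPow (r : ℕ) :
    hsymm ι R r = ∑ β ∈ Finset.univ.piAntidiag r, xPow β := by
  refine ext_coeffAt fun β => ?_
  simp only [coeffAt_hsymm, map_sum, coeffAt_xPow, Finset.sum_ite_eq', Finset.mem_piAntidiag,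
    Finset.mem_univ, implies_true, and_true]

lemma exists_eq_single_of_sum_eq_one {κ : Type*} [Fintype κ] [DecidableEq κ] {f : κ → ℕ}
    (h : ∑ k, f k = 1) : ∃ k, f = Pi.single k 1 := by
  have hf := (Finsupp.sum_eq_one_iff (Finsupp.equivFunOnFinite.symm f)).mp
    (by rwa [Finsupp.sum_fintype _ _ fun _ => rfl])
  obtain ⟨k, hk⟩ := hf
  refine ⟨k, ?_⟩
  rw [← Finsupp.single_eq_pi_single, ← hk]
  rfl

lemma coeffAt_one_prod_hsymm (γ : Fin M → ℕ) :
    coeffAt 1 (∏ k, hsymm ι R (γ k)) =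
      ((Finset.univ.filter fun w : ι → Fin M => letterCount w = γ).card : R) := by
  simp only [hsymm_eq_sum_xPow]
  rw [Finset.prod_univ_sum, map_sum]
  simp only [prod_xPow, coeffAt_xPow]
  rw [Finset.sum_boole]
  congr 1
  refine (Finset.card_bij (fun w _ k i => (Pi.single (w i) 1 : Fin M → ℕ) k) ?_ ?_ ?_).symm
  · intro w hw
    rw [Finset.mem_filter] at hw
    simp only [Finset.mem_filter, Fintype.mem_piFinset, Finset.mem_piAntidiag, Finset.mem_univ,
      implies_true, and_true]
    refine ⟨fun k => ?_, funext fun i => ?_⟩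
    · simp only [← hw.2, letterCount, Finset.card_filter, Pi.single_apply, eq_comm]
    · simp [Finset.sum_apply, Pi.single_apply]
  · intro w _ w' _ h
    funext i
    have hi : (Pi.single (w i) 1 : Fin M → ℕ) = Pi.single (w' i) 1 :=
      funext fun k => congrFun (congrFun h k) i
    simpa [Pi.single_apply] using congrFun hi (w i)
  · intro p hp
    simp only [Finset.mem_filter, Fintype.mem_piFinset, Finset.mem_piAntidiag, Finset.mem_univ,
      implies_true, and_true] at hp
    choose w hw using fun i => exists_eq_single_of_sum_eq_one (f := fun k => p k i)
      (by simpa using congrFun hp.2 i)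
    refine ⟨w, ?_, funext fun k => funext fun i => (congrFun (hw i) k).symm⟩
    rw [Finset.mem_filter]
    refine ⟨Finset.mem_univ _, funext fun k => ?_⟩
    rw [← hp.1 k, letterCount, Finset.card_filter]
    refine Finset.sum_congr rfl fun i _ => ?_
    rw [congrFun (hw i) k, Pi.single_apply]
    simp only [eq_comm]

lemma coeffAt_hsymm_one_pow (γ : Fin M → ℕ) :
    coeffAt γ (hsymm (Fin M) R 1 ^ Fintype.card ι) =
      ((Finset.univ.filter fun w : ι → Fin M => letterCount w = γ).card : R) := by
  have hall : fixedWords M (1 : Equiv.Perm ι) = Finset.univ := by ext w; simp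
  rw [← cyclePowerSum_one, cyclePowerSum, hall, map_sum]
  simp only [wordMonomial_eq_xPow, coeffAt_xPow]
  exact Finset.sum_boole _ _

lemma coeffAt_one_schurPoly (lam : YoungDiagram) :
    coeffAt 1 (schurPoly R M lam) = frobeniusChar R M lam (1 : Equiv.Perm (Fin M)) := by
  classical
  rw [frobeniusChar, cyclePowerSum_one, alternant, Finset.sum_mul, map_sum, schurPoly_eq_sum,
    map_sum]
  refine Fintype.sum_equiv (Equiv.inv _) _ _ fun π => ?_
  rw [map_smul, smul_mul_assoc, map_smul, Equiv.inv_apply, signIn_inv, coeffAt_xPow_mul]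
  congr 1
  split_ifs with h
  · rw [coeffAt_hsymm_one_pow, ← coeffAt_one_prod_hsymm,
      ← Equiv.prod_comp π fun k => hsymm (Fin M) R ((shifted M lam - staircase M ∘ ⇑π⁻¹) k)]
    congr 1
    refine Finset.prod_congr rfl fun k _ => ?_
    have hk : staircase M k ≤ shifted M lam (π k) := by simpa using h (π k)
    rw [jacobiTrudiMatrix, if_pos hk]
    simp
  · simp only [Pi.le_def, not_forall] at h
    obtain ⟨k, hk⟩ := h
    rw [Finset.prod_eq_zero (Finset.mem_univ (π⁻¹ k)), map_zero]
    rw [jacobiTrudiMatrix, if_neg]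
    simpa using hk

lemma coeffAt_one_cyclePowerSum (h : Fintype.card ι = M) (σ : Equiv.Perm ι) :
    coeffAt 1 (cyclePowerSum R M σ) = if σ = 1 then (M.factorial : R) else 0 := by
  classical
  rw [cyclePowerSum, map_sum]
  simp only [wordMonomial_eq_xPow, coeffAt_xPow, letterCount_eq_one_iff h]
  split_ifs with hσ
  · have hall : fixedWords M σ = Finset.univ := by ext w; simp [hσ]
    rw [hall, Finset.sum_boole, ← Fintype.card_subtype,
      Fintype.card_congr (Equiv.subtypeInjectiveEquivEmbedding ι (Fin M)),
      Fintype.card_embedding_eq, Fintype.card_fin, h, Nat.descFactorial_self]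
  · refine Finset.sum_eq_zero fun w hw => if_neg fun hinj => hσ ?_
    ext i
    exact hinj (mem_fixedWords.mp hw i)

theorem sum_fSYT_mul_frobeniusChar [NoZeroDivisors R] [CharZero R] (h : Fintype.card ι = M)
    (σ : Equiv.Perm ι) :
    ∑ lam ∈ partitions M, (fSYT lam : R) * frobeniusChar R M lam σ =
      if σ = 1 then (M.factorial : R) else 0 := by
  rw [← coeffAt_one_cyclePowerSum h, cyclePowerSum_eq_sum_schurPoly h.le, map_sum, h]
  refine Finset.sum_congr rfl fun lam hlam => ?_
  rw [mem_partitions] at hlam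
  rw [map_smul, smul_eq_mul, coeffAt_one_schurPoly, frobeniusChar_one (by simp) (by simpa),
    mul_comm]

end Orthogonality

section TrivialCharacter

open MvPolynomial

lemma rowLen_eq_zero_of_rowLen_zero_eq_card {Y : YoungDiagram} (h : Y.rowLen 0 = Y.card) {i : ℕ}
    (hi : i ≠ 0) : Y.rowLen i = 0 := by
  have hsum := sum_rowLen (Y := Y) (M := Y.card + i + 1) (by omega)
  have hle := Finset.add_le_sum (f := Y.rowLen) (s := Finset.range (Y.card + i + 1)) (i := 0)
    (j := i) (fun _ _ => Nat.zero_le _) (by simp) (by simp) hi.symm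
  omega

variable {ι : Type*} [Fintype ι] {R : Type*} [CommRing R] {M : ℕ}

lemma letterCount_eq_single_iff {k : Fin M} {w : ι → Fin M} :
    letterCount w = Pi.single k (Fintype.card ι) ↔ w = Function.const ι k := by
  constructor
  · intro hw
    have hk : letterCount w k = Fintype.card ι := by rw [hw, Pi.single_eq_same]
    have hall := Finset.filter_eq_self.mp ((Finset.card_eq_iff_eq_univ _).mp hk)
    exact funext fun i => hall i (Finset.mem_univ i)
  · rintro rfl
    funext l
    by_cases hl : l = k
    · subst hl
      simp [letterCount]
    · simp [letterCount, hl, Ne.symm hl]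

variable [DecidableEq ι]

lemma coeffAt_single_cyclePowerSum (k : Fin M) (σ : Equiv.Perm ι) :
    coeffAt (Pi.single k (Fintype.card ι)) (cyclePowerSum R M σ) = 1 := by
  rw [cyclePowerSum, map_sum]
  simp only [wordMonomial_eq_xPow, coeffAt_xPow, letterCount_eq_single_iff]
  rw [Finset.sum_ite_eq', if_pos (by simp)]

variable [NeZero M]

lemma eq_one_of_staircase_comp_le {n : ℕ} {π : Equiv.Perm (Fin M)}
    (h : staircase M ∘ π ≤ Pi.single 0 n + staircase M) : π = 1 := by
  have hle : ∀ k ∈ (Finset.univ : Finset (Fin M)), (k : ℕ) ≤ π k := fun k _ => by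
    by_cases hk : k = 0
    · simp [hk]
    · have hπk := h k
      rw [Function.comp_apply, Pi.add_apply, Pi.single_eq_of_ne hk, zero_add] at hπk
      exact Fin.rev_le_rev.mp hπk
  have heq := (Finset.sum_eq_sum_iff_of_le hle).mp (Equiv.sum_comp π fun k => (k : ℕ)).symm
  ext k
  exact (heq k (Finset.mem_univ k)).symm

theorem frobeniusChar_eq_one {lam : YoungDiagram} (hlam : lam.card = Fintype.card ι)
    (hrow : lam.rowLen 0 = Fintype.card ι) (σ : Equiv.Perm ι) : frobeniusChar R M lam σ = 1 := by
  classical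
  have hshift : shifted M lam = Pi.single 0 (Fintype.card ι) + staircase M := by
    funext k
    rw [shifted, Pi.add_apply]
    by_cases hk : k = 0
    · simp [hk, hrow]
    · rw [Pi.single_eq_of_ne hk, rowLen_eq_zero_of_rowLen_zero_eq_card (hrow.trans hlam.symm)]
      exact Fin.val_ne_zero_iff.mpr hk
  rw [frobeniusChar, hshift, alternant, Finset.sum_mul, map_sum, Finset.sum_eq_single 1]
  · rw [smul_mul_assoc, map_smul, coeffAt_xPow_mul, if_pos]
    · simp [coeffAt_single_cyclePowerSum]
    · exact le_add_self
  · intro π _ hπ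
    rw [smul_mul_assoc, map_smul, coeffAt_xPow_mul, if_neg (hπ ∘ eq_one_of_staircase_comp_le),
      smul_zero]
  · simp

end TrivialCharacter

/-! ### The biased transposition walk -/

section TranspositionSums

variable {ι R : Type*} [Fintype ι] [DecidableEq ι] [CommRing R]

/-- The sum of a function over the left translates of a permutation by transpositions, each
transposition `(i j)` being counted twice, with the weights `q i j` and `q j i`. -/
def weightedClassSum (q : ι → ι → R) (F : Equiv.Perm ι → R) (g : Equiv.Perm ι) : R :=
  ∑ p ∈ (Finset.univ : Finset ι).offDiag, q p.1 p.2 * F (Equiv.swap p.1 p.2 * g)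

/-- The action on functions of twice the class sum of the transpositions. -/
def classSum (F : Equiv.Perm ι → R) (g : Equiv.Perm ι) : R :=
  ∑ p ∈ (Finset.univ : Finset ι).offDiag, F (Equiv.swap p.1 p.2 * g)

lemma classSum_eq_sum_mul_swap (F : Equiv.Perm ι → R) (g : Equiv.Perm ι) :
    classSum F g = ∑ p ∈ (Finset.univ : Finset ι).offDiag, F (g * Equiv.swap p.1 p.2) := by
  refine (Finset.sum_equiv (g.prodCongr g) (fun p => ?_) fun p _ => ?_).symm
  · simp
  · rw [Equiv.mul_swap_eq_swap_mul]
    rfl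

theorem classSum_mulVec {P : Matrix (Equiv.Perm ι) (Equiv.Perm ι) R}
    (hP : ∀ x y g, P (x * g) (y * g) = P x y) (F : Equiv.Perm ι → R) :
    classSum (P.mulVec F) = P.mulVec (classSum F) := by
  funext x
  calc classSum (P.mulVec F) x
      = ∑ p ∈ (Finset.univ : Finset ι).offDiag, ∑ y,
          P x y * F (y * Equiv.swap p.1 p.2) := by
        rw [classSum_eq_sum_mul_swap]
        refine Finset.sum_congr rfl fun p _ => ?_
        rw [Matrix.mulVec, dotProduct, ← Equiv.sum_comp (Equiv.mulRight (Equiv.swap p.1 p.2))]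
        simp only [Equiv.coe_mulRight, hP]
    _ = P.mulVec (classSum F) x := by
        rw [Finset.sum_comm]
        simp only [Matrix.mulVec, dotProduct, classSum_eq_sum_mul_swap, Finset.mul_sum]

theorem classSum_frobeniusChar {M : ℕ} (h : Fintype.card ι ≤ M) {lam : YoungDiagram}
    (hlam : lam.card = Fintype.card ι) :
    classSum (ι := ι) (frobeniusChar R M lam) = (2 * (diag lam : R)) • frobeniusChar R M lam :=
  funext fun σ => sum_frobeniusChar_swap_mul h hlam σ

end TranspositionSums

section BlockPermutations

variable {ι R : Type*} {p : ι → Prop}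

lemma swap_mul_subtypeCongr_left [DecidableEq ι] [DecidablePred p] (σ : Equiv.Perm {i // p i})
    (τ : Equiv.Perm {i // ¬ p i}) (i j : {i // p i}) :
    Equiv.swap (i : ι) j * Equiv.Perm.subtypeCongr σ τ =
      Equiv.Perm.subtypeCongr (Equiv.swap i j * σ) τ := by
  ext x
  rw [Equiv.Perm.mul_apply]
  by_cases hx : p x
  · rw [Equiv.Perm.subtypeCongr.left_apply _ _ hx, Equiv.Perm.subtypeCongr.left_apply _ _ hx,
      Subtype.val_injective.swap_apply, Equiv.Perm.mul_apply]
  · rw [Equiv.Perm.subtypeCongr.right_apply _ _ hx, Equiv.Perm.subtypeCongr.right_apply _ _ hx,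
      Equiv.swap_apply_of_ne_of_ne]
    · exact fun h => (τ ⟨x, hx⟩).2 (h ▸ i.2)
    · exact fun h => (τ ⟨x, hx⟩).2 (h ▸ j.2)

lemma swap_mul_subtypeCongr_right [DecidableEq ι] [DecidablePred p] (σ : Equiv.Perm {i // p i})
    (τ : Equiv.Perm {i // ¬ p i}) (i j : {i // ¬ p i}) :
    Equiv.swap (i : ι) j * Equiv.Perm.subtypeCongr σ τ =
      Equiv.Perm.subtypeCongr σ (Equiv.swap i j * τ) := by
  ext x
  rw [Equiv.Perm.mul_apply]
  by_cases hx : p x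
  · rw [Equiv.Perm.subtypeCongr.left_apply _ _ hx, Equiv.Perm.subtypeCongr.left_apply _ _ hx,
      Equiv.swap_apply_of_ne_of_ne]
    · exact fun h => i.2 (h ▸ (σ ⟨x, hx⟩).2)
    · exact fun h => j.2 (h ▸ (σ ⟨x, hx⟩).2)
  · rw [Equiv.Perm.subtypeCongr.right_apply _ _ hx, Equiv.Perm.subtypeCongr.right_apply _ _ hx,
      Subtype.val_injective.swap_apply, Equiv.Perm.mul_apply]

variable [Fintype ι] [DecidablePred p] [CommRing R]

lemma sum_offDiag_subtype (f : ι → ι → R) [Fintype {i // p i}] :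
    ∑ x ∈ (Finset.univ : Finset {i // p i}).offDiag, f x.1 x.2 =
      ∑ x ∈ (Finset.univ : Finset ι).offDiag, if p x.1 ∧ p x.2 then f x.1 x.2 else 0 := by
  rw [← Finset.sum_filter]
  refine Finset.sum_nbij (fun x => (x.1, x.2)) ?_ ?_ ?_ fun _ _ => rfl
  · simp +contextual [Subtype.ext_iff]
  · simp +contextual [Set.InjOn, Subtype.ext_iff]
  · rintro ⟨i, j⟩ hij
    simp_all [Subtype.ext_iff]

variable [DecidableEq ι]

lemma classSum_subtypeCongr_left [Fintype {i // p i}] (F : Equiv.Perm ι → R)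
    (σ : Equiv.Perm {i // p i}) (τ : Equiv.Perm {i // ¬ p i}) :
    classSum (fun σ' => F (Equiv.Perm.subtypeCongr σ' τ)) σ =
      ∑ x ∈ (Finset.univ : Finset ι).offDiag, if p x.1 ∧ p x.2 then
        F (Equiv.swap x.1 x.2 * Equiv.Perm.subtypeCongr σ τ) else 0 := by
  simp only [classSum, ← swap_mul_subtypeCongr_left]
  exact sum_offDiag_subtype fun i j => F (Equiv.swap i j * Equiv.Perm.subtypeCongr σ τ)

lemma classSum_subtypeCongr_right [Fintype {i // ¬ p i}] (F : Equiv.Perm ι → R)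
    (σ : Equiv.Perm {i // p i}) (τ : Equiv.Perm {i // ¬ p i}) :
    classSum (fun τ' => F (Equiv.Perm.subtypeCongr σ τ')) τ =
      ∑ x ∈ (Finset.univ : Finset ι).offDiag, if ¬ p x.1 ∧ ¬ p x.2 then
        F (Equiv.swap x.1 x.2 * Equiv.Perm.subtypeCongr σ τ) else 0 := by
  simp only [classSum, ← swap_mul_subtypeCongr_right]
  exact sum_offDiag_subtype fun i j => F (Equiv.swap i j * Equiv.Perm.subtypeCongr σ τ)

end BlockPermutations

section TransitionMatrix

lemma swap_eq_swap_iff {ι : Type*} [DecidableEq ι] {i j k l : ι} (hij : i ≠ j) :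
    Equiv.swap i j = Equiv.swap k l ↔ (k = i ∧ l = j) ∨ (k = j ∧ l = i) := by
  constructor
  · intro h
    have hi : Equiv.swap k l i = j := by rw [← h, Equiv.swap_apply_left]
    have hj : Equiv.swap k l j = i := by rw [← h, Equiv.swap_apply_right]
    rw [Equiv.swap_apply_def] at hi hj
    split_ifs at hi hj <;> grind
  · rintro (⟨rfl, rfl⟩ | ⟨rfl, rfl⟩)
    · rfl
    · exact Equiv.swap_comm _ _

lemma exists_and_swap_eq_swap_iff {ι : Type*} [DecidableEq ι] {i j : ι} (hij : i ≠ j)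
    (Q : ι → ι → Prop) : (∃ k l, Q k l ∧ Equiv.swap i j = Equiv.swap k l) ↔ Q i j ∨ Q j i := by
  simp only [swap_eq_swap_iff hij]
  grind

variable {N : ℕ}

/-- The bias of a position: `a` on `A` and `b` on its complement. -/
def siteWeight (a b : ℝ) (A : Finset (Fin N)) (i : Fin N) : ℝ :=
  if i ∈ A then a else b

/-- The probability of picking the ordered pair of positions `(i, j)`. A transposition comes from
two ordered pairs, which accounts for the factors `2` in `transMat`. -/
def pickProb (a b : ℝ) (A : Finset (Fin N)) (i j : Fin N) : ℝ :=
  siteWeight a b A i * siteWeight a b A j / (N : ℝ) ^ 2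

/-- The probability that the shuffle does not move. -/
def holdProb (a b : ℝ) (A : Finset (Fin N)) : ℝ :=
  (a ^ 2 * A.card + b ^ 2 * Aᶜ.card) / (N : ℝ) ^ 2

variable (a b : ℝ) (A : Finset (Fin N))

lemma transMat_self (x : Equiv.Perm (Fin N)) : transMat a b A x x = holdProb a b A :=
  if_pos rfl

lemma transMat_swap_mul {i j : Fin N} (hij : i ≠ j) (x : Equiv.Perm (Fin N)) :
    transMat a b A x (Equiv.swap i j * x) = 2 * pickProb a b A i j := by
  have hA := exists_and_swap_eq_swap_iff hij fun k l => k ≠ l ∧ k ∈ A ∧ l ∈ A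
  have hB := exists_and_swap_eq_swap_iff hij fun k l => k ≠ l ∧ k ∉ A ∧ l ∉ A
  have hAB := exists_and_swap_eq_swap_iff hij fun k l => k ∈ A ∧ l ∉ A
  simp only [and_assoc] at hA hB hAB
  simp only [transMat, mul_inv_cancel_right, hA, hB, hAB, Equiv.swap_mul_eq_iff, pickProb,
    siteWeight]
  by_cases hi : i ∈ A <;> by_cases hj : j ∈ A <;> simp [hij, hij.symm, hi, hj] <;> ring

lemma transMat_of_forall_ne {x y : Equiv.Perm (Fin N)} (hxy : y ≠ x)
    (h : ∀ i j, i ≠ j → y ≠ Equiv.swap i j * x) : transMat a b A x y = 0 := by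
  have hswap : ∀ i j, i ≠ j → y * x⁻¹ ≠ Equiv.swap i j := fun i j hij hy =>
    h i j hij (mul_inv_eq_iff_eq_mul.mp hy)
  rw [transMat, if_neg hxy, if_neg, if_neg, if_neg]
  · rintro ⟨i, j, hi, hj, hy⟩
    exact hswap i j (ne_of_mem_of_not_mem hi hj) hy
  · rintro ⟨i, j, hij, -, -, hy⟩
    exact hswap i j hij hy
  · rintro ⟨i, j, hij, -, -, hy⟩
    exact hswap i j hij hy

lemma sum_pickProb_of_swap_mul_eq {i j : Fin N} (hij : i ≠ j) (x : Equiv.Perm (Fin N)) :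
    (∑ p ∈ (Finset.univ : Finset (Fin N)).offDiag,
      if Equiv.swap i j * x = Equiv.swap p.1 p.2 * x then pickProb a b A p.1 p.2 else 0) =
        2 * pickProb a b A i j := by
  have hpairs : (Finset.univ : Finset (Fin N)).offDiag.filter
      (fun p => Equiv.swap i j * x = Equiv.swap p.1 p.2 * x) = {(i, j), (j, i)} := by
    ext ⟨k, l⟩
    simp only [mul_left_inj, swap_eq_swap_iff hij, Finset.mem_filter, Finset.mem_offDiag,
      Finset.mem_univ, Finset.mem_insert, Finset.mem_singleton, Prod.mk.injEq]
    grind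
  rw [← Finset.sum_filter, hpairs, Finset.sum_pair (by simp [hij]), pickProb, pickProb]
  ring

theorem transMat_eq (x y : Equiv.Perm (Fin N)) :
    transMat a b A x y = (if y = x then holdProb a b A else 0) +
      ∑ p ∈ (Finset.univ : Finset (Fin N)).offDiag,
        if y = Equiv.swap p.1 p.2 * x then pickProb a b A p.1 p.2 else 0 := by
  have hne : ∀ p ∈ (Finset.univ : Finset (Fin N)).offDiag, x ≠ Equiv.swap p.1 p.2 * x :=
    fun p hp h => (Finset.mem_offDiag.mp hp).2.2 (Equiv.swap_mul_eq_iff.mp h.symm)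
  rcases eq_or_ne y x with rfl | hyx
  · rw [transMat_self, if_pos rfl, Finset.sum_eq_zero fun p hp => if_neg (hne p hp), add_zero]
  rw [if_neg hyx, zero_add]
  by_cases hswap : ∃ i j, i ≠ j ∧ y = Equiv.swap i j * x
  · obtain ⟨i, j, hij, rfl⟩ := hswap
    rw [transMat_swap_mul a b A hij, sum_pickProb_of_swap_mul_eq a b A hij]
  · push Not at hswap
    rw [transMat_of_forall_ne a b A hyx hswap, Finset.sum_eq_zero]
    exact fun p hp => if_neg (hswap p.1 p.2 (Finset.mem_offDiag.mp hp).2.2)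

theorem transMat_mulVec (F : Equiv.Perm (Fin N) → ℝ) :
    (transMat a b A).mulVec F = holdProb a b A • F + weightedClassSum (pickProb a b A) F := by
  funext x
  simp only [Matrix.mulVec, dotProduct, transMat_eq, add_mul, Finset.sum_add_distrib,
    Finset.sum_mul, ite_mul, zero_mul, Finset.sum_ite_eq', Finset.mem_univ, if_true]
  rw [Finset.sum_comm]
  simp [weightedClassSum]

theorem transMat_transpose : (transMat a b A).transpose = transMat a b A := by
  ext x y
  have hswap : ∀ i j, x = Equiv.swap i j * y ↔ y = Equiv.swap i j * x := fun i j => by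
    constructor <;> (rintro rfl; simp)
  simp only [Matrix.transpose_apply, transMat_eq, hswap, eq_comm]

lemma transMat_mul_right (x y g : Equiv.Perm (Fin N)) :
    transMat a b A (x * g) (y * g) = transMat a b A x y := by
  simp only [transMat_eq, ← mul_assoc, mul_left_inj]

lemma transMat_pow_mul_right (m : ℕ) (x y g : Equiv.Perm (Fin N)) :
    (transMat a b A ^ m) (x * g) (y * g) = (transMat a b A ^ m) x y := by
  induction m generalizing x y with
  | zero => simp [Matrix.one_apply]
  | succ m ih =>
    rw [pow_succ, Matrix.mul_apply, Matrix.mul_apply, ← Equiv.sum_comp (Equiv.mulRight g)]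
    simp only [Equiv.coe_mulRight, ih, transMat_mul_right]

theorem classSum_transMat_pow_mulVec (m : ℕ) {lam : YoungDiagram} (hlam : lam.card = N) :
    classSum ((transMat a b A ^ m).mulVec (frobeniusChar ℝ N lam)) =
      (2 * (diag lam : ℝ)) • (transMat a b A ^ m).mulVec (frobeniusChar ℝ N lam) := by
  rw [classSum_mulVec (transMat_pow_mul_right a b A m), classSum_frobeniusChar (by simp)
    (by simp [hlam]), Matrix.mulVec_smul]

end TransitionMatrix

section Spectrum

variable {N : ℕ} (a b : ℝ) (A : Finset (Fin N))

/-- The eigenvalue `Eig^λ_{μ,ν}` for blocks `A` and `Aᶜ` of arbitrary sizes, where `λ ⊢ N`,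
`μ ⊢ |A|` and `ν ⊢ |Aᶜ|`. It agrees with `eig` when both blocks have the same size. -/
def blockEig (lam mu nu : YoungDiagram) : ℝ :=
  (a ^ 2 * A.card + b ^ 2 * Aᶜ.card + 2 * (a ^ 2 - a * b) * (diag mu : ℝ) +
    2 * (b ^ 2 - a * b) * (diag nu : ℝ) + 2 * (a * b) * (diag lam : ℝ)) / (N : ℝ) ^ 2

lemma blockEig_eq_eig {n : ℕ} (hn : n ≠ 0) {A : Finset (Fin (2 * n))} (hA : A.card = n)
    (hAc : Aᶜ.card = n) : blockEig a b A = eig a b n := by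
  funext lam mu nu
  rw [blockEig, eig, hA, hAc]
  push_cast
  field_simp
  ring

lemma weightedClassSum_pickProb_subtypeCongr (F : Equiv.Perm (Fin N) → ℝ)
    (σ : Equiv.Perm {i // i ∈ A}) (τ : Equiv.Perm {i // ¬ i ∈ A}) :
    weightedClassSum (pickProb a b A) F (Equiv.Perm.subtypeCongr σ τ) =
      (a * b * classSum F (Equiv.Perm.subtypeCongr σ τ) +
        (a ^ 2 - a * b) * classSum (fun σ' => F (Equiv.Perm.subtypeCongr σ' τ)) σ +
        (b ^ 2 - a * b) * classSum (fun τ' => F (Equiv.Perm.subtypeCongr σ τ')) τ) /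
          (N : ℝ) ^ 2 := by
  rw [classSum_subtypeCongr_left (p := (· ∈ A)), classSum_subtypeCongr_right (p := (· ∈ A)),
    classSum, weightedClassSum, Finset.mul_sum, Finset.mul_sum, Finset.mul_sum,
    ← Finset.sum_add_distrib, ← Finset.sum_add_distrib, Finset.sum_div]
  refine Finset.sum_congr rfl fun p _ => ?_
  by_cases hi : p.1 ∈ A <;> by_cases hj : p.2 ∈ A <;> simp [pickProb, siteWeight, hi, hj] <;> ring

theorem transMat_pow_mulVec_frobeniusChar_subtypeCongr {lam : YoungDiagram} (hlam : lam.card = N)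
    (m : ℕ) (σ : Equiv.Perm {i // i ∈ A}) (τ : Equiv.Perm {i // ¬ i ∈ A}) :
    (transMat a b A ^ m).mulVec (frobeniusChar ℝ N lam) (Equiv.Perm.subtypeCongr σ τ) =
      ∑ q ∈ partitions A.card ×ˢ partitions Aᶜ.card,
        (lrCoeff lam q.1 q.2 : ℝ) * blockEig a b A lam q.1 q.2 ^ m *
          (frobeniusChar ℝ N q.1 σ * frobeniusChar ℝ N q.2 τ) := by
  have hcard : A.card + Aᶜ.card = N := by simp
  have hA : Fintype.card {i // i ∈ A} = A.card := by simp
  have hAc : Fintype.card {i // ¬ i ∈ A} = Aᶜ.card := by simp [Finset.card_compl]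
  induction m generalizing σ τ with
  | zero =>
    rw [pow_zero, Matrix.one_mulVec, Finset.sum_product,
      frobeniusChar_subtypeCongr (· ∈ A) σ τ hA hAc hcard.le (hlam.trans hcard.symm)]
    simp only [pow_zero, mul_one]
  | succ m ih =>
    set F := (transMat a b A ^ m).mulVec (frobeniusChar ℝ N lam) with hF
    have hclass : classSum F = (2 * (diag lam : ℝ)) • F :=
      classSum_transMat_pow_mulVec a b A m hlam
    have hleft : classSum (fun σ' => F (Equiv.Perm.subtypeCongr σ' τ)) σ =
        ∑ q ∈ partitions A.card ×ˢ partitions Aᶜ.card,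
          (lrCoeff lam q.1 q.2 : ℝ) * blockEig a b A lam q.1 q.2 ^ m *
            (2 * (diag q.1 : ℝ) * frobeniusChar ℝ N q.1 σ * frobeniusChar ℝ N q.2 τ) := by
      simp only [classSum, ih]
      rw [Finset.sum_comm]
      refine Finset.sum_congr rfl fun q hq => ?_
      rw [Finset.mem_product, mem_partitions] at hq
      rw [← Finset.mul_sum, ← Finset.sum_mul, sum_frobeniusChar_swap_mul (by omega) (by omega)]
    have hright : classSum (fun τ' => F (Equiv.Perm.subtypeCongr σ τ')) τ =
        ∑ q ∈ partitions A.card ×ˢ partitions Aᶜ.card,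
          (lrCoeff lam q.1 q.2 : ℝ) * blockEig a b A lam q.1 q.2 ^ m *
            (frobeniusChar ℝ N q.1 σ * (2 * (diag q.2 : ℝ) * frobeniusChar ℝ N q.2 τ)) := by
      simp only [classSum, ih]
      rw [Finset.sum_comm]
      refine Finset.sum_congr rfl fun q hq => ?_
      rw [Finset.mem_product, mem_partitions, mem_partitions] at hq
      rw [← Finset.mul_sum, ← Finset.mul_sum, sum_frobeniusChar_swap_mul (by omega) (by omega)]
    rw [pow_succ', ← Matrix.mulVec_mulVec, ← hF, transMat_mulVec, Pi.add_apply,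
      weightedClassSum_pickProb_subtypeCongr, hclass, hleft, hright, Pi.smul_apply, Pi.smul_apply,
      ih]
    simp only [smul_eq_mul, Finset.mul_sum, Finset.sum_div, ← Finset.sum_add_distrib]
    refine Finset.sum_congr rfl fun q _ => ?_
    rw [pow_succ, blockEig, holdProb]
    ring

theorem transMat_pow_mulVec_frobeniusChar_one {lam : YoungDiagram} (hlam : lam.card = N) (m : ℕ) :
    (transMat a b A ^ m).mulVec (frobeniusChar ℝ N lam) 1 =
      ∑ mu ∈ partitions A.card, ∑ nu ∈ partitions Aᶜ.card,
        (lrCoeff lam mu nu : ℝ) * blockEig a b A lam mu nu ^ m * (fSYT mu * fSYT nu) := by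
  have hcard : A.card + Aᶜ.card = N := by simp
  have h := transMat_pow_mulVec_frobeniusChar_subtypeCongr a b A hlam m 1 1
  rw [show Equiv.Perm.subtypeCongr 1 1 = (1 : Equiv.Perm (Fin N)) from
    Equiv.Perm.subtypeCongr.refl] at h
  rw [h, Finset.sum_product]
  refine Finset.sum_congr rfl fun mu hmu => Finset.sum_congr rfl fun nu hnu => ?_
  rw [mem_partitions] at hmu hnu
  rw [frobeniusChar_one (by simp; omega) (by simpa using hmu),
    frobeniusChar_one (by simp) (by simpa [Finset.card_compl] using hnu)]

end Spectrum

section ReturnProbability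

theorem sum_fSYT_mul_mulVec_frobeniusChar {ι R : Type*} [Fintype ι] [DecidableEq ι] [CommRing R]
    [NoZeroDivisors R] [CharZero R] (P : Matrix (Equiv.Perm ι) (Equiv.Perm ι) R)
    (σ : Equiv.Perm ι) {M : ℕ} (h : Fintype.card ι = M) :
    ∑ lam ∈ partitions M, (fSYT lam : R) * P.mulVec (frobeniusChar R M lam) σ =
      M.factorial * P σ 1 := by
  calc ∑ lam ∈ partitions M, (fSYT lam : R) * P.mulVec (frobeniusChar R M lam) σ
      = ∑ π, P σ π * ∑ lam ∈ partitions M, (fSYT lam : R) * frobeniusChar R M lam π := by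
        simp only [Matrix.mulVec, dotProduct, Finset.mul_sum]
        rw [Finset.sum_comm]
        exact Finset.sum_congr rfl fun π _ => Finset.sum_congr rfl fun lam _ => mul_left_comm _ _ _
    _ = M.factorial * P σ 1 := by
        simp only [sum_fSYT_mul_frobeniusChar h, mul_ite, mul_zero, Finset.sum_ite_eq',
          Finset.mem_univ, if_true]
        exact mul_comm _ _

lemma eq_of_rowLen_zero_eq_card {lam mu : YoungDiagram} (hcard : lam.card = mu.card)
    (hlam : lam.rowLen 0 = lam.card) (hmu : mu.rowLen 0 = mu.card) : lam = mu := by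
  refine ext_rowLen fun i => ?_
  rcases eq_or_ne i 0 with rfl | hi
  · rw [hlam, hmu, hcard]
  · rw [rowLen_eq_zero_of_rowLen_zero_eq_card hlam hi, rowLen_eq_zero_of_rowLen_zero_eq_card hmu hi]

end ReturnProbability

section Stochasticity

variable {N : ℕ} {a b : ℝ} {A : Finset (Fin N)}

lemma sum_ite_mem_const (A : Finset (Fin N)) (u v : ℝ) :
    (∑ i, if i ∈ A then u else v) = u * A.card + v * Aᶜ.card := by
  rw [Finset.sum_ite, Finset.sum_const, Finset.sum_const, Finset.filter_mem_eq_inter,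
    Finset.univ_inter, Finset.filter_notMem_eq_sdiff, ← Finset.compl_eq_univ_sdiff]
  simp only [nsmul_eq_mul, mul_comm]

lemma holdProb_eq_sum (a b : ℝ) (A : Finset (Fin N)) :
    holdProb a b A = ∑ i, pickProb a b A i i := by
  simp only [holdProb, pickProb, siteWeight, ← Finset.sum_div, ← sum_ite_mem_const]
  congr 1
  refine Finset.sum_congr rfl fun i _ => ?_
  split_ifs <;> ring

variable [NeZero N]

lemma sum_pickProb_eq_one (hab : a * A.card + b * Aᶜ.card = N) :
    ∑ i, ∑ j, pickProb a b A i j = 1 := by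
  simp only [pickProb, ← Finset.sum_div, ← Finset.sum_mul_sum, siteWeight, sum_ite_mem_const, hab]
  rw [← sq, div_self (pow_ne_zero 2 (NeZero.ne _))]

theorem transMat_mulVec_one (hab : a * A.card + b * Aᶜ.card = N) :
    (transMat a b A).mulVec 1 = 1 := by
  funext x
  simp only [transMat_mulVec, holdProb_eq_sum, Pi.add_apply, Pi.smul_apply, Pi.one_apply,
    smul_eq_mul, mul_one, weightedClassSum]
  rw [← sum_pickProb_eq_one hab, ← Finset.sum_product', ← Finset.diag_union_offDiag,
    Finset.sum_union (Finset.disjoint_diag_offDiag _), Finset.sum_diag]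

theorem transMat_pow_mulVec_one (hab : a * A.card + b * Aᶜ.card = N) (m : ℕ) :
    (transMat a b A ^ m).mulVec 1 = 1 := by
  induction m with
  | zero => simp
  | succ m ih => rw [pow_succ, ← Matrix.mulVec_mulVec, transMat_mulVec_one hab, ih]

theorem fSYT_mul_transMat_pow_mulVec_of_rowLen_zero_eq (hab : a * A.card + b * Aᶜ.card = N)
    {lam : YoungDiagram} (hlam : lam.card = N) (hrow : lam.rowLen 0 = N) (m : ℕ) :
    (fSYT lam : ℝ) * (transMat a b A ^ m).mulVec (frobeniusChar ℝ N lam) 1 = 1 := by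
  have htriv : frobeniusChar ℝ N lam = fun _ : Equiv.Perm (Fin N) => 1 :=
    funext (frobeniusChar_eq_one (by simp [hlam]) (by simp [hrow]))
  rw [← frobeniusChar_one (ι := Fin N) (M := N) (by simp) (by simp [hlam]), htriv, one_mul]
  exact congrFun (transMat_pow_mulVec_one hab m) 1

theorem factorial_mul_transMat_pow_one_one_sub_one_le
    (hab : a * A.card + b * Aᶜ.card = N) (m : ℕ) :
    N.factorial * (transMat a b A ^ m) 1 1 - 1 ≤
      ∑ lam ∈ partitions N with lam.rowLen 0 ≠ N,
        (fSYT lam : ℝ) * (transMat a b A ^ m).mulVec (frobeniusChar ℝ N lam) 1 := by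
  have htrivial : ∑ lam ∈ partitions N with lam.rowLen 0 = N,
      (fSYT lam : ℝ) * (transMat a b A ^ m).mulVec (frobeniusChar ℝ N lam) 1 ≤ 1 := by
    have hcard : ((partitions N).filter fun lam => lam.rowLen 0 = N).card ≤ 1 :=
      Finset.card_le_one.mpr fun lam hlam mu hmu => by
        rw [Finset.mem_filter, mem_partitions] at hlam hmu
        exact eq_of_rowLen_zero_eq_card (by omega) (by omega) (by omega)
    calc _ = ∑ lam ∈ partitions N with lam.rowLen 0 = N, (1 : ℝ) :=
          Finset.sum_congr rfl fun lam hlam => by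
            rw [Finset.mem_filter, mem_partitions] at hlam
            exact fSYT_mul_transMat_pow_mulVec_of_rowLen_zero_eq hab hlam.1 hlam.2 m
      _ ≤ 1 := by simpa using hcard
  rw [← sum_fSYT_mul_mulVec_frobeniusChar _ _ (Fintype.card_fin N),
    ← Finset.sum_filter_add_sum_filter_not (partitions N) fun lam => lam.rowLen 0 = N]
  linarith

end Stochasticity

/-! ### The total variation bound -/

section TotalVariation

lemma dTV_unif_sq_le {N : ℕ} {p : Equiv.Perm (Fin N) → ℝ} (hp : ∑ y, p y = 1) :
    dTV p (unif N) ^ 2 ≤ (1 / 4) * (N.factorial * ∑ y, p y ^ 2 - 1) := by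
  have hcard : (Finset.univ : Finset (Equiv.Perm (Fin N))).card = N.factorial := by
    rw [Finset.card_univ, Fintype.card_perm, Fintype.card_fin]
  have hexpand : ∑ y, |p y - unif N y| ^ 2 = ∑ y, p y ^ 2 - (N.factorial : ℝ)⁻¹ := by
    simp only [sq_abs, unif, sub_sq, Finset.sum_add_distrib, Finset.sum_sub_distrib,
      ← Finset.sum_mul, ← Finset.mul_sum, hp, Finset.sum_const, hcard, nsmul_eq_mul]
    field_simp
    ring
  have hcauchy := sq_sum_le_card_mul_sum_sq (s := Finset.univ) (f := fun y => |p y - unif N y|)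
  rw [hcard, hexpand, mul_sub, mul_inv_cancel₀ (by positivity)] at hcauchy
  rw [dTV, div_pow]
  linarith

theorem sum_transMat_pow_sq {N : ℕ} (a b : ℝ) (A : Finset (Fin N)) (t : ℕ)
    (x : Equiv.Perm (Fin N)) :
    ∑ y, (transMat a b A ^ t) x y ^ 2 = (transMat a b A ^ (2 * t)) 1 1 := by
  have hsymm : (transMat a b A ^ t).transpose = transMat a b A ^ t := by
    rw [Matrix.transpose_pow, transMat_transpose]
  calc ∑ y, (transMat a b A ^ t) x y ^ 2
      = ∑ y, (transMat a b A ^ t) x y * (transMat a b A ^ t).transpose y x :=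
        Finset.sum_congr rfl fun y _ => sq _
    _ = (transMat a b A ^ (2 * t)) x x := by rw [hsymm, two_mul, pow_add, Matrix.mul_apply]
    _ = (transMat a b A ^ (2 * t)) 1 1 := by
        simpa only [one_mul] using transMat_pow_mul_right a b A (2 * t) 1 1 x

lemma finsum_ite_and_mem {α M : Type*} [DecidableEq α] [AddCommMonoid M] (p : Prop) [Decidable p]
    (s : Finset α) (f : α → M) :
    (∑ᶠ x, if p ∧ x ∈ s then f x else 0) = if p then ∑ x ∈ s, f x else 0 := by
  by_cases hp : p
  · simp only [hp, true_and, if_true, ← finsum_mem_coe_finset, Finset.mem_coe, finsum_eq_if]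
  · simp only [hp, false_and, if_false, finsum_zero]

lemma finsum_ite_eq_sum_partitions {R : Type*} [AddCommMonoid R] (N k l : ℕ)
    (c : YoungDiagram → YoungDiagram → YoungDiagram → R) :
    (∑ᶠ lam : YoungDiagram, ∑ᶠ mu : YoungDiagram, ∑ᶠ nu : YoungDiagram,
      if lam.card = N ∧ lam.rowLen 0 ≠ N ∧ mu.card = k ∧ nu.card = l then c lam mu nu else 0) =
      ∑ lam ∈ partitions N with lam.rowLen 0 ≠ N, ∑ mu ∈ partitions k, ∑ nu ∈ partitions l,
        c lam mu nu := by
  classical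
  have hmem (lam mu nu : YoungDiagram) :
      (lam.card = N ∧ lam.rowLen 0 ≠ N ∧ mu.card = k ∧ nu.card = l) ↔
        ((True ∧ lam ∈ (partitions N).filter fun lam => lam.rowLen 0 ≠ N) ∧ mu ∈ partitions k) ∧
          nu ∈ partitions l := by
    simp only [Finset.mem_filter, mem_partitions, true_and, and_assoc]
  simp only [hmem, finsum_ite_and_mem, if_true]

end TotalVariation

theorem brt_l2_bound_general {N : ℕ} [NeZero N] (a b : ℝ) (A : Finset (Fin N))
    (hab : a * A.card + b * Aᶜ.card = N) (x : Equiv.Perm (Fin N)) (t : ℕ) :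
    dTV (fun y => (transMat a b A ^ t) x y) (unif N) ^ 2 ≤
      (1 / 4) * ∑ᶠ lam : YoungDiagram, ∑ᶠ mu : YoungDiagram, ∑ᶠ nu : YoungDiagram,
        if lam.card = N ∧ lam.rowLen 0 ≠ N ∧ mu.card = A.card ∧ nu.card = Aᶜ.card then
          (lrCoeff lam mu nu * fSYT lam * fSYT mu * fSYT nu : ℝ) *
            |blockEig a b A lam mu nu| ^ (2 * t)
        else 0 := by
  have hrow : ∑ y, (transMat a b A ^ t) x y = 1 := by
    simpa [Matrix.mulVec, dotProduct] using congrFun (transMat_pow_mulVec_one hab t) x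
  refine (dTV_unif_sq_le hrow).trans (mul_le_mul_of_nonneg_left ?_ (by norm_num))
  rw [sum_transMat_pow_sq, finsum_ite_eq_sum_partitions]
  refine (factorial_mul_transMat_pow_one_one_sub_one_le hab (2 * t)).trans_eq ?_
  refine Finset.sum_congr rfl fun lam hlam => ?_
  rw [Finset.mem_filter, mem_partitions] at hlam
  rw [transMat_pow_mulVec_frobeniusChar_one a b A hlam.1, Finset.mul_sum]
  refine Finset.sum_congr rfl fun mu _ => ?_
  rw [Finset.mul_sum]
  refine Finset.sum_congr rfl fun nu _ => ?_
  rw [(even_two_mul t).pow_abs]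
  ring

/-- The `ℓ²` bound: for the bRT shuffle with `|A| = |B| = n`, `N = 2n`,
for every starting permutation `x` and every `t ≥ 0`,
`d_TV(P^t(x,·), U)² ≤ (1/4) Σ_{λ ⊢ 2n, λ ≠ (2n)} Σ_{μ,ν ⊢ n} c^λ_{μ,ν} f_λ f_μ f_ν
|Eig^λ_{μ,ν}|^{2t}`. -/
theorem brt_l2_bound (a b : ℝ) (hb : 0 < b) (hba : b ≤ a) (hab : a + b = 2)
    (n : ℕ) (hn : 1 ≤ n) (A : Finset (Fin (2 * n))) (hA : A.card = n)
    (x : Equiv.Perm (Fin (2 * n))) (t : ℕ) :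
    dTV (fun y => (transMat a b A ^ t) x y) (unif (2 * n)) ^ 2 ≤
      (1 / 4) * ∑ᶠ lam : YoungDiagram, ∑ᶠ mu : YoungDiagram, ∑ᶠ nu : YoungDiagram,
        if lam.card = 2 * n ∧ lam.rowLen 0 ≠ 2 * n ∧ mu.card = n ∧ nu.card = n then
          (lrCoeff lam mu nu * fSYT lam * fSYT mu * fSYT nu : ℝ) *
            |eig a b n lam mu nu| ^ (2 * t)
        else 0 := by
  have hAc : Aᶜ.card = n := by rw [Finset.card_compl, Fintype.card_fin, hA]; omega
  have : NeZero (2 * n) := ⟨by omega⟩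
  have hmean : a * A.card + b * Aᶜ.card = (2 * n : ℕ) := by
    rw [hA, hAc, ← add_mul, hab, Nat.cast_mul, Nat.cast_ofNat]
  simpa only [hA, hAc, blockEig_eq_eig a b (by omega) hA hAc] using
    brt_l2_bound_general a b A hmean x t

end BRT
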